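/- arXiv:2105.11027 — 2 statements merged into one kernel-verified Lean document; each statement's English description precedes it below -/
import Mathlib

section
/- Let D = (d_1 ≥ d_2 ≥ … ≥ d_ℓ) be a partition of n, P_D the block upper-triangular parabolic subgroup of GL_n(F_q) with diagonal blocks of sizes d_1,…,d_ℓ, and I_D the permutation representation of GL_n(F_q) on complex-valued functions on GL_n(F_q)/P_D. Let ν be an irreducible constituent of I_D that occurs in I_D with multiplicity one and does not occur in I_{D'} for any partition D' of n strictly dominating D. Set k = n − d_1. Then ν has a nonzero H_k-fixed vector but no nonzero H_{k−1}-eigenvector; in other words, ν belongs to the new k-spectrum and has tensor rank k. -/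
/-!
STATEMENT 15: If ν is an irreducible constituent of I_D (functions on
GL_n/P_D) occurring with multiplicity one and not occurring in I_{D'} for any
partition D' strictly dominating D, then ν has a nonzero H_k-fixed vector and
no nonzero H_j-eigenvector for j < k, where k = n − d_1; i.e. ν lies in the
new k-spectrum and has tensor rank k.
-/

open Matrix
open scoped MatrixGroups

set_option linter.unusedSectionVars false
set_option synthInstance.maxHeartbeats 1000000
set_option maxHeartbeats 1000000

namespace Stmt15

variable {F : Type} [Field F] [Fintype F] [DecidableEq F]
variable {V : Type} [AddCommGroup V] [Module ℂ V]

/-- The subgroup `H_k ≤ GL_n(F)` of elements fixing the first `k` standard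
basis vectors of `F^n` (equivalently, fixing pointwise every vector supported
in the first `k` coordinates). -/
def Hsub (n k : ℕ) : Subgroup (GL (Fin n) F) where
  carrier := {g | ∀ v : Fin n → F, (∀ i : Fin n, k ≤ (i : ℕ) → v i = 0) →
      (↑g : Matrix (Fin n) (Fin n) F) *ᵥ v = v}
  one_mem' := by intro v hv; simp
  mul_mem' := by
    intro g h hg hh v hv
    rw [Units.val_mul, ← Matrix.mulVec_mulVec, hh v hv, hg v hv]
  inv_mem' := by
    intro g hg v hv
    calc (↑g⁻¹ : Matrix (Fin n) (Fin n) F) *ᵥ v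
        = (↑g⁻¹ : Matrix (Fin n) (Fin n) F) *ᵥ ((↑g : Matrix (Fin n) (Fin n) F) *ᵥ v) := by
          rw [hg v hv]
      _ = ((↑g⁻¹ * ↑g : Matrix (Fin n) (Fin n) F)) *ᵥ v := Matrix.mulVec_mulVec ..
      _ = v := by rw [← Units.val_mul, inv_mul_cancel, Units.val_one, Matrix.one_mulVec]

/-- `ρ` has a nonzero vector fixed by the subgroup `H`. -/
def HasFixedVec {G : Type} [Group G] {V : Type} [AddCommGroup V] [Module ℂ V]
    (ρ : Representation ℂ G V) (H : Subgroup G) : Prop :=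
  ∃ v : V, v ≠ 0 ∧ ∀ h ∈ H, ρ h v = v

/-- `ρ` has a nonzero eigenvector for the subgroup `H`: a nonzero `v` with
`ρ(h) v = c(h) • v` for all `h ∈ H`, for some character `c` of `H`. -/
def HasEigenVec {G : Type} [Group G] {V : Type} [AddCommGroup V] [Module ℂ V]
    (ρ : Representation ℂ G V) (H : Subgroup G) : Prop :=
  ∃ c : H →* ℂ, ∃ v : V, v ≠ 0 ∧ ∀ h : H, ρ (h : G) v = c h • v

/-- The subspace `E_m ⊆ F^n` of vectors supported in the first `m`
coordinates. -/
def Esub (n m : ℕ) : Submodule F (Fin n → F) where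
  carrier := {v | ∀ i : Fin n, m ≤ (i : ℕ) → v i = 0}
  add_mem' := by
    intro a b ha hb i hi
    simp [ha i hi, hb i hi]
  zero_mem' := by intro i hi; rfl
  smul_mem' := by
    intro c v hv i hi
    simp [hv i hi]

/-- The stabilizer in `GL_n(F)` of a subspace `E ⊆ F^n`. -/
def stabE {n : ℕ} (E : Submodule F (Fin n → F)) : Subgroup (GL (Fin n) F) where
  carrier := {g | ∀ v ∈ E, (↑g : Matrix (Fin n) (Fin n) F) *ᵥ v ∈ E}
  one_mem' := by intro v hv; simpa using hv
  mul_mem' := by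
    intro g h hg hh v hv
    rw [Units.val_mul, ← Matrix.mulVec_mulVec]
    exact hg _ (hh v hv)
  inv_mem' := by
    intro g hg v hv
    let e : (Fin n → F) ≃ₗ[F] (Fin n → F) :=
      LinearEquiv.ofLinear
        (Matrix.mulVecLin (↑g : Matrix (Fin n) (Fin n) F))
        (Matrix.mulVecLin (↑g⁻¹ : Matrix (Fin n) (Fin n) F))
        (by rw [← Matrix.mulVecLin_mul, ← Units.val_mul, mul_inv_cancel, Units.val_one,
              Matrix.mulVecLin_one])
        (by rw [← Matrix.mulVecLin_mul, ← Units.val_mul, inv_mul_cancel, Units.val_one,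
              Matrix.mulVecLin_one])
    have ecoe : (e : (Fin n → F) →ₗ[F] (Fin n → F))
        = Matrix.mulVecLin (↑g : Matrix (Fin n) (Fin n) F) := rfl
    have hmap : Submodule.map
        (Matrix.mulVecLin (↑g : Matrix (Fin n) (Fin n) F)) E = E := by
      apply Submodule.eq_of_le_of_finrank_le
      · rintro x ⟨u, hu, rfl⟩
        simpa using hg u hu
      · rw [← ecoe, LinearEquiv.finrank_map_eq]
    have hv' : v ∈ Submodule.map
        (Matrix.mulVecLin (↑g : Matrix (Fin n) (Fin n) F)) E := by
      rw [hmap]; exact hv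
    rcases hv' with ⟨u, hu, heq⟩
    rw [Matrix.mulVecLin_apply] at heq
    have hgu : (↑g⁻¹ : Matrix (Fin n) (Fin n) F) *ᵥ v = u := by
      rw [← heq, Matrix.mulVec_mulVec, ← Units.val_mul, inv_mul_cancel, Units.val_one,
        Matrix.one_mulVec]
    rw [hgu]; exact hu

/-- Partial sums of the parts of a partition: `psum l d j = d_0 + ⋯ + d_{j-1}`. -/
def psum (l : ℕ) (d : Fin l → ℕ) (j : ℕ) : ℕ :=
  ∑ i ∈ Finset.univ.filter (fun i : Fin l => (i : ℕ) < j), d i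

/-- The block upper-triangular parabolic subgroup `P_D` of `GL_n(F)` attached
to the partition `D = (d_0 ≥ d_1 ≥ ⋯)`: the simultaneous stabilizer of the
subspaces spanned by the first `d_0 + ⋯ + d_{j-1}` coordinates. -/
def parab (n l : ℕ) (d : Fin l → ℕ) : Subgroup (GL (Fin n) F) :=
  ⨅ j : ℕ, stabE (Esub n (psum l d j))

/-- The space of right-`P`-invariant functions on `GL_n(F)`: the space of the
permutation representation `I_P = Ind_P^{GL_n} 1` on functions on
`GL_n(F)/P`. -/
noncomputable def cosetSpace {n : ℕ} (P : Subgroup (GL (Fin n) F)) :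
    Submodule ℂ (GL (Fin n) F → ℂ) where
  carrier := {f | ∀ g : GL (Fin n) F, ∀ p ∈ P, f (g * p) = f g}
  add_mem' := by
    intro a b ha hb g p hp
    simp [ha g p hp, hb g p hp]
  zero_mem' := by intro g p hp; rfl
  smul_mem' := by
    intro c f hf g p hp
    simp [hf g p hp]

/-- The representation `I_P = Ind_P^{GL_n} 1` of `GL_n(F)` on functions on
`GL_n(F)/P`, by left translation. -/
noncomputable def indTriv {n : ℕ} (P : Subgroup (GL (Fin n) F)) :
    Representation ℂ (GL (Fin n) F) ↥(cosetSpace P) where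
  toFun g₀ :=
    { toFun := fun f => ⟨fun g => (f : GL (Fin n) F → ℂ) (g₀⁻¹ * g), by
        intro g p hp
        show (f : GL (Fin n) F → ℂ) (g₀⁻¹ * (g * p)) = _
        rw [← mul_assoc]
        exact f.2 _ p hp⟩
      map_add' := fun f g => Subtype.ext (funext fun x => rfl)
      map_smul' := fun c f => Subtype.ext (funext fun x => rfl) }
  map_one' := by
    refine LinearMap.ext fun f => Subtype.ext (funext fun g => ?_)
    show (f : GL (Fin n) F → ℂ) (1⁻¹ * g) = (f : GL (Fin n) F → ℂ) g
    rw [inv_one, one_mul]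
  map_mul' := by
    intro a b
    refine LinearMap.ext fun f => Subtype.ext (funext fun g => ?_)
    show (f : GL (Fin n) F → ℂ) ((a * b)⁻¹ * g)
        = (f : GL (Fin n) F → ℂ) (b⁻¹ * (a⁻¹ * g))
    rw [_root_.mul_inv_rev, mul_assoc]

/-- The space `Hom_G(ν, σ)` of intertwining operators from `ν` to `σ`;
its dimension is the multiplicity of the irreducible `ν` in `σ`. -/
noncomputable def interSub {H : Type} [Group H] {Vν M : Type} [AddCommGroup Vν] [Module ℂ Vν]
    [AddCommGroup M] [Module ℂ M]
    (ν : Representation ℂ H Vν) (σ : Representation ℂ H M) :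
    Submodule ℂ (Vν →ₗ[ℂ] M) where
  carrier := {φ | ∀ h v, φ (ν h v) = σ h (φ v)}
  add_mem' := by
    intro φ ψ hφ hψ h v
    simp [LinearMap.add_apply, hφ h v, hψ h v]
  zero_mem' := by intro h v; simp
  smul_mem' := by
    intro c φ hφ h v
    simp [LinearMap.smul_apply, hφ h v]

/-- Irreducibility of a representation. -/
def IsIrred {G : Type} [Group G] {V : Type} [AddCommGroup V] [Module ℂ V]
    (ρ : Representation ℂ G V) : Prop :=
  (∃ v : V, v ≠ 0) ∧
    ∀ p : Submodule ℂ V, (∀ g : G, ∀ v ∈ p, ρ g v ∈ p) → p = ⊥ ∨ p = ⊤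


section Comb

/-- iterated sums over compositions -/
def Fit {l : ℕ} (f0 : (Fin l → ℤ) → ℤ) (a : ℕ → ℕ) : ℕ → (Fin l → ℤ) → ℤ
  | 0 => f0
  | s+1 => fun γ => ∑ β ∈ Finset.piAntidiag Finset.univ (a s),
      Fit f0 a s (γ - fun i => ((β : Fin l → ℕ) i : ℤ))

/-- the staircase -/
def dl {l : ℕ} : Fin l → ℤ := fun i => (l : ℤ) - 1 - i

/-- alternating start -/
def alt0 {l : ℕ} : (Fin l → ℤ) → ℤ := fun γ =>
  ∑ w : Equiv.Perm (Fin l), (Equiv.Perm.sign w : ℤ) * if γ = dl ∘ w then 1 else 0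

/-- indicator of zero -/
def ind0 {l : ℕ} : (Fin l → ℤ) → ℤ := fun γ => if γ = 0 then 1 else 0

theorem Fit_perm {l : ℕ} (f0 : (Fin l → ℤ) → ℤ) (a : ℕ → ℕ) (σ : Equiv.Perm (Fin l)) (c : ℤ)
    (h0 : ∀ γ, f0 (γ ∘ σ) = c * f0 γ) (s : ℕ) (γ : Fin l → ℤ) :
    Fit f0 a s (γ ∘ σ) = c * Fit f0 a s γ := by
  induction s generalizing γ with
  | zero => exact h0 γ
  | succ s ih =>
    simp only [Fit]
    rw [Finset.mul_sum]
    refine Finset.sum_nbij' (fun β => β ∘ σ.symm) (fun β => β ∘ σ) ?_ ?_ ?_ ?_ ?_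
    · intro β hβ
      simp only [Finset.mem_piAntidiag, Finset.mem_univ, implies_true, and_true] at hβ ⊢
      rw [← hβ]
      exact Equiv.sum_comp σ.symm β
    · intro β hβ
      simp only [Finset.mem_piAntidiag, Finset.mem_univ, implies_true, and_true] at hβ ⊢
      rw [← hβ]
      exact Equiv.sum_comp σ β
    · intro β _; ext x; simp
    · intro β _; ext x; simp
    · intro β _
      rw [← ih]
      congr 1
      ext x
      simp

theorem alt0_perm {l : ℕ} (σ : Equiv.Perm (Fin l)) (γ : Fin l → ℤ) :
    alt0 (γ ∘ σ) = (Equiv.Perm.sign σ : ℤ) * alt0 γ := by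
  unfold alt0
  rw [Finset.mul_sum]
  refine Finset.sum_nbij' (fun w => w * σ⁻¹) (fun w => w * σ) ?_ ?_ ?_ ?_ ?_
  · simp
  · simp
  · simp
  · simp
  · intro w _
    have h : (γ ∘ σ = dl ∘ w) ↔ (γ = dl ∘ ⇑(w * σ⁻¹)) := by
      constructor
      · intro h; ext x
        have := congrFun h (σ⁻¹ x)
        simpa using this
      · intro h; ext x
        have := congrFun h (σ x)
        simpa using this
    have h1 : (Equiv.Perm.sign σ : ℤ) * (Equiv.Perm.sign σ : ℤ) = 1 := by
      rw [← Units.val_mul, Int.units_mul_self]; rfl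
    simp only [h, Equiv.Perm.sign_mul, Equiv.Perm.sign_inv, Units.val_mul]
    split_ifs
    · linear_combination (-(Equiv.Perm.sign w : ℤ)) * h1
    · ring

/-- violation at `i` -/
def badAt {l : ℕ} (γ : Fin l → ℤ) (β : Fin l → ℕ) (i : ℕ) : Prop :=
  ∃ h : i + 1 < l, γ ⟨i, by omega⟩ - β ⟨i, by omega⟩ ≤ γ ⟨i + 1, h⟩

open Classical in
theorem pieri {l : ℕ} (f : (Fin l → ℤ) → ℤ)
    (hf : ∀ (σ : Equiv.Perm (Fin l)) γ, f (γ ∘ σ) = (Equiv.Perm.sign σ : ℤ) * f γ)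
    (γ : Fin l → ℤ) (hγ : StrictAnti γ) (t : ℕ) :
    ∑ β ∈ Finset.piAntidiag Finset.univ t, f (γ - fun i => ((β : Fin l → ℕ) i : ℤ))
    = ∑ β ∈ (Finset.piAntidiag Finset.univ t).filter (fun β => ¬ ∃ i, badAt γ β i),
        f (γ - fun i => ((β : Fin l → ℕ) i : ℤ)) := by
  rw [← Finset.sum_filter_not_add_sum_filter _ (fun β => ∃ i, badAt γ β i)]
  rw [add_eq_left]
  -- the map
  let T : ℕ → (Fin l → ℕ) → (Fin l → ℕ) := fun i β x =>
    if h : i + 1 < l then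
      (γ x - (γ - fun i => (β i : ℤ)) (Equiv.swap (⟨i, by omega⟩ : Fin l) ⟨i + 1, h⟩ x)).toNat
    else β x
  have hT : ∀ i β (h : badAt γ β i) x, ((T i β x : ℕ) : ℤ) =
      γ x - (γ - fun i => (β i : ℤ))
        (Equiv.swap (⟨i, by have := h.1; omega⟩ : Fin l) ⟨i + 1, h.1⟩ x) := by
    intro i β h x
    obtain ⟨h1, h2⟩ := h
    simp only [T, h1, dif_pos]
    rw [Int.toNat_of_nonneg]
    have hlt : γ ⟨i + 1, h1⟩ < γ ⟨i, by omega⟩ := hγ (by simp [Fin.lt_def])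
    simp only [Pi.sub_apply]
    rw [Equiv.swap_apply_def]
    split_ifs with ha hb
    · subst ha; omega
    · subst hb; omega
    · omega
  have hTbad : ∀ i β, badAt γ β i → badAt γ (T i β) i := by
    intro i β h
    refine ⟨h.1, ?_⟩
    rw [hT i β h]
    simp
  have hTlow : ∀ i β, badAt γ β i → ∀ k < i, (badAt γ (T i β) k ↔ badAt γ β k) := by
    intro i β h k hk
    have h1 := h.1
    have key : (T i β ⟨k, by omega⟩ : ℤ) = β ⟨k, by omega⟩ := by
      rw [hT i β h, Equiv.swap_apply_of_ne_of_ne]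
      · simp
      · simp [Fin.ext_iff]; omega
      · simp [Fin.ext_iff]; omega
    unfold badAt
    simp only [key]
  have hTT : ∀ i β, badAt γ β i → T i (T i β) = β := by
    intro i β h
    ext x
    have := hT i (T i β) (hTbad i β h) x
    simp only [Pi.sub_apply] at this
    rw [hT i β h] at this
    simp at this
    exact this
  have hfind : ∀ β (h : ∃ i, badAt γ β i) (h' : ∃ i, badAt γ (T (Nat.find h) β) i),
      Nat.find h' = Nat.find h := by
    intro β h h'
    rw [Nat.find_eq_iff]
    refine ⟨hTbad _ _ (Nat.find_spec h), fun k hk => ?_⟩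
    rw [hTlow _ _ (Nat.find_spec h) k hk]
    exact Nat.find_min h hk
  have hneg : ∀ β (h : ∃ i, badAt γ β i), f (γ - fun i => (β i : ℤ))
      + f (γ - fun i => (T (Nat.find h) β i : ℤ)) = 0 := by
    intro β h
    have hs := Nat.find_spec h
    have h1 := hs.1
    have : (γ - fun i => (T (Nat.find h) β i : ℤ)) =
        (γ - fun i => (β i : ℤ)) ∘
        (Equiv.swap (⟨Nat.find h, by omega⟩ : Fin l) ⟨Nat.find h + 1, h1⟩) := by
      ext x
      simp only [Pi.sub_apply, hT _ β hs, Function.comp]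
      ring
    rw [this, hf, Equiv.Perm.sign_swap]
    · simp
    · simp [Fin.ext_iff]
  refine Finset.sum_involution (fun β hβ => T (Nat.find (Finset.mem_filter.1 hβ).2) β) ?_ ?_ ?_ ?_
  · intro β hβ
    exact hneg β _
  · intro β hβ hne heq
    have := hneg β (Finset.mem_filter.1 hβ).2
    rw [heq] at this
    omega
  · intro β hβ
    have hb := (Finset.mem_filter.1 hβ).2
    have hs := Nat.find_spec hb
    rw [Finset.mem_filter]
    refine ⟨?_, _, hTbad _ _ hs⟩
    have h2 := (Finset.mem_filter.1 hβ).1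
    simp only [Finset.mem_piAntidiag, Finset.mem_univ, implies_true, and_true] at h2 ⊢
    zify
    simp only [hT _ β hs, Finset.sum_sub_distrib]
    rw [Equiv.sum_comp _ (γ - fun i => (β i : ℤ))]
    simp only [Pi.sub_apply, Finset.sum_sub_distrib]
    rw [← h2]
    push_cast
    ring
  · intro β hβ
    have hb := (Finset.mem_filter.1 hβ).2
    have hs := Nat.find_spec hb
    rw [hfind β hb]
    exact hTT _ _ hs

theorem dl_injective {l : ℕ} : Function.Injective (dl : Fin l → ℤ) := by
  intro i j h
  simp only [dl] at h
  ext; omega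

theorem dl_strictAnti {l : ℕ} : StrictAnti (dl : Fin l → ℤ) := by
  intro i j h
  simp only [dl, Fin.lt_def] at h ⊢
  omega

theorem alt0_support {l : ℕ} (γ : Fin l → ℤ) (hγ : StrictAnti γ) (h : alt0 γ ≠ 0) : γ = dl := by
  unfold alt0 at h
  obtain ⟨w, -, hw⟩ := Finset.exists_ne_zero_of_sum_ne_zero h
  have hw' : γ = dl ∘ w := by
    by_contra hne
    simp [hne] at hw
  have hm : StrictMono w := by
    intro i j hij
    have := hγ hij
    rw [hw'] at this
    exact dl_strictAnti.lt_iff_gt.1 this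
  have : (w : Fin l → Fin l) = id := hm.eq_id
  rw [hw', this]; rfl

theorem alt0_dl {l : ℕ} : alt0 (dl : Fin l → ℤ) = 1 := by
  unfold alt0
  rw [Finset.sum_eq_single 1]
  · simp
  · intro w _ hw
    rw [if_neg, mul_zero]
    intro h
    apply hw
    ext x
    have := congrFun h x
    have := dl_injective this
    simp [← this]
  · simp

theorem sum_lt_succ {l : ℕ} (g : Fin l → ℤ) (k : ℕ) (hk : k < l) :
    ∑ i ∈ Finset.univ.filter (fun i : Fin l => (i : ℕ) < k + 1), g i = ∑ i ∈ Finset.univ.filter (fun i : Fin l => (i : ℕ) < k), g i + g ⟨k, hk⟩ := by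
  have : (Finset.univ.filter (fun i : Fin l => (i : ℕ) < k + 1)) =
      insert ⟨k, hk⟩ (Finset.univ.filter (fun i : Fin l => (i : ℕ) < k)) := by
    ext i; simp [Fin.ext_iff]; omega
  rw [this, Finset.sum_insert (by simp)]
  ring

theorem Fit_support {l : ℕ} (a : ℕ → ℕ) (s : ℕ) (γ : Fin l → ℤ) (hγ : StrictAnti γ)
    (h : Fit alt0 a s γ ≠ 0) :
    (∀ i, dl i ≤ γ i) ∧ (∀ i : Fin l, s ≤ i → γ i = dl i) ∧
    (∑ i, (γ i - dl i) = ∑ i ∈ Finset.range s, (a i : ℤ)) ∧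
    (∀ k ≤ s, ∑ i ∈ Finset.range k, (a i : ℤ) ≤ ∑ i ∈ Finset.univ.filter (fun i : Fin l => (i : ℕ) < k), (γ i - dl i)) := by
  classical
  induction s generalizing γ with
  | zero =>
    have := alt0_support γ hγ h
    subst this
    simp
  | succ s ih =>
    simp only [Fit] at h
    rw [pieri (Fit alt0 a s) (fun σ γ => Fit_perm _ a σ _ (alt0_perm σ) s γ) γ hγ] at h
    obtain ⟨β, hβ, hne⟩ := Finset.exists_ne_zero_of_sum_ne_zero h
    rw [Finset.mem_filter] at hβ
    obtain ⟨hβ1, hβ2⟩ := hβ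
    simp only [Finset.mem_piAntidiag, Finset.mem_univ, implies_true, and_true] at hβ1
    have hgood : ∀ i (h : i + 1 < l), γ ⟨i + 1, h⟩ < γ ⟨i, by omega⟩ - β ⟨i, by omega⟩ := by
      intro i h
      by_contra hc
      exact hβ2 ⟨i, h, not_lt.1 hc⟩
    have hκ : StrictAnti (γ - fun i => (β i : ℤ)) := by
      intro x y hxy
      obtain ⟨x, hx⟩ := x
      obtain ⟨y, hy⟩ := y
      simp only [Fin.lt_def] at hxy
      have h1 := hgood x (by omega)
      have h2 : γ ⟨y, hy⟩ ≤ γ ⟨x + 1, by omega⟩ := hγ.antitone (by simp [Fin.le_def]; omega)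
      simp only [Pi.sub_apply]
      omega
    obtain ⟨i1, i2, i3, i4⟩ := ih _ hκ hne
    simp only [Pi.sub_apply] at i1 i2 i3 i4
    have c1 : ∀ i, dl i ≤ γ i := fun i => by have := i1 i; omega
    have c2 : ∀ i : Fin l, s + 1 ≤ i → γ i = dl i := by
      rintro ⟨i, hi⟩ hsi
      simp only at hsi
      obtain ⟨i, rfl⟩ : ∃ i', i = i' + 1 := ⟨i - 1, by omega⟩
      have h1 := hgood i hi
      have h2 := i2 ⟨i, by omega⟩ (by simp; omega)
      have h3 := c1 ⟨i + 1, hi⟩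
      simp only [dl] at *
      push_cast at *
      omega
    have c3 : ∑ i, (γ i - dl i) = ∑ i ∈ Finset.range (s + 1), (a i : ℤ) := by
      rw [Finset.sum_range_succ, ← i3, ← hβ1]
      push_cast
      rw [← Finset.sum_add_distrib]
      apply Finset.sum_congr rfl
      intros; ring
    refine ⟨c1, c2, c3, ?_⟩
    intro k hk
    rcases Nat.lt_or_ge s k with hk' | hk'
    · have : k = s + 1 := by omega
      subst this
      rw [← c3]
      apply le_of_eq
      symm
      apply Finset.sum_subset (Finset.filter_subset _ _)
      intro i _ hi
      simp at hi
      rw [c2 i (by omega)]; ring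
    · refine (i4 k hk').trans ?_
      apply Finset.sum_le_sum
      intro i _
      omega

theorem Fit_self {l : ℕ} (d : Fin l → ℕ) (hd : Antitone d) (a : ℕ → ℕ)
    (ha : ∀ i : Fin l, a i = d i) (s : ℕ) (hs : s ≤ l) :
    Fit alt0 a s (fun i : Fin l => (if (i : ℕ) < s then (d i : ℤ) else 0) + dl i) = 1 := by
  classical
  induction s with
  | zero => simpa [Fit] using alt0_dl
  | succ s ih =>
    set γ : Fin l → ℤ := fun i => (if (i : ℕ) < s + 1 then (d i : ℤ) else 0) + dl i with hγdef
    have hanti : StrictAnti γ := by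
      intro x y hxy
      have h1 := dl_strictAnti hxy
      have h2 := hd hxy.le
      simp only [Fin.lt_def] at hxy
      simp only [hγdef]
      split_ifs <;> omega
    simp only [Fit]
    rw [pieri (Fit alt0 a s) (fun σ γ => Fit_perm _ a σ _ (alt0_perm σ) s γ) γ hanti]
    have hs' : s < l := hs
    have h0 : (γ - fun i => ((Pi.single (⟨s, hs'⟩ : Fin l) (d ⟨s, hs'⟩) : Fin l → ℕ) i : ℤ)) =
        fun i : Fin l => (if (i : ℕ) < s then (d i : ℤ) else 0) + dl i := by
      ext i
      simp only [hγdef, Pi.sub_apply]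
      by_cases hi : i = ⟨s, hs'⟩
      · subst hi; simp
      · rw [Pi.single_eq_of_ne hi]
        have : (i : ℕ) ≠ s := fun h => hi (Fin.ext h)
        by_cases h2 : (i : ℕ) < s
        · simp [h2, Nat.lt_succ_of_lt h2]
        · have : ¬ (i : ℕ) < s + 1 := by omega
          simp [h2, this]
    rw [Finset.sum_eq_single (Pi.single ⟨s, hs'⟩ (d ⟨s, hs'⟩))]
    · rw [h0]; exact ih (by omega)
    · intro β hβ hne
      rw [Finset.mem_filter] at hβ
      obtain ⟨hβ1, hβ2⟩ := hβ
      simp only [Finset.mem_piAntidiag, Finset.mem_univ, implies_true, and_true] at hβ1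
      by_contra hc
      have hgood : ∀ i (h : i + 1 < l), γ ⟨i + 1, h⟩ < γ ⟨i, by omega⟩ - β ⟨i, by omega⟩ := by
        intro i h
        by_contra hc
        exact hβ2 ⟨i, h, not_lt.1 hc⟩
      have hκ : StrictAnti (γ - fun i => (β i : ℤ)) := by
        intro x y hxy
        obtain ⟨x, hx⟩ := x
        obtain ⟨y, hy⟩ := y
        simp only [Fin.lt_def] at hxy
        have h1 := hgood x (by omega)
        have h2 : γ ⟨y, hy⟩ ≤ γ ⟨x + 1, by omega⟩ :=
          hanti.antitone (by simp [Fin.le_def]; omega)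
        simp only [Pi.sub_apply]
        omega
      obtain ⟨i1, i2, i3, i4⟩ := Fit_support a s _ hκ hc
      have i5 := i4 s le_rfl
      have e1 : ∑ i ∈ Finset.range s, (a i : ℤ) = ∑ i ∈ Finset.univ.filter (fun i : Fin l => (i : ℕ) < s), (d i : ℤ) := by
        symm
        refine Finset.sum_bij (fun i _ => (i : ℕ)) ?_ ?_ ?_ ?_
        · intro i hi; simpa using hi
        · intro i _ j _ h; exact Fin.ext h
        · intro i hi
          have hi' : i < s := by simpa using hi
          exact ⟨⟨i, by omega⟩, by simpa using hi', rfl⟩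
        · intro i _; rw [ha]
      have e2 : ∑ i ∈ Finset.univ.filter (fun i : Fin l => (i : ℕ) < s), ((γ - fun i => (β i : ℤ)) i - dl i)
          = ∑ i ∈ Finset.univ.filter (fun i : Fin l => (i : ℕ) < s), (d i : ℤ) - ∑ i ∈ Finset.univ.filter (fun i : Fin l => (i : ℕ) < s), (β i : ℤ) := by
        rw [← Finset.sum_sub_distrib]
        apply Finset.sum_congr rfl
        intro i hi
        simp at hi
        simp only [hγdef, Pi.sub_apply, if_pos (Nat.lt_succ_of_lt hi)]
        ring
      rw [e1, e2] at i5
      have e3 : ∑ i ∈ Finset.univ.filter (fun i : Fin l => (i : ℕ) < s), (β i : ℤ) = 0 :=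
        le_antisymm (by linarith) (Finset.sum_nonneg (fun i _ => by positivity))
      rw [Finset.sum_eq_zero_iff_of_nonneg (fun i _ => by positivity)] at e3
      apply hne
      have hz : ∀ i, i ≠ ⟨s, hs'⟩ → β i = 0 := by
        intro i hi
        have hne' : (i : ℕ) ≠ s := fun h => hi (Fin.ext h)
        rcases lt_or_gt_of_ne hne' with h | h
        · exact_mod_cast e3 i (by simpa using h)
        · have := i2 i (by omega)
          have h3 : ¬ (i : ℕ) < s + 1 := by omega
          simp only [hγdef, Pi.sub_apply, if_neg h3] at this
          omega
      have : β ⟨s, hs'⟩ = d ⟨s, hs'⟩ := by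
        rw [← ha, ← hβ1, Finset.sum_eq_single ⟨s, hs'⟩]
        · intro i _ hi; exact hz i hi
        · simp
      ext i
      by_cases hi : i = ⟨s, hs'⟩
      · subst hi; simpa using this
      · rw [hz i hi, Pi.single_eq_of_ne hi]
    · intro hnot
      exfalso
      apply hnot
      rw [Finset.mem_filter]
      constructor
      · simp only [Finset.mem_piAntidiag, Finset.mem_univ, implies_true, and_true]
        rw [Finset.sum_pi_single']
        simp [← ha]
      · rintro ⟨i, hi, hle⟩
        have h1 := congrFun h0 ⟨i, by omega⟩
        simp only [Pi.sub_apply] at h1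
        rw [h1] at hle
        have h2 := dl_strictAnti (show (⟨i, by omega⟩ : Fin l) < ⟨i + 1, hi⟩ by simp [Fin.lt_def])
        have h3 := hd (show (⟨i, by omega⟩ : Fin l) ≤ ⟨i + 1, hi⟩ by simp [Fin.le_def])
        simp only [hγdef] at hle
        split_ifs at hle <;> omega

/-- linearity: alternating start versus indicator start -/
theorem Fit_alt {l : ℕ} (a : ℕ → ℕ) (s : ℕ) (γ : Fin l → ℤ) :
    Fit alt0 a s γ = ∑ w : Equiv.Perm (Fin l),
      (Equiv.Perm.sign w : ℤ) * Fit ind0 a s (γ - dl ∘ w) := by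
  induction s generalizing γ with
  | zero => simp [Fit, alt0, ind0, sub_eq_zero]
  | succ s ih =>
    simp only [Fit, ih, Finset.mul_sum]
    rw [Finset.sum_comm]
    apply Finset.sum_congr rfl; intro w _
    apply Finset.sum_congr rfl; intro β _
    rw [sub_right_comm]

theorem Fit_ind_neg {l : ℕ} (a : ℕ → ℕ) (s : ℕ) (γ : Fin l → ℤ) (i : Fin l) (hi : γ i < 0) :
    Fit ind0 a s γ = 0 := by
  induction s generalizing γ with
  | zero =>
    simp only [Fit, ind0]
    rw [if_neg]
    rintro rfl
    simp at hi
  | succ s ih =>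
    simp only [Fit]
    apply Finset.sum_eq_zero
    intro β _
    apply ih
    simp only [Pi.sub_apply]
    omega

/-- the number of matrices with given margins -/
noncomputable def Ncard {l s : ℕ} (α : Fin l → ℕ) (μ : Fin s → ℕ) : ℕ :=
  Nat.card {A : Fin s → Fin l → ℕ // (∀ j, ∑ i, A j i = μ j) ∧ ∀ i, ∑ j, A j i = α i}

theorem Fit_sum {l : ℕ} (a : ℕ → ℕ) (s : ℕ) (f0 : (Fin l → ℤ) → ℤ) (γ : Fin l → ℤ) :
    Fit f0 a s γ = ∑ A ∈ Fintype.piFinset (fun j : Fin s => Finset.piAntidiag Finset.univ (a j)),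
      f0 (γ - fun i => ∑ j, ((A j : Fin l → ℕ) i : ℤ)) := by
  induction s generalizing γ with
  | zero =>
    simp [Fit]
    congr 1
    ext i; simp
  | succ s ih =>
    simp only [Fit, ih]
    rw [← Finset.sum_product']
    refine Finset.sum_nbij' (fun p => Fin.snoc (α := fun _ => Fin l → ℕ) p.2 p.1)
      (fun A => (A (Fin.last s), fun j => A j.castSucc)) ?_ ?_ ?_ ?_ ?_
    · rintro ⟨β, A⟩ h
      rw [Finset.mem_product, Fintype.mem_piFinset] at h
      rw [Fintype.mem_piFinset]
      intro j
      refine Fin.lastCases ?_ (fun j => ?_) j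
      · simpa using h.1
      · simpa using h.2 j
    · intro A h
      rw [Fintype.mem_piFinset] at h
      rw [Finset.mem_product, Fintype.mem_piFinset]
      exact ⟨by simpa using h (Fin.last s), fun j => by simpa using h j.castSucc⟩
    · rintro ⟨β, A⟩ _
      simp
    · intro A _
      ext j
      refine Fin.lastCases ?_ (fun j => ?_) j <;> simp
    · rintro ⟨β, A⟩ _
      congr 1
      ext i
      simp [Fin.sum_univ_castSucc]
      ring

theorem Fit_card {l s : ℕ} (a : ℕ → ℕ) (α : Fin l → ℕ) (μ : Fin s → ℕ) (hμ : ∀ j : Fin s, a j = μ j) :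
    Fit ind0 a s (fun i => (α i : ℤ)) = Ncard α μ := by
  classical
  rw [Fit_sum]
  simp only [ind0]
  rw [Finset.sum_boole]
  unfold Ncard
  rw [Nat.cast_inj, ← Nat.card_eq_finsetCard]
  apply Nat.card_congr
  apply Equiv.subtypeEquivRight
  intro A
  simp only [Finset.mem_filter, Fintype.mem_piFinset, Finset.mem_piAntidiag, Finset.mem_univ,
    implies_true, and_true, hμ]
  apply and_congr_right
  intro _
  rw [sub_eq_zero, funext_iff]
  apply forall_congr'
  intro i
  norm_cast
  exact eq_comm

theorem Ncard_perm {l s : ℕ} (α : Fin l → ℕ) (μ : Fin s → ℕ) (σ : Equiv.Perm (Fin l)) :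
    Ncard (α ∘ σ) μ = Ncard α μ := by
  have h0 : ∀ γ : Fin l → ℤ, ind0 (γ ∘ σ) = 1 * ind0 γ := by
    intro γ
    have : γ ∘ σ = 0 ↔ γ = 0 := by
      constructor
      · intro h; ext x
        simpa using congrFun h (σ.symm x)
      · rintro rfl; rfl
    simp [ind0, this]
  let a : ℕ → ℕ := fun j => if h : j < s then μ ⟨j, h⟩ else 0
  have ha : ∀ j : Fin s, a j = μ j := fun j => by simp [a]
  have h1 := Fit_card a (α ∘ σ) μ ha
  have h2 := Fit_card a α μ ha
  have h3 := Fit_perm ind0 a σ 1 h0 s (fun i => (α i : ℤ))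
  rw [one_mul, h2] at h3
  have h4 : (fun i => (α i : ℤ)) ∘ σ = fun i => (((α ∘ σ) i : ℕ) : ℤ) := rfl
  rw [h4, h1] at h3
  exact_mod_cast h3

/-- the composition attached to `w` in the determinant expansion (truncated when negative) -/
def aw {l : ℕ} (d : Fin l → ℕ) (w : Equiv.Perm (Fin l)) : Fin l → ℕ :=
  fun i => ((d i : ℤ) + dl i - dl (w i)).toNat

/-- `w` gives an honest composition -/
def okw {l : ℕ} (d : Fin l → ℕ) (w : Equiv.Perm (Fin l)) : Prop :=
  ∀ i, 0 ≤ (d i : ℤ) + dl i - dl (w i)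

open Classical in
theorem alt_sum {l s : ℕ} (d : Fin l → ℕ) (a : ℕ → ℕ) (μ : Fin s → ℕ)
    (hμ : ∀ j : Fin s, a j = μ j) :
    ∑ w ∈ Finset.univ.filter (okw d), (Equiv.Perm.sign w : ℤ) * Ncard (aw d w) μ
      = Fit alt0 a s (fun i => (d i : ℤ) + dl i) := by
  rw [Fit_alt, Finset.sum_filter]
  apply Finset.sum_congr rfl
  intro w _
  split_ifs with h
  · rw [← Fit_card a (aw d w) μ hμ]
    congr 2
    ext i
    simp [aw, Int.toNat_of_nonneg (h i)]
  · unfold okw at h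
    push Not at h
    obtain ⟨i, hi⟩ := h
    rw [Fit_ind_neg a s _ i (by simpa using hi), mul_zero]

theorem add_dl_strictAnti {l : ℕ} (d : Fin l → ℕ) (hd : Antitone d) :
    StrictAnti (fun i => (d i : ℤ) + dl i) := by
  intro x y hxy
  have h1 := dl_strictAnti hxy
  have h2 := hd hxy.le
  simp only
  omega

/-- first moved point -/
theorem perm_first {l : ℕ} (w : Equiv.Perm (Fin l)) (hw : w ≠ 1) :
    ∃ i : Fin l, (∀ i' < i, w i' = i') ∧ i < w i := by
  have : ∃ i, w i ≠ i := by
    by_contra h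
    push Not at h
    exact hw (Equiv.ext h)
  obtain ⟨i, hi, hmin⟩ := WellFounded.has_min (wellFounded_lt (α := Fin l)) {i | w i ≠ i} this
  have h1 : ∀ i' < i, w i' = i' := by
    intro i' hi'
    by_contra hc
    exact hmin i' hc hi'
  refine ⟨i, h1, ?_⟩
  rcases lt_trichotomy (w i) i with h | h | h
  · exact absurd (w.injective (h1 _ h)) hi
  · exact absurd h hi
  · exact h

theorem aw_one {l : ℕ} (d : Fin l → ℕ) : aw d 1 = d := by
  ext i; simp [aw]

open Classical in
/-- vanishing for `w ≠ 1` and value one for `w = 1` -/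
theorem norm_sum {l : ℕ} (d : Fin l → ℕ) (hd : Antitone d) (w : Equiv.Perm (Fin l))
    (hw : okw d w) :
    ∑ w' ∈ Finset.univ.filter (okw d), (Equiv.Perm.sign w' : ℤ) * Ncard (aw d w') (aw d w)
      = if w = 1 then 1 else 0 := by
  let a : ℕ → ℕ := fun j => if h : j < l then aw d w ⟨j, h⟩ else 0
  have ha : ∀ j : Fin l, a j = aw d w j := fun j => by simp [a]
  rw [alt_sum d a (aw d w) ha]
  split_ifs with h
  · subst h
    have := Fit_self d hd a (by intro i; rw [ha, aw_one]) l le_rfl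
    simpa using this
  · by_contra hc
    obtain ⟨-, -, -, h4⟩ := Fit_support a l _ (add_dl_strictAnti d hd) hc
    obtain ⟨i, hi1, hi2⟩ := perm_first w h
    have h5 := h4 (i + 1) i.2
    have e1 : ∑ j ∈ Finset.range (i + 1), (a j : ℤ)
        = ∑ j ∈ Finset.univ.filter (fun j : Fin l => (j : ℕ) < i + 1), (aw d w j : ℤ) := by
      symm
      refine Finset.sum_bij (fun i _ => (i : ℕ)) ?_ ?_ ?_ ?_
      · intro i hi; simpa using hi
      · intro i _ j _ h; exact Fin.ext h
      · intro j hj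
        have hi' : j < i + 1 := by simpa using hj
        exact ⟨⟨j, by omega⟩, by rw [Finset.mem_filter]; exact ⟨Finset.mem_univ _, hi'⟩, rfl⟩
      · intro i _; rw [ha]
    rw [e1, sum_lt_succ _ _ i.2, sum_lt_succ _ _ i.2] at h5
    have e2 : ∑ j ∈ Finset.univ.filter (fun j : Fin l => (j : ℕ) < i), (aw d w j : ℤ)
       = ∑ j ∈ Finset.univ.filter (fun j : Fin l => (j : ℕ) < i), ((d j : ℤ) + dl j - dl j) := by
      apply Finset.sum_congr rfl
      intro j hj
      have hj' : j < i := by simpa using hj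
      simp [aw, hi1 j hj']
    have h6 := hw i
    have h7 := dl_strictAnti hi2
    have e3 : (aw d w ⟨i, i.2⟩ : ℤ) = (d i : ℤ) + dl i - dl (w i) := by
      simp only [aw, Fin.eta]; rw [Int.toNat_of_nonneg h6]
    rw [e2, e3] at h5
    simp only [Fin.eta] at h5
    omega

open Classical in
theorem vanish_sum {l s : ℕ} (hl : 0 < l) (d : Fin l → ℕ) (hd : Antitone d)
    (μ : Fin (s + 1) → ℕ) (h : d ⟨0, hl⟩ < μ 0) :
    ∑ w' ∈ Finset.univ.filter (okw d), (Equiv.Perm.sign w' : ℤ) * Ncard (aw d w') μ = 0 := by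
  let a : ℕ → ℕ := fun j => if h : j < s + 1 then μ ⟨j, h⟩ else 0
  have ha : ∀ j : Fin (s + 1), a j = μ j := fun j => by simp only [a]; rw [dif_pos j.2]
  rw [alt_sum d a μ ha]
  by_contra hc
  obtain ⟨-, -, -, h4⟩ := Fit_support a _ _ (add_dl_strictAnti d hd) hc
  have h5 := h4 1 (by omega)
  rw [sum_lt_succ _ 0 hl] at h5
  have := ha 0
  simp at this h5
  omega

/-- prefix sums of `aw` dominate those of `d` -/
theorem aw_prefix {l : ℕ} (d : Fin l → ℕ) (w : Equiv.Perm (Fin l)) (hw : okw d w) (k : ℕ) :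
    ∑ i ∈ Finset.univ.filter (fun i : Fin l => (i : ℕ) < k), (d i : ℤ) ≤
    ∑ i ∈ Finset.univ.filter (fun i : Fin l => (i : ℕ) < k), (aw d w i : ℤ) := by
  have e : ∀ i, (aw d w i : ℤ) = (d i : ℤ) + dl i - dl (w i) := fun i =>
    Int.toNat_of_nonneg (hw i)
  simp only [e]
  rw [Finset.sum_sub_distrib, Finset.sum_add_distrib]
  have hm : Monovary (dl : Fin l → ℤ) (fun i : Fin l => if (i : ℕ) < k then (1 : ℤ) else 0) := by
    intro i j h
    apply dl_strictAnti.antitone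
    simp only [Fin.le_def]
    dsimp only at h
    split_ifs at h <;> simp at h <;> omega
  have := hm.sum_comp_perm_mul_le_sum_mul (σ := w)
  simp only [mul_ite, mul_one, mul_zero, ← Finset.sum_filter] at this
  linarith

theorem sort_prefix {l : ℕ} (a : Fin l → ℕ) (σ : Equiv.Perm (Fin l)) (h : Antitone (a ∘ σ))
    (k : ℕ) :
    ∑ i ∈ Finset.univ.filter (fun i : Fin l => (i : ℕ) < k), a i ≤
    ∑ i ∈ Finset.univ.filter (fun i : Fin l => (i : ℕ) < k), (a ∘ σ) i := by
  have hm : Monovary (a ∘ σ) (fun i : Fin l => if (i : ℕ) < k then (1 : ℕ) else 0) := by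
    intro i j hij
    apply h
    simp only [Fin.le_def]
    dsimp only at hij
    split_ifs at hij <;> simp at hij <;> omega
  have := hm.sum_comp_perm_mul_le_sum_mul (σ := σ⁻¹)
  simpa [mul_ite, mul_one, mul_zero, ← Finset.sum_filter] using this

theorem aw_prefix_strict {l : ℕ} (d : Fin l → ℕ) (w : Equiv.Perm (Fin l)) (hw : okw d w)
    (h1 : w ≠ 1) : ∃ k : ℕ,
    ∑ i ∈ Finset.univ.filter (fun i : Fin l => (i : ℕ) < k), (d i : ℤ) <
    ∑ i ∈ Finset.univ.filter (fun i : Fin l => (i : ℕ) < k), (aw d w i : ℤ) := by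
  obtain ⟨i, hi1, hi2⟩ := perm_first w h1
  refine ⟨i + 1, ?_⟩
  rw [sum_lt_succ _ _ i.2, sum_lt_succ _ _ i.2]
  have h6 := hw i
  have h7 := dl_strictAnti hi2
  have e3 : (aw d w ⟨i, i.2⟩ : ℤ) = (d i : ℤ) + dl i - dl (w i) := by
    simp only [aw, Fin.eta]; rw [Int.toNat_of_nonneg h6]
  have := aw_prefix d w hw i
  rw [e3]
  simp only [Fin.eta]
  omega

end Comb

section RepTheory

variable {G : Type} [Group G] [Fintype G]
variable {W : Type} [AddCommGroup W] [Module ℂ W] [FiniteDimensional ℂ W]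

/-- the pairing of functions on the group -/
noncomputable def ip (f h : G → ℂ) : ℂ := (Nat.card G : ℂ)⁻¹ * ∑ x, f x * h x⁻¹

/-- fixed vectors of a subgroup -/
noncomputable def fixS (ρ : Representation ℂ G W) (P : Subgroup G) : Submodule ℂ W :=
  Representation.invariants (ρ.comp P.subtype)

theorem mem_fixS (ρ : Representation ℂ G W) (P : Subgroup G) (v : W) :
    v ∈ fixS ρ P ↔ ∀ p ∈ P, ρ p v = v := by
  unfold fixS
  rw [Representation.mem_invariants]
  simp

open Classical in
/-- permutation character -/
noncomputable def chP (P : Subgroup G) (g : G) : ℂ :=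
  (Nat.card P : ℂ)⁻¹ * ((Finset.univ.filter (fun x : G => x⁻¹ * g * x ∈ P)).card : ℂ)

theorem chP_inv (P : Subgroup G) (g : G) : chP P g⁻¹ = chP P g := by
  classical
  unfold chP
  congr 3
  ext x
  simp only [Finset.mem_filter, Finset.mem_univ, true_and]
  rw [← inv_mem_iff]
  simp [mul_assoc]

theorem chP_conj (P : Subgroup G) (g h : G) : chP P (h * g * h⁻¹) = chP P g := by
  classical
  unfold chP
  congr 2
  refine Finset.card_bij' (fun x _ => h⁻¹ * x) (fun x _ => h * x) ?_ ?_ ?_ ?_ <;>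
    simp [mul_assoc]

theorem chP_real (P : Subgroup G) (g : G) : (starRingEnd ℂ) (chP P g) = chP P g := by
  unfold chP
  simp

open Classical in
theorem ip_chP (φ : G → ℂ) (hφ : ∀ g h, φ (h * g * h⁻¹) = φ g) (P : Subgroup G) :
    ip φ (chP P) = (Nat.card P : ℂ)⁻¹ * ∑ p : P, φ p := by
  unfold ip
  have h1 : ∑ x, φ x * chP P x⁻¹ = (Nat.card P : ℂ)⁻¹ *
      ∑ y : G, ∑ x : G, if y⁻¹ * x * y ∈ P then φ x else 0 := by
    rw [Finset.sum_comm, Finset.mul_sum]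
    apply Finset.sum_congr rfl
    intro x _
    rw [chP_inv, chP, ← Finset.sum_filter, Finset.sum_const, nsmul_eq_mul]
    ring
  have h2 : ∀ y : G, (∑ x : G, if y⁻¹ * x * y ∈ P then φ x else 0) = ∑ p : P, φ p := by
    intro y
    rw [← Equiv.sum_comp (MulAut.conj y).toEquiv]
    simp only [MulEquiv.toEquiv_eq_coe, MulEquiv.coe_toEquiv, MulAut.conj_apply, hφ]
    rw [← Finset.sum_filter]
    rw [← Finset.sum_subtype (Finset.univ.filter (fun x => x ∈ P)) (by simp)]
    apply Finset.sum_congr _ (fun _ _ => rfl)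
    ext x; simp [mul_assoc]
  rw [h1]
  simp only [h2]
  rw [Finset.sum_const, Finset.card_univ, nsmul_eq_mul, Nat.card_eq_fintype_card (α := G)]
  have : (Fintype.card G : ℂ) ≠ 0 := by simp
  field_simp

theorem ip_char_chP (ρ : Representation ℂ G W) (P : Subgroup G) :
    ip ρ.character (chP P) = Module.finrank ℂ (fixS ρ P) := by
  classical
  rw [ip_chP _ (fun g h => ρ.char_conj g h)]
  have : Invertible (Nat.card P : ℂ) := invertibleOfNonzero (by simp)
  exact Representation.card_inv_mul_sum_char_eq_finrank (ρ.comp P.subtype)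

theorem ip_chP_chP (P Q : Subgroup G) :
    ip (chP P) (chP Q) = Nat.card (MulAction.orbitRel.Quotient Q (G ⧸ P)) := by
  classical
  rw [ip_chP _ (chP_conj P)]
  have hb := MulAction.sum_card_fixedBy_eq_card_orbits_mul_card_group Q (G ⧸ P)
  have hc : ∀ q : Q, chP P (q : G) = Fintype.card (MulAction.fixedBy (G ⧸ P) q) := by
    intro q
    unfold chP
    have : (Finset.univ.filter (fun x : G => x⁻¹ * (q : G) * x ∈ P)).card =
        Nat.card P * Fintype.card (MulAction.fixedBy (G ⧸ P) q) := by
      have e1 : (Finset.univ.filter (fun x : G => x⁻¹ * (q : G) * x ∈ P)).card =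
        Nat.card ((QuotientGroup.mk : G → G ⧸ P) ⁻¹' (MulAction.fixedBy (G ⧸ P) q)) := by
        rw [← Nat.card_eq_finsetCard]
        apply Nat.card_congr
        apply Equiv.subtypeEquivRight
        intro x
        simp only [Finset.mem_filter, Finset.mem_univ, true_and, Set.mem_preimage,
          MulAction.mem_fixedBy]
        rw [← inv_mem_iff]
        change _ ↔ ((q : G) • (x : G ⧸ P)) = x
        rw [MulAction.Quotient.smul_coe, QuotientGroup.eq]
        simp [mul_assoc]
      rw [e1, Nat.card_congr (QuotientGroup.preimageMkEquivSubgroupProdSet P _), Nat.card_prod,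
        Nat.card_eq_fintype_card (α := MulAction.fixedBy (G ⧸ P) q)]
    rw [this]
    have : (Nat.card P : ℂ) ≠ 0 := by simp
    push_cast
    field_simp
  simp only [hc]
  rw [← Nat.cast_sum, hb, Nat.card_eq_fintype_card, Nat.card_eq_fintype_card]
  have : (Fintype.card Q : ℂ) ≠ 0 := by simp
  push_cast
  field_simp

theorem isIrreducible_of (ρ : Representation ℂ G W) (h : IsIrred ρ) : ρ.IsIrreducible := by
  obtain ⟨⟨v, hv⟩, h2⟩ := h
  refine { exists_pair_ne := ⟨⊥, ⊤, ?_⟩, eq_bot_or_eq_top := ?_ }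
  · intro h
    have := congrArg Subrepresentation.toSubmodule h
    apply hv
    have h3 : v ∈ (⊤ : Subrepresentation ρ).toSubmodule := Submodule.mem_top
    rw [← this] at h3
    exact h3
  · intro p
    rcases h2 p.toSubmodule (fun g v hv => p.apply_mem_toSubmodule g hv) with h | h
    · left; exact Subrepresentation.toSubmodule_injective h
    · right; exact Subrepresentation.toSubmodule_injective h

theorem ip_irred (ρ : Representation ℂ G W) (h : IsIrred ρ) : ip ρ.character ρ.character = 1 := by
  have := isIrreducible_of ρ h
  have : Invertible (Nat.card G : ℂ) := invertibleOfNonzero (by simp)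
  have h2 := Representation.char_orthonormal ρ ρ
  rw [if_pos ⟨Representation.Equiv.refl ρ⟩] at h2
  exact h2

open scoped ComplexOrder in
theorem char_inv_conj (ρ : Representation ℂ G W) (g : G) :
    ρ.character g⁻¹ = (starRingEnd ℂ) (ρ.character g) := by
  classical
  set b := Module.finBasis ℂ W
  set M : G → Matrix _ _ ℂ := fun g => LinearMap.toMatrix b b (ρ g) with hM
  have hmul : ∀ x y, M (x * y) = M x * M y := fun x y => by
    simp only [hM, map_mul]; exact LinearMap.toMatrix_mul b _ _
  have hone : M 1 = 1 := by simp only [hM, map_one]; exact LinearMap.toMatrix_one b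
  set S := ∑ x, (M x)ᴴ * M x with hS
  have hSpd : S.PosDef := by
    rw [hS, ← Finset.add_sum_erase _ _ (Finset.mem_univ (1 : G)), hone]
    apply Matrix.PosDef.add_posSemidef
    · simpa using Matrix.PosDef.one
    · apply Matrix.posSemidef_sum
      intro x _
      exact Matrix.posSemidef_conjTranspose_mul_self _
  have hinv : (M g)ᴴ * S * M g = S := by
    rw [hS, Finset.mul_sum, Finset.sum_mul]
    conv_rhs => rw [← Equiv.sum_comp (Equiv.mulRight g)]
    apply Finset.sum_congr rfl
    intro x _
    simp [hmul, Matrix.conjTranspose_mul, mul_assoc]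
  have hu : IsUnit S := hSpd.isUnit
  have htr : ∀ x, ρ.character x = (M x).trace := fun x => by
    unfold Representation.character
    exact LinearMap.trace_eq_matrix_trace ℂ b _
  rw [htr, htr]
  have h3 : M g * M g⁻¹ = 1 := by rw [← hmul, mul_inv_cancel, hone]
  have h4 : (M g)ᴴ * S = S * M g⁻¹ := by
    calc (M g)ᴴ * S = (M g)ᴴ * S * (M g * M g⁻¹) := by rw [h3, mul_one]
      _ = _ := by rw [← mul_assoc, hinv]
  obtain ⟨u, hu⟩ := hu
  have h5 : M g⁻¹ = (↑u⁻¹ : Matrix _ _ ℂ) * (M g)ᴴ * (u : Matrix _ _ ℂ) := by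
    rw [hu, mul_assoc, h4, ← hu, ← mul_assoc, Units.inv_mul, one_mul]
  rw [h5, Matrix.trace_mul_comm, ← mul_assoc, Units.mul_inv, one_mul,
    Matrix.trace_conjTranspose]
  rfl

theorem ip_pos (f : G → ℂ) (hf : ∀ g, f g⁻¹ = (starRingEnd ℂ) (f g)) (h : ip f f = 0) : f = 0 := by
  unfold ip at h
  rw [mul_eq_zero] at h
  rcases h with h | h
  · simp at h
  · simp only [hf, Complex.mul_conj] at h
    rw [← Complex.ofReal_sum, Complex.ofReal_eq_zero,
      Finset.sum_eq_zero_iff_of_nonneg (fun _ _ => Complex.normSq_nonneg _)] at h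
    ext g
    simpa using h g (Finset.mem_univ g)

theorem ip_sub_left (f g h : G → ℂ) : ip (f - g) h = ip f h - ip g h := by
  simp [ip, sub_mul, mul_sub]
theorem ip_sub_right (f g h : G → ℂ) : ip f (g - h) = ip f g - ip f h := by
  simp [ip, mul_sub]
theorem ip_symm (f g : G → ℂ) : ip f g = ip g f := by
  unfold ip
  congr 1
  rw [← Equiv.sum_comp (Equiv.inv G)]
  simp [mul_comm]
theorem ip_sum_left {ι : Type*} (s : Finset ι) (c : ι → ℂ) (f : ι → G → ℂ) (h : G → ℂ) :
    ip (∑ i ∈ s, c i • f i) h = ∑ i ∈ s, c i * ip (f i) h := by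
  simp only [ip, Finset.sum_apply, Finset.sum_mul, Pi.smul_apply, smul_eq_mul]
  rw [Finset.sum_comm, Finset.mul_sum]
  apply Finset.sum_congr rfl
  intro i _
  rw [Finset.mul_sum, Finset.mul_sum, Finset.mul_sum]
  apply Finset.sum_congr rfl
  intro x _
  ring

/-- equality of functions from equality of all pairings -/
theorem eq_of_ip (f g : G → ℂ) (hf : ∀ x, f x⁻¹ = (starRingEnd ℂ) (f x))
    (hg : ∀ x, g x⁻¹ = (starRingEnd ℂ) (g x)) (c : ℂ) (h1 : ip f f = c) (h2 : ip f g = c)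
    (h3 : ip g g = c) : f = g := by
  rw [← sub_eq_zero]
  apply ip_pos
  · intro x; simp [hf, hg]
  · rw [ip_sub_left, ip_sub_right, ip_sub_right, ip_symm g f, h1, h2, h3]; ring

end RepTheory

section Frob

variable {n : ℕ} {W : Type} [AddCommGroup W] [Module ℂ W] [FiniteDimensional ℂ W]
variable (ρ : Representation ℂ (GL (Fin n) F) W) (P : Subgroup (GL (Fin n) F))

/-- the intertwiner attached to an invariant functional -/
noncomputable def phiOf (lam : W →ₗ[ℂ] ℂ) (h : ∀ p ∈ P, ∀ w, lam (ρ p w) = lam w) :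
    W →ₗ[ℂ] ↥(cosetSpace P) where
  toFun w := ⟨fun g => lam (ρ g⁻¹ w), by
    intro g p hp
    change lam (ρ (g * p)⁻¹ w) = lam (ρ g⁻¹ w)
    rw [_root_.mul_inv_rev, map_mul]
    exact h _ (inv_mem hp) _⟩
  map_add' a b := Subtype.ext (funext fun g => by simp)
  map_smul' c a := Subtype.ext (funext fun g => by simp)

theorem phiOf_apply (lam : W →ₗ[ℂ] ℂ) (h) (w : W) (g : GL (Fin n) F) :
    (phiOf ρ P lam h w : GL (Fin n) F → ℂ) g = lam (ρ g⁻¹ w) := rfl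

theorem phiOf_mem (lam : W →ₗ[ℂ] ℂ) (h) : phiOf ρ P lam h ∈ interSub ρ (indTriv P) := by
  intro g w
  refine Subtype.ext (funext fun x => ?_)
  change lam (ρ x⁻¹ (ρ g w)) = lam (ρ (g⁻¹ * x)⁻¹ w)
  rw [_root_.mul_inv_rev, inv_inv, map_mul]
  rfl

open Classical in
/-- averaged functional (not normalised) -/
noncomputable def avF (e : W →ₗ[ℂ] ℂ) : W →ₗ[ℂ] ℂ := ∑ p : P, e ∘ₗ (ρ (p : GL (Fin n) F))

theorem avF_inv (e : W →ₗ[ℂ] ℂ) : ∀ p ∈ P, ∀ w, avF ρ P e (ρ p w) = avF ρ P e w := by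
  classical
  intro p hp w
  simp only [avF, LinearMap.sum_apply, LinearMap.comp_apply]
  rw [← Equiv.sum_comp (Equiv.mulRight (⟨p, hp⟩ : P)) (fun q : P => e (ρ (q : GL (Fin n) F) w))]
  simp

theorem avF_fix (e : W →ₗ[ℂ] ℂ) (v : W) (hv : v ∈ fixS ρ P) :
    avF ρ P e v = (Nat.card P : ℂ) * e v := by
  classical
  rw [mem_fixS] at hv
  simp only [avF, LinearMap.sum_apply, LinearMap.comp_apply]
  rw [Finset.sum_congr rfl (fun (p : P) _ => by rw [hv p p.2])]
  simp [Nat.card_eq_fintype_card]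

theorem exists_invfun (h : ∃ φ ∈ interSub ρ (indTriv P), φ ≠ 0) :
    ∃ lam : W →ₗ[ℂ] ℂ, lam ≠ 0 ∧ ∀ p ∈ P, ∀ w, lam (ρ p w) = lam w := by
  obtain ⟨φ, hφ, h0⟩ := h
  let ev : ↥(cosetSpace P) →ₗ[ℂ] ℂ := (LinearMap.proj 1) ∘ₗ (cosetSpace P).subtype
  have hev : ∀ g w, ev (φ (ρ g w)) = (φ w : GL (Fin n) F → ℂ) g⁻¹ := by
    intro g w
    rw [hφ g w]
    change (φ w : GL (Fin n) F → ℂ) (g⁻¹ * 1) = _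
    rw [mul_one]
  refine ⟨ev ∘ₗ φ, ?_, ?_⟩
  · intro h
    apply h0
    refine LinearMap.ext fun w => Subtype.ext (funext fun g => ?_)
    have := hev g⁻¹ w
    rw [inv_inv] at this
    rw [← this]
    exact LinearMap.congr_fun h _
  · intro p hp w
    simp only [LinearMap.comp_apply]
    rw [hev]
    have h1 := (φ w).2 1 p⁻¹ (inv_mem hp)
    rw [one_mul] at h1
    rw [h1]; rfl

theorem fix_of_lam (lam : W →ₗ[ℂ] ℂ) (hl : ∀ p ∈ P, ∀ w, lam (ρ p w) = lam w)
    (h0 : lam ≠ 0) : fixS ρ P ≠ ⊥ := by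
  classical
  obtain ⟨w, hw⟩ : ∃ w, lam w ≠ 0 := by
    by_contra h; push Not at h; exact h0 (LinearMap.ext h)
  intro hb
  have hm : (∑ p : P, ρ (p : GL (Fin n) F) w) ∈ fixS ρ P := by
    rw [mem_fixS]
    intro p hp
    rw [map_sum, ← Equiv.sum_comp (Equiv.mulLeft (⟨p, hp⟩ : P))
      (fun q : P => ρ (q : GL (Fin n) F) w)]
    simp
  rw [hb, Submodule.mem_bot] at hm
  have := congrArg lam hm
  rw [map_sum, map_zero, Finset.sum_congr rfl (fun (p : P) _ => hl p p.2 w)] at this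
  simp [hw] at this

theorem inter_bot_fix (h : interSub ρ (indTriv P) = ⊥) : fixS ρ P = ⊥ := by
  rw [eq_bot_iff]
  intro v hv
  rw [Submodule.mem_bot]
  by_contra h0
  obtain ⟨e, he⟩ : ∃ e : W →ₗ[ℂ] ℂ, e v ≠ 0 := by
    by_contra hc; push Not at hc
    exact h0 ((Module.forall_dual_apply_eq_zero_iff ℂ v).1 hc)
  have hm := phiOf_mem ρ P (avF ρ P e) (avF_inv ρ P e)
  rw [h, Submodule.mem_bot] at hm
  have h1 := phiOf_apply ρ P (avF ρ P e) (avF_inv ρ P e) v 1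
  rw [hm, inv_one, map_one, Module.End.one_apply, avF_fix ρ P e v hv] at h1
  have h2 : (Nat.card P : ℂ) ≠ 0 := Nat.cast_ne_zero.2 (Nat.card_pos (α := P)).ne'
  exact mul_ne_zero h2 he h1.symm

theorem finrank_fix_one (hocc : ∃ φ : W →ₗ[ℂ] ↥(cosetSpace P),
      φ ∈ interSub ρ (indTriv P) ∧ φ ≠ 0)
    (hmult : ∀ φ ψ : W →ₗ[ℂ] ↥(cosetSpace P),
      φ ∈ interSub ρ (indTriv P) →
      ψ ∈ interSub ρ (indTriv P) → φ ≠ 0 → ∃ c : ℂ, ψ = c • φ) :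
    Module.finrank ℂ (fixS ρ P) = 1 := by
  obtain ⟨lam, hl0, hl⟩ := exists_invfun ρ P hocc
  have hne := fix_of_lam ρ P lam hl hl0
  obtain ⟨v, hv, hv0⟩ := Submodule.exists_mem_ne_zero_of_ne_bot hne
  have h2 : (Nat.card P : ℂ) ≠ 0 := Nat.cast_ne_zero.2 (Nat.card_pos (α := P)).ne'
  obtain ⟨e, he⟩ : ∃ e : W →ₗ[ℂ] ℂ, e v ≠ 0 := by
    by_contra hc; push Not at hc
    exact hv0 ((Module.forall_dual_apply_eq_zero_iff ℂ v).1 hc)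
  have hval : ∀ (e : W →ₗ[ℂ] ℂ) (u : W), u ∈ fixS ρ P →
      (phiOf ρ P (avF ρ P e) (avF_inv ρ P e) u : GL (Fin n) F → ℂ) 1 = (Nat.card P : ℂ) * e u := by
    intro e u hu
    rw [phiOf_apply, inv_one, map_one, Module.End.one_apply, avF_fix ρ P e u hu]
  apply finrank_eq_one (⟨v, hv⟩ : fixS ρ P)
  · simpa using hv0
  · rintro ⟨u, hu⟩
    refine ⟨e u / e v, ?_⟩
    apply Subtype.ext
    change (e u / e v) • v = u
    rw [← sub_eq_zero]
    rw [← Module.forall_dual_apply_eq_zero_iff ℂ]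
    intro e'
    obtain ⟨c, hc⟩ := hmult _ _ (phiOf_mem ρ P (avF ρ P e) (avF_inv ρ P e))
      (phiOf_mem ρ P (avF ρ P e') (avF_inv ρ P e')) (by
        intro h
        have := hval e v hv
        rw [h] at this
        exact mul_ne_zero h2 he this.symm)
    have k : ∀ x ∈ fixS ρ P, e' x = c * e x := by
      intro x hx
      have h4 := hval e' x hx
      rw [hc] at h4
      have h5 : ((c • phiOf ρ P (avF ρ P e) (avF_inv ρ P e)) x : GL (Fin n) F → ℂ) 1 =
        c * ((phiOf ρ P (avF ρ P e) (avF_inv ρ P e)) x : GL (Fin n) F → ℂ) 1 := rfl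
      rw [h5, hval e x hx] at h4
      apply mul_left_cancel₀ h2
      rw [← h4]; ring
    rw [map_sub, map_smul, k u hu, k v hv, smul_eq_mul]
    field_simp
    ring

end Frob

section Gram

variable {n : ℕ}

theorem psum_mono {r : ℕ} (α : Fin r → ℕ) {i j : ℕ} (h : i ≤ j) : psum r α i ≤ psum r α j := by
  unfold psum
  apply Finset.sum_le_sum_of_subset
  intro x
  simp only [Finset.mem_filter, Finset.mem_univ, true_and]
  omega

theorem psum_succ {r : ℕ} (α : Fin r → ℕ) (i : Fin r) :
    psum r α (i + 1) = psum r α i + α i := by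
  unfold psum
  have : (Finset.univ.filter (fun x : Fin r => (x : ℕ) < i + 1)) =
      insert i (Finset.univ.filter (fun x : Fin r => (x : ℕ) < i)) := by
    ext x; simp [Fin.ext_iff]; omega
  rw [this, Finset.sum_insert (by simp)]
  ring

/-- `ε` is the block map of the composition `α` -/
def IsBlk {r : ℕ} (α : Fin r → ℕ) (ε : Fin n → Fin r) : Prop :=
  (∀ (x : Fin n) (j : ℕ), (x : ℕ) < psum r α j ↔ (ε x : ℕ) < j) ∧
    ∀ i, Fintype.card {x // ε x = i} = α i

theorem exists_blk {r : ℕ} (α : Fin r → ℕ) (h : ∑ i, α i = n) :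
    ∃ ε : Fin n → Fin r, IsBlk α ε := by
  subst h
  refine ⟨fun x => (finSigmaFinEquiv.symm x).1, ?_, ?_⟩
  · intro x j
    obtain ⟨⟨i, k⟩, rfl⟩ := finSigmaFinEquiv.surjective x
    simp only [Equiv.symm_apply_apply]
    have h1 : ((finSigmaFinEquiv ⟨i, k⟩ : Fin (∑ i, α i)) : ℕ) = psum r α i + k := by
      rw [finSigmaFinEquiv_apply]
      congr 1
      unfold psum
      symm
      refine Finset.sum_bij' (fun x hx => ⟨x, (Finset.mem_filter.1 hx).2⟩)
        (fun x _ => Fin.castLE i.2.le x) ?_ ?_ ?_ ?_ ?_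
      · simp
      · intro a _
        rw [Finset.mem_filter]
        exact ⟨Finset.mem_univ _, a.2⟩
      · simp
      · simp
      · simp
    rw [h1]
    have h2 := psum_succ α i
    have h3 := k.2
    constructor
    · intro h
      by_contra hc
      have := psum_mono α (not_lt.1 hc)
      omega
    · intro h
      have := psum_mono α (Nat.succ_le_of_lt h)
      simp only [Nat.succ_eq_add_one] at this
      omega
  · intro i
    have e : {x // (finSigmaFinEquiv.symm x).1 = i} ≃ Fin (α i) :=
      (Equiv.subtypeEquiv (finSigmaFinEquiv (m := r) (n := α)).symm
        (q := fun y : (i : Fin r) × Fin (α i) => y.1 = i) (fun x => Iff.rfl)).trans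
        (Equiv.sigmaSubtype i)
    rw [Fintype.card_congr e, Fintype.card_fin]

theorem mem_stabE_Esub (m : ℕ) (g : GL (Fin n) F) :
    g ∈ stabE (Esub (F := F) n m) ↔
      ∀ x y : Fin n, m ≤ x → (y : ℕ) < m → (g : Matrix (Fin n) (Fin n) F) x y = 0 := by
  constructor
  · intro h x y hx hy
    have := h (Pi.single y 1) (by
      intro i hi
      rw [Pi.single_apply, if_neg]
      rintro rfl
      omega) x hx
    simpa using this
  · intro h v hv x hx
    change ∑ y, (g : Matrix (Fin n) (Fin n) F) x y * v y = 0
    apply Finset.sum_eq_zero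
    intro y _
    by_cases hy : (y : ℕ) < m
    · rw [h x y hx hy, zero_mul]
    · rw [hv y (by omega), mul_zero]

theorem mem_parab {r : ℕ} (α : Fin r → ℕ) (ε : Fin n → Fin r) (hε : IsBlk α ε)
    (g : GL (Fin n) F) : g ∈ parab n r α ↔
      ∀ x y : Fin n, ε y < ε x → (g : Matrix (Fin n) (Fin n) F) x y = 0 := by
  unfold parab
  rw [Subgroup.mem_iInf]
  simp only [mem_stabE_Esub]
  constructor
  · intro h x y hxy
    apply h (ε y + 1) x y
    · have := (hε.1 x (ε y + 1)).not
      rw [Fin.lt_def] at hxy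
      omega
    · rw [hε.1]; omega
  · intro h j x y hx hy
    apply h
    rw [hε.1] at hy
    have := (hε.1 x j).not
    rw [Fin.lt_def]
    omega

/-- upper triangular invertible matrices -/
def Bor : Subgroup (GL (Fin n) F) := ⨅ m : ℕ, stabE (Esub n m)

theorem mem_Bor (g : GL (Fin n) F) : g ∈ (Bor : Subgroup (GL (Fin n) F)) ↔
      ∀ x y : Fin n, y < x → (g : Matrix (Fin n) (Fin n) F) x y = 0 := by
  unfold Bor
  rw [Subgroup.mem_iInf]
  simp only [mem_stabE_Esub]
  constructor
  · intro h x y hxy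
    apply h (y + 1) x y
    · rw [Fin.lt_def] at hxy
      omega
    · omega
  · intro h j x y hx hy
    apply h
    rw [Fin.lt_def]
    omega

theorem Bor_le_parab {r : ℕ} (α : Fin r → ℕ) :
    (Bor : Subgroup (GL (Fin n) F)) ≤ parab n r α := by
  intro g hg
  unfold parab
  unfold Bor at hg
  rw [Subgroup.mem_iInf] at hg ⊢
  intro j
  exact hg _

/-- permutation matrices -/
def pm (σ : Equiv.Perm (Fin n)) : GL (Fin n) F where
  val := Matrix.of fun x y => if x = σ y then 1 else 0
  inv := Matrix.of fun x y => if x = σ⁻¹ y then 1 else 0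
  val_inv := by
    ext x y
    simp [Matrix.mul_apply, Matrix.one_apply]
  inv_val := by
    ext x y
    simp [Matrix.mul_apply, Matrix.one_apply]

theorem pm_apply (σ : Equiv.Perm (Fin n)) (x y : Fin n) :
    (pm σ : GL (Fin n) F).val x y = if x = σ y then 1 else 0 := rfl

theorem pm_mul (σ τ : Equiv.Perm (Fin n)) : (pm (σ * τ) : GL (Fin n) F) = pm σ * pm τ := by
  apply Units.ext
  ext x y
  simp [Matrix.mul_apply, pm_apply]
  try rfl

theorem pm_inv (σ : Equiv.Perm (Fin n)) : (pm σ : GL (Fin n) F)⁻¹ = pm σ⁻¹ := by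
  rw [inv_eq_iff_mul_eq_one, ← pm_mul, mul_inv_cancel]
  apply Units.ext
  ext x y
  simp [pm_apply, Matrix.one_apply]
  try rfl

theorem pm_mulVec (σ : Equiv.Perm (Fin n)) (v : Fin n → F) (x : Fin n) :
    ((pm σ : GL (Fin n) F).val *ᵥ v) x = v (σ⁻¹ x) := by
  simp only [Matrix.mulVec, dotProduct, pm_apply]
  rw [Finset.sum_eq_single (σ⁻¹ x)]
  · simp
  · intro y _ hy
    rw [if_neg, zero_mul]
    rintro rfl
    simp at hy
  · simp

theorem mul_pm_apply (A : Matrix (Fin n) (Fin n) F) (σ : Equiv.Perm (Fin n)) (x y : Fin n) :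
    (A * (pm σ : GL (Fin n) F).val) x y = A x (σ y) := by
  simp [Matrix.mul_apply, pm_apply]

theorem pm_mul_apply (A : Matrix (Fin n) (Fin n) F) (σ : Equiv.Perm (Fin n)) (x y : Fin n) :
    ((pm σ : GL (Fin n) F).val * A) x y = A (σ⁻¹ x) y := by
  exact pm_mulVec σ (fun z => A z y) x

theorem bruhat (g : GL (Fin n) F) : ∃ b₁ ∈ (Bor : Subgroup (GL (Fin n) F)),
    ∃ σ : Equiv.Perm (Fin n), ∃ b₂ ∈ (Bor : Subgroup (GL (Fin n) F)), g = b₁ * pm σ * b₂ := by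
  classical
  -- `Q i b`
  let Q : Fin n → ℕ → (Fin n → F) → Prop := fun i b v =>
    v i = 1 ∧ (∀ x, i < x → v x = 0) ∧ ∀ y : Fin n, b < y → ((g⁻¹).val *ᵥ v) y = 0
  have hQ : ∀ i, ∃ b, ∃ v, Q i b v := by
    intro i
    refine ⟨n, Pi.single i 1, by simp, ?_, ?_⟩
    · intro x hx; rw [Pi.single_apply, if_neg hx.ne']
    · intro y hy; omega
  choose v hv using fun i => Nat.find_spec (hQ i)
  have hmin : ∀ i b, b < Nat.find (hQ i) → ∀ v, ¬ Q i b v := fun i b hb v hv =>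
    Nat.find_min (hQ i) hb ⟨v, hv⟩
  have hlt : ∀ i, Nat.find (hQ i) < n := by
    intro i
    by_contra hc
    have hi := i.2
    apply hmin i (n - 1) (by omega) (v i)
    refine ⟨(hv i).1, (hv i).2.1, ?_⟩
    intro y hy; omega
  let s : Fin n → Fin n := fun i => ⟨Nat.find (hQ i), hlt i⟩
  have hnz : ∀ i, ((g⁻¹).val *ᵥ v i) (s i) ≠ 0 := by
    intro i hz
    by_cases h0 : Nat.find (hQ i) = 0
    · -- then the vector vanishes
      have : (g⁻¹).val *ᵥ v i = 0 := by
        ext y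
        rcases Nat.eq_zero_or_pos (y : ℕ) with hy | hy
        · have : y = s i := by ext; simp only [s]; omega
          rw [this, hz]; rfl
        · exact (hv i).2.2 y (by omega)
      have h2 : v i = 0 := by
        have := congrArg (fun u => g.val *ᵥ u) this
        simpa using this
      have := (hv i).1
      rw [h2] at this
      simp at this
    · apply hmin i (Nat.find (hQ i) - 1) (by omega) (v i)
      refine ⟨(hv i).1, (hv i).2.1, ?_⟩
      intro y hy
      by_cases hy2 : (y : ℕ) = Nat.find (hQ i)
      · have : y = s i := by ext; simp only [s]; omega
        rw [this, hz]
      · exact (hv i).2.2 y (by omega)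
  have hinj : Function.Injective s := by
    have key : ∀ i i', i < i' → s i ≠ s i' := by
      intro i i' hii h
      have h' : Nat.find (hQ i) = Nat.find (hQ i') := congrArg Fin.val h
      set c := ((g⁻¹).val *ᵥ v i') (s i) / ((g⁻¹).val *ᵥ v i) (s i) with hc
      have hz : ((g⁻¹).val *ᵥ (v i' - c • v i)) (s i) = 0 := by
        rw [Matrix.mulVec_sub, Matrix.mulVec_smul, Pi.sub_apply, Pi.smul_apply, smul_eq_mul, hc,
          div_mul_cancel₀ _ (hnz i), sub_self]
      have hone : (v i' - c • v i) i' = 1 := by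
        simp [(hv i').1, (hv i).2.1 i' hii]
      have htop : ∀ x, i' < x → (v i' - c • v i) x = 0 := by
        intro x hx
        simp [(hv i').2.1 x hx, (hv i).2.1 x (hii.trans hx)]
      have hsup : ∀ y : Fin n, Nat.find (hQ i') < y →
          ((g⁻¹).val *ᵥ (v i' - c • v i)) y = 0 := by
        intro y hy
        rw [Matrix.mulVec_sub, Matrix.mulVec_smul, Pi.sub_apply, Pi.smul_apply,
          (hv i').2.2 y hy, (hv i).2.2 y (by omega)]
        simp
      by_cases h0 : Nat.find (hQ i') = 0
      · have : (g⁻¹).val *ᵥ (v i' - c • v i) = 0 := by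
          ext y
          rcases Nat.eq_zero_or_pos (y : ℕ) with hy | hy
          · have : y = s i := by ext; simp only [s]; omega
            rw [this, hz]; rfl
          · exact hsup y (by omega)
        have h2 : v i' - c • v i = 0 := by
          have := congrArg (fun u => g.val *ᵥ u) this
          simpa using this
        rw [h2] at hone
        simp at hone
      · apply hmin i' (Nat.find (hQ i') - 1) (by omega) (v i' - c • v i)
        refine ⟨hone, htop, ?_⟩
        intro y hy
        by_cases hy2 : (y : ℕ) = Nat.find (hQ i')
        · have : y = s i := by ext; simp only [s]; omega
          rw [this, hz]
        · exact hsup y (by omega)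
    intro i i' h
    by_contra hne
    rcases lt_or_gt_of_ne hne with h1 | h1
    · exact key _ _ h1 h
    · exact key _ _ h1 h.symm
  let σ : Equiv.Perm (Fin n) := Equiv.ofBijective s (Finite.injective_iff_bijective.1 hinj)
  let M : Matrix (Fin n) (Fin n) F := Matrix.of fun x i => v i x
  have hM : M.BlockTriangular id := by
    intro x i hxi
    exact (hv i).2.1 x hxi
  have hdet : M.det = 1 := by
    rw [Matrix.det_of_isUpperTriangular hM]
    apply Finset.prod_eq_one
    intro i _
    exact (hv i).1
  let b₁ : GL (Fin n) F := Matrix.GeneralLinearGroup.mkOfDetNeZero M (by rw [hdet]; exact one_ne_zero)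
  have hb1 : b₁ ∈ (Bor : Subgroup (GL (Fin n) F)) := by
    rw [mem_Bor]; intro x y h; exact (hv y).2.1 x h
  have hb2 : g⁻¹ * b₁ * pm σ⁻¹ ∈ (Bor : Subgroup (GL (Fin n) F)) := by
    rw [mem_Bor]
    intro x y hxy
    rw [Units.val_mul, mul_pm_apply, Units.val_mul]
    have : ((g⁻¹).val * b₁.val) x (σ⁻¹ y) = ((g⁻¹).val *ᵥ v (σ⁻¹ y)) x := rfl
    rw [this]
    apply (hv _).2.2
    have : s (σ⁻¹ y) = y := σ.apply_symm_apply y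
    have := congrArg Fin.val this
    simp only [s] at this
    rw [Fin.lt_def] at hxy
    omega
  refine ⟨b₁, hb1, σ⁻¹, (g⁻¹ * b₁ * pm σ⁻¹)⁻¹, inv_mem hb2, ?_⟩
  group

end Gram

section Gram2

variable {n : ℕ}

theorem exists_fiber_equiv {X X' Y : Type*} [Fintype X] [Fintype X'] [DecidableEq Y] (f : X → Y)
    (f' : X' → Y) (h : ∀ y, Fintype.card {x // f x = y} = Fintype.card {x // f' x = y}) :
    ∃ e : X ≃ X', ∀ x, f' (e x) = f x :=
  ⟨Equiv.ofFiberEquiv (fun y => Fintype.equivOfCardEq (h y)), fun x => Equiv.ofFiberEquiv_map _ x⟩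

theorem card_eq_of_surj {X Y Z : Type*} (f : X → Y) (g : X → Z) (hf : Function.Surjective f)
    (hg : Function.Surjective g) (h : ∀ x x', f x = f x' ↔ g x = g x') :
    Nat.card Y = Nat.card Z := by
  apply Nat.card_congr
  refine (Setoid.quotientKerEquivOfSurjective f hf).symm.trans
    (Equiv.trans (Quotient.congrRight ?_) (Setoid.quotientKerEquivOfSurjective g hg))
  intro x x'
  exact h x x'

/-- position matrix of a permutation -/
def posM {r s : ℕ} (ε : Fin n → Fin r) (ε' : Fin n → Fin s) (w : Equiv.Perm (Fin n)) :
    Fin s → Fin r → ℕ :=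
  fun j i => (Finset.univ.filter (fun x => ε x = i ∧ ε' (w⁻¹ x) = j)).card

theorem posM_row {r s : ℕ} (ε : Fin n → Fin r) (ε' : Fin n → Fin s) (w : Equiv.Perm (Fin n))
    (j : Fin s) : ∑ i, posM ε ε' w j i = Fintype.card {x // ε' x = j} := by
  have h1 : Fintype.card {x // ε' x = j} = Fintype.card {x // ε' (w⁻¹ x) = j} := by
    apply Fintype.card_congr
    exact Equiv.subtypeEquiv w (by simp)
  rw [h1, Fintype.card_subtype]
  rw [Finset.card_eq_sum_card_fiberwise (f := ε) (t := Finset.univ) (by simp)]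
  apply Finset.sum_congr rfl
  intro i _
  unfold posM
  congr 1
  ext x; simp [and_comm]

theorem posM_col {r s : ℕ} (ε : Fin n → Fin r) (ε' : Fin n → Fin s) (w : Equiv.Perm (Fin n))
    (i : Fin r) : ∑ j, posM ε ε' w j i = Fintype.card {x // ε x = i} := by
  rw [Fintype.card_subtype]
  rw [Finset.card_eq_sum_card_fiberwise (f := fun x => ε' (w⁻¹ x)) (t := Finset.univ) (by simp)]
  apply Finset.sum_congr rfl
  intro i _
  unfold posM
  congr 1
  ext x; simp

theorem card_supp (S : Finset (Fin n)) :
    Nat.card {v : Fin n → F // ∀ x, x ∉ S → v x = 0} = (Fintype.card F) ^ S.card := by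
  have e : {v : Fin n → F // ∀ x, x ∉ S → v x = 0} ≃ (S → F) :=
    { toFun := fun v x => v.1 x
      invFun := fun u => ⟨fun x => if h : x ∈ S then u ⟨x, h⟩ else 0, fun x hx => by simp [hx]⟩
      left_inv := fun v => by
        apply Subtype.ext
        ext x
        by_cases hx : x ∈ S
        · simp [hx]
        · simp [hx, v.2 x hx]
      right_inv := fun u => by ext x; simp }
  rw [Nat.card_congr e]
  simp

/-- cumulative counts -/
theorem cum_eq {r s : ℕ} (α : Fin r → ℕ) (μ : Fin s → ℕ) (ε : Fin n → Fin r) (ε' : Fin n → Fin s)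
    (hε : IsBlk α ε) (hε' : IsBlk μ ε') (w w' : Equiv.Perm (Fin n)) (p q : GL (Fin n) F)
    (hp : p ∈ parab n r α) (hq : q ∈ parab n s μ) (h : pm w' = p * pm w * q) (i j : ℕ) :
    (Finset.univ.filter (fun x => (ε x : ℕ) < i ∧ (ε' (w⁻¹ x) : ℕ) < j)).card =
    (Finset.univ.filter (fun x => (ε x : ℕ) < i ∧ (ε' (w'⁻¹ x) : ℕ) < j)).card := by
  have hp' : ∀ k ∈ (parab n r α : Subgroup (GL (Fin n) F)), ∀ v ∈ Esub (F := F) n (psum r α i),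
      k.val *ᵥ v ∈ Esub (F := F) n (psum r α i) := by
    intro k hk; unfold parab at hk; rw [Subgroup.mem_iInf] at hk; exact hk i
  have hq' : ∀ k ∈ (parab n s μ : Subgroup (GL (Fin n) F)), ∀ v ∈ Esub (F := F) n (psum s μ j),
      k.val *ᵥ v ∈ Esub (F := F) n (psum s μ j) := by
    intro k hk; unfold parab at hk; rw [Subgroup.mem_iInf] at hk; exact hk j
  have hset : ∀ u : Equiv.Perm (Fin n), ∀ v : Fin n → F,
      (v ∈ Esub (F := F) n (psum r α i) ∧ (pm u : GL (Fin n) F)⁻¹.val *ᵥ v ∈ Esub (F := F) n (psum s μ j)) ↔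
      ∀ x, x ∉ (Finset.univ.filter (fun x => (ε x : ℕ) < i ∧ (ε' (u⁻¹ x) : ℕ) < j)) → v x = 0 := by
    intro u v
    rw [pm_inv]
    constructor
    · rintro ⟨h1, h2⟩ x hx
      simp only [Finset.mem_filter, Finset.mem_univ, true_and, not_and_or] at hx
      rcases hx with hx | hx
      · apply h1
        rw [← hε.1] at hx; omega
      · rw [← hε'.1] at hx
        have := h2 (u⁻¹ x) (by omega)
        rw [pm_mulVec] at this
        simpa using this
    · intro hv
      constructor
      · intro x hx
        apply hv
        simp only [Finset.mem_filter, Finset.mem_univ, true_and, not_and_or]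
        left; rw [← hε.1]; omega
      · intro x hx
        rw [pm_mulVec]
        apply hv
        simp only [Finset.mem_filter, Finset.mem_univ, true_and, not_and_or]
        right; rw [← hε'.1]; simpa using hx
  have hq1 : 1 < Fintype.card F := Fintype.one_lt_card
  apply Nat.pow_right_injective hq1
  simp only
  rw [← card_supp, ← card_supp]
  apply Nat.card_congr
  refine Equiv.subtypeEquiv
    { toFun := fun v => p.val *ᵥ v
      invFun := fun v => p⁻¹.val *ᵥ v
      left_inv := fun v => by simp
      right_inv := fun v => by simp } ?_
  intro v
  rw [← hset w, ← hset w']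
  simp only [Equiv.coe_fn_mk]
  have e1 : (pm w' : GL (Fin n) F)⁻¹.val *ᵥ (p.val *ᵥ v) =
      q⁻¹.val *ᵥ ((pm w : GL (Fin n) F)⁻¹.val *ᵥ v) := by
    rw [Matrix.mulVec_mulVec, Matrix.mulVec_mulVec, ← Units.val_mul, ← Units.val_mul, h]
    congr 2
    group
  rw [e1]
  constructor
  · rintro ⟨h1, h2⟩
    exact ⟨hp' p hp _ h1, hq' _ (inv_mem hq) _ h2⟩
  · rintro ⟨h1, h2⟩
    constructor
    · have := hp' _ (inv_mem hp) _ h1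
      simpa using this
    · have := hq' _ hq _ h2
      simpa using this

theorem posM_cum {r s : ℕ} (ε : Fin n → Fin r) (ε' : Fin n → Fin s) (w : Equiv.Perm (Fin n))
    (i : Fin r) (j : Fin s) :
    let N : ℕ → ℕ → ℕ := fun i j =>
      (Finset.univ.filter (fun x => (ε x : ℕ) < i ∧ (ε' (w⁻¹ x) : ℕ) < j)).card
    posM ε ε' w j i + N i (j + 1) + N (i + 1) j = N (i + 1) (j + 1) + N i j := by
  intro N
  simp only [N, posM, Finset.card_filter, ← Finset.sum_add_distrib]
  apply Finset.sum_congr rfl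
  intro x _
  simp only [Fin.ext_iff]
  generalize (ε x : ℕ) = a
  generalize (ε' (w⁻¹ x) : ℕ) = b
  split_ifs <;> omega

theorem gram {r s : ℕ} (α : Fin r → ℕ) (μ : Fin s → ℕ) (hα : ∑ i, α i = n) (hμ : ∑ i, μ i = n) :
    Nat.card (MulAction.orbitRel.Quotient (parab n r α : Subgroup (GL (Fin n) F))
      (GL (Fin n) F ⧸ (parab n s μ : Subgroup (GL (Fin n) F)))) = Ncard α μ := by
  classical
  obtain ⟨ε, hε⟩ := exists_blk α hα
  obtain ⟨ε', hε'⟩ := exists_blk μ hμ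
  unfold Ncard
  refine card_eq_of_surj (X := Equiv.Perm (Fin n))
    (fun w => Quotient.mk'' (QuotientGroup.mk (pm w)))
    (fun w => ⟨posM ε ε' w, fun j => by rw [posM_row, hε'.2], fun i => by rw [posM_col, hε.2]⟩)
    ?_ ?_ ?_
  · -- surjective onto double cosets
    intro y
    induction y using Quotient.inductionOn' with
    | h y =>
    obtain ⟨g, rfl⟩ := QuotientGroup.mk_surjective y
    obtain ⟨b₁, hb1, σ, b₂, hb2, rfl⟩ := bruhat g
    refine ⟨σ, ?_⟩
    rw [Quotient.eq'']
    rw [MulAction.orbitRel_apply, MulAction.mem_orbit_iff]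
    refine ⟨⟨b₁⁻¹, inv_mem (Bor_le_parab α hb1)⟩, ?_⟩
    change (b₁⁻¹ • ((b₁ * pm σ * b₂ : GL (Fin n) F) :
      GL (Fin n) F ⧸ (parab n s μ : Subgroup (GL (Fin n) F)))) = _
    rw [MulAction.Quotient.smul_coe, QuotientGroup.eq, smul_eq_mul]
    have : (b₁⁻¹ * (b₁ * pm σ * b₂))⁻¹ * pm σ = b₂⁻¹ := by group
    rw [this]
    exact inv_mem (Bor_le_parab μ hb2)
  · -- surjective onto matrices
    rintro ⟨A, hA1, hA2⟩
    let X := (ji : Fin s × Fin r) × Fin (A ji.1 ji.2)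
    have hc1 : ∀ i, Fintype.card {t : X // t.1.2 = i} = Fintype.card {x // ε x = i} := by
      intro i
      rw [hε.2, ← hA2 i]
      have e : {t : X // t.1.2 = i} ≃ (j : Fin s) × Fin (A j i) :=
        { toFun := fun t => ⟨t.1.1.1, Fin.cast (by rw [t.2]) t.1.2⟩
          invFun := fun t => ⟨⟨(t.1, i), t.2⟩, rfl⟩
          left_inv := by rintro ⟨⟨⟨j, i⟩, k⟩, rfl⟩; rfl
          right_inv := by rintro ⟨j, k⟩; rfl }
      rw [Fintype.card_congr e]
      simp
    have hc2 : ∀ j, Fintype.card {t : X // t.1.1 = j} = Fintype.card {x // ε' x = j} := by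
      intro j
      rw [hε'.2, ← hA1 j]
      have e : {t : X // t.1.1 = j} ≃ (i : Fin r) × Fin (A j i) :=
        { toFun := fun t => ⟨t.1.1.2, Fin.cast (by rw [t.2]) t.1.2⟩
          invFun := fun t => ⟨⟨(j, t.1), t.2⟩, rfl⟩
          left_inv := by rintro ⟨⟨⟨j, i⟩, k⟩, rfl⟩; rfl
          right_inv := by rintro ⟨j, k⟩; rfl }
      rw [Fintype.card_congr e]
      simp
    obtain ⟨e, he⟩ := exists_fiber_equiv (fun t : X => t.1.2) ε hc1
    obtain ⟨e', he'⟩ := exists_fiber_equiv (fun t : X => t.1.1) ε' hc2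
    refine ⟨e'.symm.trans e, ?_⟩
    apply Subtype.ext
    ext j i
    change posM ε ε' (e'.symm.trans e) j i = A j i
    unfold posM
    have h1 : ∀ x, ε x = (e.symm x).1.2 := fun x => by rw [← he, Equiv.apply_symm_apply]
    have h2 : ∀ x, ε' ((e'.symm.trans e : Equiv.Perm (Fin n))⁻¹ x) = (e.symm x).1.1 := fun x => by
      rw [← he']; rfl
    simp only [h1, h2]
    rw [← Fintype.card_subtype]
    have e3 : {x : Fin n // (e.symm x).1.2 = i ∧ (e.symm x).1.1 = j} ≃ Fin (A j i) :=
      (Equiv.subtypeEquiv e.symm (q := fun t : X => t.1 = (j, i)) (fun x => by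
        rw [Prod.ext_iff]; exact and_comm)).trans (Equiv.sigmaSubtype (j, i))
    rw [Fintype.card_congr e3, Fintype.card_fin]
  · intro w w'
    rw [Subtype.mk.injEq, Quotient.eq'', MulAction.orbitRel_apply, MulAction.mem_orbit_iff]
    constructor
    · rintro ⟨⟨p, hp⟩, h⟩
      change (p • ((pm w' : GL (Fin n) F) :
        GL (Fin n) F ⧸ (parab n s μ : Subgroup (GL (Fin n) F)))) = _ at h
      rw [MulAction.Quotient.smul_coe, QuotientGroup.eq, smul_eq_mul] at h
      have hc := cum_eq α μ ε ε' hε hε' w' w p _ hp h (by group)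
      ext j i
      have k1 := posM_cum ε ε' w i j
      have k2 := posM_cum ε ε' w' i j
      simp only [hc] at k1 k2
      omega
    · intro h
      obtain ⟨π, hπ⟩ := exists_fiber_equiv (fun x => (ε x, ε' (w⁻¹ x))) (fun x => (ε x, ε' (w'⁻¹ x)))
        (by
          rintro ⟨i, j⟩
          have := congrFun (congrFun h j) i
          simp only [posM] at this
          simp only [Prod.mk.injEq, Fintype.card_subtype]
          exact this)
      simp only [Prod.mk.injEq] at hπ
      have hpp : ∀ {t : ℕ} (γ : Fin t → ℕ) (η : Fin n → Fin t) (hη : IsBlk γ η)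
          (τ : Equiv.Perm (Fin n)), (∀ x, η (τ x) = η x) → (pm τ : GL (Fin n) F) ∈ parab n t γ := by
        intro t γ η hη τ hτ
        rw [mem_parab γ η hη]
        intro x y hxy
        rw [pm_apply, if_neg]
        rintro rfl
        rw [hτ] at hxy
        exact lt_irrefl _ hxy
      refine ⟨⟨pm π⁻¹, hpp α ε hε _ (fun x => by
        rw [← (hπ (π⁻¹ x)).1]; simp)⟩, ?_⟩
      change ((pm π⁻¹ : GL (Fin n) F) • ((pm w' : GL (Fin n) F) :
        GL (Fin n) F ⧸ (parab n s μ : Subgroup (GL (Fin n) F)))) = _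
      rw [MulAction.Quotient.smul_coe, QuotientGroup.eq, smul_eq_mul, ← pm_mul, pm_inv, ← pm_mul]
      apply hpp μ ε' hε'
      intro x
      have := (hπ (w x)).2
      simpa using this

theorem ip_parab {r s : ℕ} (α : Fin r → ℕ) (μ : Fin s → ℕ) (hα : ∑ i, α i = n)
    (hμ : ∑ i, μ i = n) :
    ip (chP (parab n r α : Subgroup (GL (Fin n) F))) (chP (parab n s μ)) = Ncard α μ := by
  rw [ip_symm, ip_chP_chP, gram α μ hα hμ]

theorem chP_perm {r : ℕ} (α : Fin r → ℕ) (hα : ∑ i, α i = n) (σ : Equiv.Perm (Fin r)) :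
    chP (parab n r (α ∘ σ) : Subgroup (GL (Fin n) F)) = chP (parab n r α) := by
  have hσ : ∑ i, (α ∘ σ) i = n := by rw [← hα]; exact Equiv.sum_comp σ α
  have hi : ∀ (P : Subgroup (GL (Fin n) F)) x, chP P x⁻¹ = (starRingEnd ℂ) (chP P x) := by
    intro P x; rw [chP_inv, chP_real]
  have hs : ip (chP (parab n r α : Subgroup (GL (Fin n) F))) (chP (parab n r (α ∘ σ))) =
      Ncard α α := by
    rw [ip_symm, ip_parab _ _ hσ hα, Ncard_perm]
  apply eq_of_ip _ _ (hi _) (hi _) (Ncard α α)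
  · rw [ip_parab _ _ hσ hσ, Ncard_perm, ← ip_parab (F := F) _ _ hα hσ, hs]
  · rw [ip_symm, hs]
  · rw [ip_parab _ _ hα hα]

end Gram2

section Assembly

variable {n : ℕ}

theorem psum_castSucc {l : ℕ} (b : Fin (l + 1) → ℕ) (h : b (Fin.last l) = 0) (j : ℕ) :
    psum (l + 1) b j = psum l (fun i => b i.castSucc) j := by
  unfold psum
  rw [Finset.sum_filter, Finset.sum_filter, Fin.sum_univ_castSucc, h]
  simp

theorem drop_zeros {l : ℕ} (b : Fin l → ℕ) (hb : Antitone b) :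
    ∃ (r : ℕ) (d' : Fin r → ℕ), Antitone d' ∧ (∀ i, 0 < d' i) ∧ (∑ i, d' i = ∑ i, b i) ∧
      ∀ j, psum r d' j = psum l b j := by
  induction l with
  | zero => exact ⟨0, b, hb, fun i => i.elim0, rfl, fun _ => rfl⟩
  | succ l ih =>
    by_cases h : b (Fin.last l) = 0
    · obtain ⟨r, d', h1, h2, h3, h4⟩ := ih (fun i => b i.castSucc)
        (fun i j hij => hb (by simpa using hij))
      refine ⟨r, d', h1, h2, ?_, fun j => ?_⟩
      · rw [h3, Fin.sum_univ_castSucc, h, add_zero]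
      · rw [h4, psum_castSucc b h]
    · refine ⟨l + 1, b, hb, fun i => ?_, rfl, fun _ => rfl⟩
      have := hb (Fin.le_last i)
      omega

theorem aw_sum {l : ℕ} (d : Fin l → ℕ) (w : Equiv.Perm (Fin l)) (hw : okw d w) :
    ∑ i, aw d w i = ∑ i, d i := by
  have e : ∀ i, (aw d w i : ℤ) = (d i : ℤ) + dl i - dl (w i) := fun i =>
    Int.toNat_of_nonneg (hw i)
  have : (∑ i, (aw d w i : ℤ)) = ∑ i, (d i : ℤ) := by
    simp only [e]
    rw [Finset.sum_sub_distrib, Finset.sum_add_distrib, Equiv.sum_comp w dl]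
    ring
  exact_mod_cast this

theorem okw_one {l : ℕ} (d : Fin l → ℕ) : okw d 1 := by
  intro i; simp

theorem exists_antitone_perm {l : ℕ} (a : Fin l → ℕ) : ∃ σ : Equiv.Perm (Fin l), Antitone (a ∘ σ) := by
  have := Tuple.monotone_sort (fun i => OrderDual.toDual (a i))
  exact ⟨_, fun i j h => this h⟩

variable {W : Type} [AddCommGroup W] [Module ℂ W] [FiniteDimensional ℂ W]

theorem fix_formula {l : ℕ} (d : Fin l → ℕ) (hd : Antitone d) (hsum : ∑ i, d i = n)
    (ν : Representation ℂ (GL (Fin n) F) W) (hν : IsIrred ν)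
    (h1 : Module.finrank ℂ (fixS ν (parab n l d)) = 1)
    (hdom : ∀ (l' : ℕ) (d' : Fin l' → ℕ),
      (∀ i j : Fin l', i ≤ j → d' j ≤ d' i) → (∀ i, 0 < d' i) →
      (∑ i, d' i = n) →
      (∀ j : ℕ, psum l d j ≤ psum l' d' j) →
      (∃ j : ℕ, psum l d j ≠ psum l' d' j) →
      interSub ν (indTriv (parab n l' d')) = ⊥) :
    ∃ (S : Finset (Equiv.Perm (Fin l))), (∀ w, w ∈ S ↔ okw d w) ∧
    ∀ (s : ℕ) (μ : Fin s → ℕ), ∑ i, μ i = n →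
      (Module.finrank ℂ (fixS ν (parab n s μ)) : ℂ) =
      ((∑ w ∈ S, (Equiv.Perm.sign w : ℤ) * Ncard (aw d w) μ : ℤ) : ℂ) := by
  classical
  refine ⟨Finset.univ.filter (okw d), by simp, ?_⟩
  have hz : ∀ w, okw d w → w ≠ 1 → ip ν.character (chP (parab n l (aw d w))) = 0 := by
    intro w hw hw1
    obtain ⟨σ, hσ⟩ := exists_antitone_perm (aw d w)
    obtain ⟨r, d', g1, g2, g3, g4⟩ := drop_zeros _ hσ
    have hs : ∑ i, aw d w i = n := by rw [aw_sum d w hw, hsum]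
    have hpe : (parab n r d' : Subgroup (GL (Fin n) F)) = parab n l (aw d w ∘ σ) := by
      unfold parab; simp only [g4]
    have hle : ∀ j, psum l d j ≤ psum l (aw d w) j := by
      intro j
      have := aw_prefix d w hw j
      unfold psum
      exact_mod_cast this
    have hle2 : ∀ j, psum l (aw d w) j ≤ psum r d' j := by
      intro j
      rw [g4]
      exact sort_prefix _ σ hσ j
    have hb := hdom r d' (fun i j h => g1 h) g2
      (by rw [g3, ← hs]; exact Equiv.sum_comp σ (aw d w))
      (fun j => (hle j).trans (hle2 j)) (by
        obtain ⟨k, hk⟩ := aw_prefix_strict d w hw hw1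
        refine ⟨k, ?_⟩
        have h3 : psum l d k < psum l (aw d w) k := by
          unfold psum
          exact_mod_cast hk
        have := hle2 k
        omega)
    have hf := inter_bot_fix ν _ hb
    rw [← chP_perm (aw d w) hs σ, ← hpe, ip_char_chP, hf]
    simp
  set X : GL (Fin n) F → ℂ := ∑ w ∈ Finset.univ.filter (okw d),
    ((Equiv.Perm.sign w : ℤ) : ℂ) • chP (parab n l (aw d w)) with hX
  have hXip : ∀ (s : ℕ) (μ : Fin s → ℕ), ∑ i, μ i = n → ip X (chP (parab n s μ)) =
      ((∑ w ∈ Finset.univ.filter (okw d), (Equiv.Perm.sign w : ℤ) * Ncard (aw d w) μ : ℤ) : ℂ) := by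
    intro s μ hμ
    rw [hX, ip_sum_left]
    push_cast
    apply Finset.sum_congr rfl
    intro w hw
    rw [ip_parab _ _ _ hμ]
    rw [aw_sum d w (by simpa using hw), hsum]
  have hVX : ip X ν.character = 1 := by
    rw [hX, ip_sum_left, Finset.sum_eq_single 1]
    · rw [ip_symm, aw_one, ip_char_chP, h1]; simp
    · intro w hw hw1
      rw [ip_symm, hz w (by simpa using hw) hw1, mul_zero]
    · intro h; exact absurd (okw_one d) (by simpa using h)
  have hXX : ip X X = 1 := by
    conv_lhs => enter [1]; rw [hX]
    rw [ip_sum_left, Finset.sum_eq_single 1]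
    · rw [ip_symm, hXip _ _ (by rw [aw_sum d 1 (okw_one d), hsum]), norm_sum d hd 1 (okw_one d)]
      simp
    · intro w hw hw1
      have hw' : okw d w := by simpa using hw
      rw [ip_symm, hXip _ _ (by rw [aw_sum d w hw', hsum]), norm_sum d hd w hw', if_neg hw1]
      simp
    · intro h; exact absurd (okw_one d) (by simpa using h)
  have hXe : X = ν.character := by
    apply eq_of_ip _ _ _ _ 1 hXX hVX (ip_irred ν hν)
    · intro x
      rw [hX]
      simp only [Finset.sum_apply, Pi.smul_apply, map_sum, smul_eq_mul, map_mul, chP_inv, chP_real]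
      simp
    · exact fun x => char_inv_conj ν x
  intro s μ hμ
  rw [← ip_char_chP, ← hXe, hXip s μ hμ]

/-- permutation invariance of the fixed space dimension -/
theorem fix_perm {s : ℕ} (ν : Representation ℂ (GL (Fin n) F) W) (μ : Fin s → ℕ)
    (hμ : ∑ i, μ i = n) (σ : Equiv.Perm (Fin s)) :
    Module.finrank ℂ (fixS ν (parab n s (μ ∘ σ))) = Module.finrank ℂ (fixS ν (parab n s μ)) := by
  have : (Module.finrank ℂ (fixS ν (parab n s (μ ∘ σ))) : ℂ) =
      Module.finrank ℂ (fixS ν (parab n s μ)) := by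
    rw [← ip_char_chP, ← ip_char_chP, chP_perm μ hμ σ]
  exact_mod_cast this

/-- the composition `(1^j, m)` -/
def hook (j m : ℕ) : Fin (j + 1) → ℕ := fun i => if (i : ℕ) = j then m else 1

theorem hook_sum (j m : ℕ) : ∑ i, hook j m i = j + m := by
  rw [Fin.sum_univ_castSucc]
  have : ∀ i : Fin j, hook j m i.castSucc = 1 := by
    intro i; simp only [hook, Fin.val_castSucc]; rw [if_neg]; have := i.2; omega
  simp only [this]
  simp [hook]

theorem hook_vanish {l : ℕ} (hl : 0 < l) (d : Fin l → ℕ) (hd : Antitone d) (hsum : ∑ i, d i = n)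
    (ν : Representation ℂ (GL (Fin n) F) W) (hν : IsIrred ν)
    (h1 : Module.finrank ℂ (fixS ν (parab n l d)) = 1)
    (hdom : ∀ (l' : ℕ) (d' : Fin l' → ℕ),
      (∀ i j : Fin l', i ≤ j → d' j ≤ d' i) → (∀ i, 0 < d' i) →
      (∑ i, d' i = n) →
      (∀ j : ℕ, psum l d j ≤ psum l' d' j) →
      (∃ j : ℕ, psum l d j ≠ psum l' d' j) →
      interSub ν (indTriv (parab n l' d')) = ⊥) (j m : ℕ) (hm : d ⟨0, hl⟩ < m) (hjm : j + m = n) :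
    fixS ν (parab n (j + 1) (hook j m)) = ⊥ := by
  classical
  obtain ⟨S, hS, hf⟩ := fix_formula d hd hsum ν hν h1 hdom
  have hS' : S = Finset.univ.filter (okw d) := by ext w; simp [hS]
  have hsm : ∑ i, hook j m i = n := by rw [hook_sum, hjm]
  let σ : Equiv.Perm (Fin (j + 1)) := Equiv.swap 0 (Fin.last j)
  have h2 : ∑ i, (hook j m ∘ σ) i = n := by rw [← hsm]; exact Equiv.sum_comp σ _
  have h3 := hf _ (hook j m ∘ σ) h2
  rw [hS', vanish_sum hl d hd (hook j m ∘ σ) (by simpa [σ, hook] using hm), fix_perm ν _ hsm] at h3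
  have h4 : Module.finrank ℂ (fixS ν (parab n (j + 1) (hook j m))) = 0 := by exact_mod_cast h3
  exact Submodule.finrank_eq_zero.1 h4

theorem fixed_part {l : ℕ} (hl : 0 < l) (d : Fin l → ℕ) (hsum : ∑ i, d i = n)
    (ν : Representation ℂ (GL (Fin n) F) W)
    (h1 : Module.finrank ℂ (fixS ν (parab n l d)) = 1) :
    HasFixedVec ν (Hsub n (n - d ⟨0, hl⟩)) := by
  obtain ⟨l, rfl⟩ : ∃ l', l = l' + 1 := ⟨l - 1, by omega⟩
  set σ : Equiv.Perm (Fin (l + 1)) := Equiv.swap 0 (Fin.last l) with hσ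
  have h2 := fix_perm ν d hsum σ
  rw [h1] at h2
  have h3 : fixS ν (parab n (l + 1) (d ∘ σ)) ≠ ⊥ := by
    intro h; rw [h] at h2; simp at h2
  obtain ⟨v, hv, hv0⟩ := Submodule.exists_mem_ne_zero_of_ne_bot h3
  rw [mem_fixS] at hv
  refine ⟨v, hv0, fun h hh => hv h ?_⟩
  have h4 : ∑ i, (d ∘ σ) i = n := by rw [← hsum]; exact Equiv.sum_comp σ _
  have h5 : (d ∘ σ) (Fin.last l) = d ⟨0, hl⟩ := by simp [hσ]
  have hk : psum (l + 1) (d ∘ σ) l + d ⟨0, hl⟩ = n := by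
    rw [← h5, ← h4]
    have := psum_succ (d ∘ σ) (Fin.last l)
    simp only [Fin.val_last] at this
    rw [← this]
    unfold psum
    rw [Finset.filter_true_of_mem]
    intro i _; exact i.2
  unfold parab
  rw [Subgroup.mem_iInf]
  intro j
  rw [mem_stabE_Esub]
  intro x y hx hy
  have hcol : ∀ y : Fin n, (y : ℕ) < n - d ⟨0, hl⟩ → h.val x y = if x = y then 1 else 0 := by
    intro y hy
    have := congrFun (hh (Pi.single y 1) (by
      intro i hi
      rw [Pi.single_apply, if_neg]
      rintro rfl
      omega)) x
    simpa [Pi.single_apply] using this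
  by_cases hj : j ≤ l
  · have := psum_mono (d ∘ σ) hj
    rw [hcol y (by omega), if_neg]
    rintro rfl
    omega
  · have := psum_mono (d ∘ σ) (show l + 1 ≤ j by omega)
    have h6 := psum_succ (d ∘ σ) (Fin.last l)
    simp only [Fin.val_last] at h6
    have := x.2
    omega

end Assembly

section Eigen

variable {n : ℕ}
variable {W : Type} [AddCommGroup W] [Module ℂ W] [FiniteDimensional ℂ W]

theorem mem_Hsub (j : ℕ) (g : GL (Fin n) F) : g ∈ (Hsub n j : Subgroup (GL (Fin n) F)) ↔
    ∀ x y : Fin n, (y : ℕ) < j → g.val x y = if x = y then 1 else 0 := by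
  constructor
  · intro hh x y hy
    have := congrFun (hh (Pi.single y 1) (by
      intro i hi
      rw [Pi.single_apply, if_neg]
      rintro rfl
      omega)) x
    simpa [Pi.single_apply] using this
  · intro h v hv
    ext x
    have : ∀ y, g.val x y * v y = if x = y then v y else 0 := by
      intro y
      by_cases hy : (y : ℕ) < j
      · rw [h x y hy]; simp
      · rw [hv y (by omega)]; simp
    simp only [Matrix.mulVec, dotProduct, this]
    simp

theorem hook_psum (j m i : ℕ) (hi : i ≤ j) : psum (j + 1) (hook j m) i = i := by
  induction i with
  | zero => simp [psum]
  | succ i ih =>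
    have := psum_succ (hook j m) ⟨i, by omega⟩
    simp only at this
    rw [this, ih (by omega)]
    simp only [hook]
    rw [if_neg (by omega)]

theorem exists_ne_of_irred (ν : Representation ℂ (GL (Fin n) F) W) (hν : IsIrred ν)
    (lam : W →ₗ[ℂ] ℂ) (hl : lam ≠ 0) (v : W) (hv : v ≠ 0) : ∃ g, lam (ν g⁻¹ v) ≠ 0 := by
  by_contra hc
  push Not at hc
  let p : Submodule ℂ W := ⨅ g : GL (Fin n) F, LinearMap.ker (lam ∘ₗ (ν g⁻¹))
  have hp : ∀ w, w ∈ p ↔ ∀ g : GL (Fin n) F, lam (ν g⁻¹ w) = 0 := by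
    intro w; simp [p, Submodule.mem_iInf]
  rcases hν.2 p (by
    intro g w hw
    rw [hp] at hw ⊢
    intro g'
    have := hw (g⁻¹ * g')
    rw [_root_.mul_inv_rev, inv_inv, map_mul] at this
    exact this) with h | h
  · have : v ∈ p := (hp v).2 hc
    rw [h, Submodule.mem_bot] at this
    exact hv this
  · apply hl
    ext w
    have : w ∈ p := by rw [h]; exact Submodule.mem_top
    have := (hp w).1 this 1
    simpa using this

/-- rearrangement for one swap -/
theorem swap_gain (τ : Equiv.Perm (Fin n)) (a b : Fin n) (hab : a < b) (h : τ b < τ a) :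
    ∑ i : Fin n, ((i : ℕ) : ℤ) * ((τ i : ℕ) : ℤ) <
      ∑ i : Fin n, ((i : ℕ) : ℤ) * ((τ (Equiv.swap a b i) : ℕ) : ℤ) := by
  have e : ∑ i : Fin n, ((i : ℕ) : ℤ) * ((τ (Equiv.swap a b i) : ℕ) : ℤ) =
      ∑ i : Fin n, ((Equiv.swap a b i : ℕ) : ℤ) * ((τ i : ℕ) : ℤ) := by
    rw [← Equiv.sum_comp (Equiv.swap a b)]
    simp
  rw [e, ← sub_pos, ← Finset.sum_sub_distrib, Finset.sum_eq_add a b hab.ne]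
  · simp only [Equiv.swap_apply_left, Equiv.swap_apply_right]
    have h1 : (0 : ℤ) < (b : ℕ) - (a : ℕ) := by rw [Fin.lt_def] at hab; omega
    have h2 : (0 : ℤ) < (τ a : ℕ) - (τ b : ℕ) := by rw [Fin.lt_def] at h; omega
    nlinarith [mul_pos h1 h2]
  · rintro c - ⟨h1, h2⟩
    rw [Equiv.swap_apply_of_ne_of_ne h1 h2, sub_self]
  · simp
  · simp

/-- choice of a sorted permutation -/
theorem exists_sorted (ν : Representation ℂ (GL (Fin n) F) W)
    (lam : W →ₗ[ℂ] ℂ) (hB : ∀ b ∈ (Bor : Subgroup (GL (Fin n) F)), ∀ w, lam (ν b w) = lam w)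
    (v : W) (hg : ∃ g, lam (ν g⁻¹ v) ≠ 0) (j : ℕ) :
    ∃ p ∈ stabE (Esub (F := F) n j), ∃ σ : Equiv.Perm (Fin n),
      lam (ν (pm σ)⁻¹ (ν p⁻¹ v)) ≠ 0 ∧
      ∀ a b : Fin n, a < b → ((b : ℕ) < j ∨ j ≤ (a : ℕ)) → σ⁻¹ a < σ⁻¹ b := by
  classical
  let T : Finset (Equiv.Perm (Fin n)) := Finset.univ.filter (fun σ =>
    ∃ p ∈ stabE (Esub (F := F) n j), lam (ν (pm σ)⁻¹ (ν p⁻¹ v)) ≠ 0)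
  have hT : T.Nonempty := by
    obtain ⟨g, hg⟩ := hg
    obtain ⟨b₁, hb1, σ, b₂, hb2, rfl⟩ := bruhat g
    refine ⟨σ, Finset.mem_filter.2 ⟨Finset.mem_univ _, b₁, ?_, ?_⟩⟩
    · unfold Bor at hb1
      rw [Subgroup.mem_iInf] at hb1
      exact hb1 j
    · rw [_root_.mul_inv_rev, _root_.mul_inv_rev, map_mul, map_mul] at hg
      have := hB _ (inv_mem hb2) (ν (pm σ)⁻¹ (ν b₁⁻¹ v))
      rw [← this]
      exact hg
  obtain ⟨σ, hσ, hmax⟩ := T.exists_max_image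
    (fun σ => ∑ i : Fin n, ((i : ℕ) : ℤ) * ((σ⁻¹ i : ℕ) : ℤ)) hT
  obtain ⟨-, p, hp, hne⟩ := Finset.mem_filter.1 hσ
  refine ⟨p, hp, σ, hne, ?_⟩
  intro a b hab hj
  by_contra hc
  have hlt : σ⁻¹ b < σ⁻¹ a := by
    rcases lt_or_eq_of_le (not_lt.1 hc) with h | h
    · exact h
    · exact absurd (σ⁻¹.injective h) hab.ne'
  have hm : Equiv.swap a b * σ ∈ T := by
    refine Finset.mem_filter.2 ⟨Finset.mem_univ _, p * pm (Equiv.swap a b), mul_mem hp ?_, ?_⟩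
    · rw [mem_stabE_Esub]
      intro x y hx hy
      rw [pm_apply, if_neg]
      rintro rfl
      rw [Fin.lt_def] at hab
      by_cases h1 : y = a
      · subst h1; rw [Equiv.swap_apply_left] at hx; omega
      · by_cases h2 : y = b
        · subst h2; rw [Equiv.swap_apply_right] at hx; omega
        · rw [Equiv.swap_apply_of_ne_of_ne h1 h2] at hx; omega
    · have : ν (pm (Equiv.swap a b * σ))⁻¹ (ν (p * pm (Equiv.swap a b))⁻¹ v) =
          ν (pm σ)⁻¹ (ν p⁻¹ v) := by
        rw [← Module.End.mul_apply, ← Module.End.mul_apply, ← map_mul, ← map_mul, pm_mul]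
        have hs : (pm (Equiv.swap a b) : GL (Fin n) F)⁻¹ = pm (Equiv.swap a b) := by
          rw [pm_inv, Equiv.swap_inv]
        have e : ((pm (Equiv.swap a b) * pm σ)⁻¹ * (p * pm (Equiv.swap a b))⁻¹ : GL (Fin n) F) =
            (pm σ)⁻¹ * p⁻¹ := by
          rw [_root_.mul_inv_rev, _root_.mul_inv_rev]
          nth_rewrite 2 [hs]
          group
        rw [e]
      rw [this]; exact hne
  have := hmax _ hm
  have hs := swap_gain σ⁻¹ a b hab hlt
  have e : (Equiv.swap a b * σ)⁻¹ = σ⁻¹ * Equiv.swap a b := by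
    rw [_root_.mul_inv_rev, Equiv.swap_inv]
  rw [e] at this
  simp only [Equiv.Perm.mul_apply] at this
  omega

/-- transvections as group elements -/
def tv (a b : Fin n) (h : a ≠ b) (t : F) : GL (Fin n) F where
  val := Matrix.transvection a b t
  inv := Matrix.transvection a b (-t)
  val_inv := by rw [Matrix.transvection_mul_transvection_same _ _ h]; simp
  inv_val := by rw [Matrix.transvection_mul_transvection_same _ _ h]; simp

theorem tv_apply (a b : Fin n) (h : a ≠ b) (t : F) (x y : Fin n) :
    (tv a b h t).val x y = (if x = y then 1 else 0) + if a = x ∧ b = y then t else 0 := by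
  change (Matrix.transvection a b t) x y = _
  simp [Matrix.transvection, Matrix.one_apply, Matrix.single_apply]

theorem tv_mem_H (a b : Fin n) (h : a ≠ b) (t : F) (j : ℕ) (hb : j ≤ (b : ℕ)) :
    tv a b h t ∈ (Hsub n j : Subgroup (GL (Fin n) F)) := by
  rw [mem_Hsub]
  intro x y hy
  rw [tv_apply]
  rw [if_neg (c := a = x ∧ b = y)]
  · simp
  · rintro ⟨-, rfl⟩; omega

/-- conjugating by a permutation matrix -/
theorem conj_pm_apply (σ : Equiv.Perm (Fin n)) (g : GL (Fin n) F) (x y : Fin n) :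
    ((pm σ)⁻¹ * g * pm σ : GL (Fin n) F).val x y = g.val (σ x) (σ y) := by
  rw [Units.val_mul, mul_pm_apply, Units.val_mul, pm_inv, pm_mul_apply, inv_inv]

end Eigen

section Gen

variable {j m : ℕ}

theorem H_gen (K : Subgroup (GL (Fin (j + m)) F))
    (htv : ∀ (a b : Fin (j + m)) (h : a ≠ b) (t : F), j ≤ (b : ℕ) → tv a b h t ∈ K)
    (hdiag : ∀ g : GL (Fin (j + m)) F, g ∈ Hsub (F := F) (j + m) j →
      (∀ x y, x ≠ y → g.val x y = 0) → g ∈ K) :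
    Hsub (j + m) j ≤ K := by
  classical
  let e : Fin j ⊕ Fin m ≃ Fin (j + m) := finSumFinEquiv
  let InK : Matrix (Fin j ⊕ Fin m) (Fin j ⊕ Fin m) F → Prop := fun M =>
    ∀ g : GL (Fin (j + m)) F, g.val = M.submatrix e.symm e.symm → g ∈ K
  have hmul : ∀ A B, det A ≠ 0 → det B ≠ 0 → InK A → InK B → InK (A * B) := by
    intro A B hA hB hAK hBK g hg
    let gA : GL (Fin (j + m)) F := Matrix.GeneralLinearGroup.mkOfDetNeZero
      (A.submatrix e.symm e.symm) (by rw [Matrix.det_submatrix_equiv_self]; exact hA)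
    let gB : GL (Fin (j + m)) F := Matrix.GeneralLinearGroup.mkOfDetNeZero
      (B.submatrix e.symm e.symm) (by rw [Matrix.det_submatrix_equiv_self]; exact hB)
    have : g = gA * gB := by
      apply Units.ext
      rw [hg, Units.val_mul]
      exact (Matrix.submatrix_mul_equiv A B e.symm e.symm e.symm).symm
    rw [this]
    exact mul_mem (hAK gA rfl) (hBK gB rfl)
  have hA : ∀ A : Matrix (Fin m) (Fin m) F, det A ≠ 0 → InK (fromBlocks 1 0 0 A) := by
    intro A hA
    refine Matrix.diagonal_transvection_induction_of_det_ne_zero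
      (fun A => InK (fromBlocks 1 0 0 A)) A hA ?_ ?_ ?_
    · intro D _ g hg
      apply hdiag
      · rw [mem_Hsub]
        intro x y hy
        rw [hg]
        induction y using Fin.addCases with
        | left y =>
          induction x using Fin.addCases with
          | left x => simp [e, Matrix.one_apply]
          | right x =>
            simp only [e, submatrix_apply, finSumFinEquiv_symm_apply_natAdd,
              finSumFinEquiv_symm_apply_castAdd, fromBlocks_apply₂₁, Matrix.zero_apply]
            rw [if_neg]
            intro h
            have := congrArg Fin.val h
            simp at this
            omega
        | right y => simp at hy
      · intro x y hxy
        rw [hg]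
        induction y using Fin.addCases with
        | left y =>
          induction x using Fin.addCases with
          | left x =>
            have : x ≠ y := by rintro rfl; exact hxy rfl
            simp [e, Matrix.one_apply, this]
          | right x => simp [e]
        | right y =>
          induction x using Fin.addCases with
          | left x => simp [e]
          | right x =>
            have : x ≠ y := by rintro rfl; exact hxy rfl
            simp [e, Matrix.diagonal_apply, this]
    · rintro ⟨a, b, hab, t⟩ g hg
      have hne : Fin.natAdd j a ≠ Fin.natAdd j b := by simpa using hab
      have : g = tv (Fin.natAdd j a) (Fin.natAdd j b) hne t := by
        apply Units.ext
        ext x y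
        rw [hg, tv_apply]
        induction y using Fin.addCases with
        | left y =>
          have h1 : Fin.natAdd j b ≠ Fin.castAdd m y := by
            intro h; have := congrArg Fin.val h; simp at this; omega
          induction x using Fin.addCases with
          | left x => simp [e, Matrix.one_apply, h1]
          | right x =>
            have h2 : Fin.natAdd j x ≠ Fin.castAdd m y := by
              intro h; have := congrArg Fin.val h; simp at this; omega
            simp [e, h1, h2]
        | right y =>
          induction x using Fin.addCases with
          | left x =>
            have h1 : Fin.natAdd j a ≠ Fin.castAdd m x := by
              intro h; have := congrArg Fin.val h; simp at this; omega
            have h2 : Fin.castAdd m x ≠ Fin.natAdd j y := by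
              intro h; have := congrArg Fin.val h; simp at this; omega
            simp [e, h1, h2]
          | right x =>
            simp [e, TransvectionStruct.toMatrix, Matrix.transvection, Matrix.one_apply,
              Matrix.single_apply]
      rw [this]
      exact htv _ _ _ _ (by simp)
    · intro A B hA hB h1 h2
      have := hmul _ _ (by simpa using hA) (by simpa using hB) h1 h2
      simpa [fromBlocks_multiply] using this
  have hU : ∀ u : Matrix (Fin j) (Fin m) F, InK (fromBlocks 1 u 0 1) := by
    intro u
    refine Matrix.induction_on' (P := fun u => InK (fromBlocks 1 u 0 1)) u ?_ ?_ ?_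
    · exact hA 1 (by simp)
    · intro p q hp hq
      have := hmul _ _ (by simp) (by simp) hp hq
      simpa [fromBlocks_multiply, add_comm] using this
    · intro a b t g hg
      have hne : Fin.castAdd m a ≠ Fin.natAdd j b := by
        intro h; have := congrArg Fin.val h; simp at this; omega
      have : g = tv (Fin.castAdd m a) (Fin.natAdd j b) hne t := by
        apply Units.ext
        ext x y
        rw [hg, tv_apply]
        induction y using Fin.addCases with
        | left y =>
          have h1 : Fin.natAdd j b ≠ Fin.castAdd m y := by
            intro h; have := congrArg Fin.val h; simp at this; omega
          induction x using Fin.addCases with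
          | left x => simp [e, Matrix.one_apply, h1]
          | right x =>
            have h2 : Fin.natAdd j x ≠ Fin.castAdd m y := by
              intro h; have := congrArg Fin.val h; simp at this; omega
            simp [e, h1, h2]
        | right y =>
          induction x using Fin.addCases with
          | left x =>
            have h2 : Fin.castAdd m x ≠ Fin.natAdd j y := by
              intro h; have := congrArg Fin.val h; simp at this; omega
            simp [e, h2, Matrix.single_apply]
          | right x =>
            have h1 : Fin.castAdd m a ≠ Fin.natAdd j x := by
              intro h; have := congrArg Fin.val h; simp at this; omega
            simp [e, Matrix.one_apply, h1]
      rw [this]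
      exact htv _ _ _ _ (by simp)
  intro g hg
  rw [mem_Hsub] at hg
  let M := g.val.submatrix e e
  have hM : M = fromBlocks 1 M.toBlocks₁₂ 0 M.toBlocks₂₂ := by
    conv_lhs => rw [← fromBlocks_toBlocks M]
    congr 1
    · ext x y
      have := hg (Fin.castAdd m x) (Fin.castAdd m y) (by simp)
      simpa [M, e, toBlocks₁₁, Matrix.one_apply] using this
    · ext x y
      have := hg (Fin.natAdd j x) (Fin.castAdd m y) (by simp)
      rw [if_neg (by intro h; have := congrArg Fin.val h; simp at this; omega)] at this
      simpa [M, e, toBlocks₂₁] using this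
  have hdet : det M ≠ 0 := by
    change det (g.val.submatrix e e) ≠ 0
    rw [Matrix.det_submatrix_equiv_self]
    exact Matrix.GeneralLinearGroup.det_ne_zero g
  have hd2 : det M.toBlocks₂₂ ≠ 0 := by
    rw [hM] at hdet
    simpa using hdet
  have hfin : InK M := by
    have := hmul _ _ (by simpa using hd2) (by simp) (hA _ hd2) (hU M.toBlocks₁₂)
    rw [hM]
    simpa [fromBlocks_multiply] using this
  apply hfin
  ext x y
  simp [M]

end Gen

section EigenMain

variable {W : Type} [AddCommGroup W] [Module ℂ W] [FiniteDimensional ℂ W]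

theorem tv_comm {n : ℕ} (a b c : Fin n) (hab : a ≠ b) (hac : a ≠ c) (hcb : c ≠ b) (t : F) :
    tv a b hab t * (tv c b hcb 1 * tv a c hac t) = tv a c hac t * tv c b hcb 1 := by
  apply Units.ext
  simp only [Units.val_mul]
  change Matrix.transvection a b t * (Matrix.transvection c b 1 * Matrix.transvection a c t) =
    Matrix.transvection a c t * Matrix.transvection c b 1
  simp only [Matrix.transvection, mul_add, add_mul, one_mul, mul_one,
    Matrix.single_mul_single_same, Matrix.single_mul_single_of_ne _ _ _ _ hcb.symm,
    Matrix.single_mul_single_of_ne _ _ _ _ hab.symm]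
  simp
  abel

/-- the fixator of a vector -/
def fixator {G : Type} [Group G] (ν : Representation ℂ G W) (v : W) : Subgroup G where
  carrier := {g | ν g v = v}
  one_mem' := by simp
  mul_mem' := by
    intro a b ha hb
    change ν (a * b) v = v
    rw [map_mul, Module.End.mul_apply]
    rw [show ν b v = v from hb]; exact ha
  inv_mem' := by
    intro a ha
    change ν a⁻¹ v = v
    conv_lhs => rw [← show ν a v = v from ha]
    rw [← Module.End.mul_apply, ← map_mul]
    simp

theorem eig_part {j m : ℕ} (hm : 2 ≤ m) (ν : Representation ℂ (GL (Fin (j + m)) F) W)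
    (hν : IsIrred ν) (lam : W →ₗ[ℂ] ℂ) (hlam : lam ≠ 0)
    (hB : ∀ b ∈ (Bor : Subgroup (GL (Fin (j + m)) F)), ∀ w, lam (ν b w) = lam w)
    (hE : HasEigenVec ν (Hsub (j + m) j)) :
    fixS ν (parab (j + m) (j + 1) (hook j m)) ≠ ⊥ := by
  classical
  obtain ⟨c, v, hv, hcv⟩ := hE
  obtain ⟨p, hp, σ, hne, hsort⟩ := exists_sorted ν lam hB v (exists_ne_of_irred ν hν lam hlam v hv) j
  set v' := ν p⁻¹ v with hv'
  have hmm : ∀ (a b : GL (Fin (j + m)) F) w, ν a (ν b w) = ν (a * b) w := by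
    intro a b w; rw [map_mul]; rfl
  have hv0 : v' ≠ 0 := by
    intro h; rw [h] at hne; simp at hne
  have EV : ∀ h ∈ Hsub (F := F) (j + m) j, ∃ a : ℂ, ν h v' = a • v' := by
    intro h hh
    have hmem : p * h * p⁻¹ ∈ Hsub (F := F) (j + m) j := by
      intro w hw
      have hpi : (↑p⁻¹ : Matrix (Fin (j + m)) (Fin (j + m)) F) *ᵥ w ∈ Esub (F := F) (j + m) j :=
        (inv_mem hp : p⁻¹ ∈ stabE _) w hw
      rw [Units.val_mul, Units.val_mul, ← Matrix.mulVec_mulVec, ← Matrix.mulVec_mulVec,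
        hh _ hpi, Matrix.mulVec_mulVec, ← Units.val_mul, mul_inv_cancel]
      simp
    refine ⟨c ⟨_, hmem⟩, ?_⟩
    have := hcv ⟨_, hmem⟩
    simp only at this
    rw [hv', ← map_smul, ← this, hmm, hmm]
    congr 2
    group
  clear_value v'
  let K := fixator ν v'
  have K1 : ∀ h ∈ Hsub (F := F) (j + m) j, (pm σ)⁻¹ * h * pm σ ∈ (Bor : Subgroup (GL (Fin (j + m)) F)) →
      h ∈ K := by
    intro h hh hb
    obtain ⟨a, ha⟩ := EV h hh
    have h1 := hB _ hb (ν (pm σ)⁻¹ v')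
    rw [hmm, show (pm σ)⁻¹ * h * pm σ * (pm σ)⁻¹ = (pm σ)⁻¹ * h by group, ← hmm, ha, map_smul,
      map_smul, smul_eq_mul] at h1
    have : a = 1 := by
      apply mul_right_cancel₀ hne
      rw [h1, one_mul]
    change ν h v' = v'
    rw [ha, this, one_smul]
  have htv1 : ∀ (a b : Fin (j + m)) (h : a ≠ b) (t : F), j ≤ (a : ℕ) → a < b → tv a b h t ∈ K := by
    intro a b h t ha hab
    apply K1 _ (tv_mem_H _ _ _ _ _ (by rw [Fin.lt_def] at hab; omega))
    rw [mem_Bor]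
    intro x y hxy
    rw [conj_pm_apply, tv_apply, if_neg, if_neg, add_zero]
    · rintro ⟨h1, h2⟩
      have := hsort a b hab (Or.inr ha)
      rw [h1, h2] at this
      simp only [Equiv.Perm.inv_def, Equiv.symm_apply_apply] at this
      exact absurd this (not_lt.2 hxy.le)
    · intro h1
      exact hxy.ne' (σ.injective h1)
  have htv : ∀ (a b : Fin (j + m)) (h : a ≠ b) (t : F), j ≤ (b : ℕ) → tv a b h t ∈ K := by
    intro a b h t hb
    by_cases ha : j ≤ (a : ℕ)
    · rcases lt_or_gt_of_ne h with hab | hab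
      · exact htv1 a b h t ha hab
      · have e : (pm (Equiv.swap a b))⁻¹ * tv b a h.symm t * pm (Equiv.swap a b) = tv a b h t := by
          apply Units.ext
          ext x y
          rw [conj_pm_apply, tv_apply, tv_apply]
          congr 1
          · simp
          · congr 1
            apply propext
            constructor
            · rintro ⟨h1, h2⟩
              refine ⟨?_, ?_⟩
              · simpa using congrArg (Equiv.swap a b) h1
              · simpa using congrArg (Equiv.swap a b) h2
            · rintro ⟨h1, h2⟩
              subst h1 h2
              simp
        rw [← e]
        have hs : (pm (Equiv.swap a b) : GL (Fin (j + m)) F) ∈ Hsub (F := F) (j + m) j := by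
          rw [mem_Hsub]
          intro x y hy
          rw [pm_apply, Equiv.swap_apply_of_ne_of_ne]
          · rintro rfl; omega
          · rintro rfl; omega
        obtain ⟨s, hs'⟩ := EV _ hs
        have hk : ν (tv b a h.symm t) v' = v' := htv1 b a h.symm t hb hab
        change ν _ v' = v'
        rw [← hmm, ← hmm, hs', map_smul, hk, ← hs', hmm]
        simp
    · obtain ⟨c0, hc0, hcb⟩ : ∃ c0 : Fin (j + m), j ≤ (c0 : ℕ) ∧ c0 ≠ b := by
        by_cases hbj : (b : ℕ) = j
        · exact ⟨⟨j + 1, by omega⟩, by simp, by intro h; have := congrArg Fin.val h; simp at this; omega⟩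
        · exact ⟨⟨j, by omega⟩, by simp, by intro h; have := congrArg Fin.val h; simp at this; omega⟩
      have hac : a ≠ c0 := by rintro rfl; exact ha hc0
      have hh := tv_mem_H a c0 hac t j hc0
      have hk := tv_mem_H c0 b hcb (1 : F) j hb
      obtain ⟨s, hs⟩ := EV _ hh
      obtain ⟨r, hr⟩ := EV _ hk
      have e := tv_comm a b c0 h hac hcb t
      have e1 : ν (tv a b h t) (ν (tv c0 b hcb 1 * tv a c0 hac t) v') =
          ν (tv c0 b hcb 1 * tv a c0 hac t) v' := by
        rw [hmm, e, ← hmm, ← hmm, hr, hs, map_smul, map_smul, hr, hs, smul_comm]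
      have e2 : ν (tv c0 b hcb 1 * tv a c0 hac t) v' = (s * r) • v' := by
        rw [← hmm, hs, map_smul, hr, smul_smul]
      have hsr : s * r ≠ 0 := by
        intro h0
        rw [h0, zero_smul] at e2
        apply hv0
        have : ν (tv c0 b hcb 1 * tv a c0 hac t)⁻¹ (ν (tv c0 b hcb 1 * tv a c0 hac t) v') = v' := by
          rw [hmm, inv_mul_cancel]; simp
        rw [← this, e2, map_zero]
      rw [e2, map_smul] at e1
      exact smul_right_injective W hsr e1
  have hHK : Hsub (F := F) (j + m) j ≤ K := by
    apply H_gen K htv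
    intro g hg hd
    apply K1 g hg
    rw [mem_Bor]
    intro x y hxy
    rw [conj_pm_apply]
    apply hd
    intro h1
    exact hxy.ne' (σ.injective h1)
  have hP : ∀ q ∈ parab (F := F) (j + m) (j + 1) (hook j m),
      lam (ν (pm σ)⁻¹ (ν q v')) = lam (ν (pm σ)⁻¹ v') := by
    intro q hq
    unfold parab at hq
    rw [Subgroup.mem_iInf] at hq
    have hq0 : ∀ x y : Fin (j + m), y < x → (y : ℕ) < j → q.val x y = 0 := by
      intro x y hxy hy
      have := hq ((y : ℕ) + 1)
      rw [hook_psum _ _ _ (by omega), mem_stabE_Esub] at this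
      exact this x y hxy (by omega)
    let bM : Matrix (Fin (j + m)) (Fin (j + m)) F := fun x y =>
      if (y : ℕ) < j then q.val x y else if x = y then 1 else 0
    have hbq : ∀ w : Fin (j + m) → F, (∀ i : Fin (j + m), j ≤ (i : ℕ) → w i = 0) →
        bM *ᵥ w = q.val *ᵥ w := by
      intro w hw
      ext x
      simp only [Matrix.mulVec, dotProduct]
      apply Finset.sum_congr rfl
      intro y _
      by_cases hy : (y : ℕ) < j
      · simp [bM, hy]
      · rw [hw y (by omega)]; simp
    have hdet : bM.det ≠ 0 := by
      intro h0
      obtain ⟨w, hw, hbw⟩ := Matrix.exists_mulVec_eq_zero_iff.2 h0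
      have hw2 : ∀ i : Fin (j + m), j ≤ (i : ℕ) → w i = 0 := by
        intro x hx
        have h1 := congrFun hbw x
        simp only [Matrix.mulVec, dotProduct, Pi.zero_apply] at h1
        rw [Finset.sum_eq_single x] at h1
        · simpa [bM, not_lt.2 hx] using h1
        · intro y _ hyx
          by_cases hy : (y : ℕ) < j
          · simp only [bM, hy, if_true]
            rw [hq0 x y (by rw [Fin.lt_def]; omega) hy, zero_mul]
          · simp [bM, hy, hyx.symm]
        · simp
      apply hw
      have h2 := hbq w hw2
      rw [hbw] at h2
      have h3 : (↑q⁻¹ : Matrix (Fin (j + m)) (Fin (j + m)) F) *ᵥ (q.val *ᵥ w) = w := by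
        rw [Matrix.mulVec_mulVec, ← Units.val_mul, inv_mul_cancel]; simp
      rw [← h3, ← h2]; simp
    let b : GL (Fin (j + m)) F := Matrix.GeneralLinearGroup.mkOfDetNeZero bM hdet
    have hbv : b.val = bM := rfl
    have hbH : b⁻¹ * q ∈ Hsub (F := F) (j + m) j := by
      intro w hw
      rw [Units.val_mul, ← Matrix.mulVec_mulVec, ← hbq w hw, ← hbv, Matrix.mulVec_mulVec,
        ← Units.val_mul, inv_mul_cancel]
      simp
    have hbB : (pm σ)⁻¹ * b * pm σ ∈ (Bor : Subgroup (GL (Fin (j + m)) F)) := by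
      rw [mem_Bor]
      intro x y hxy
      rw [conj_pm_apply, hbv]
      by_cases hy : (σ y : ℕ) < j
      · simp only [bM, hy, if_true]
        apply hq0 _ _ _ hy
        by_contra hc
        rcases lt_or_eq_of_le (not_lt.1 hc) with h1 | h1
        · have := hsort _ _ h1 (Or.inl hy)
          simp only [Equiv.Perm.inv_def, Equiv.symm_apply_apply] at this
          exact absurd this (not_lt.2 hxy.le)
        · exact hxy.ne' (σ.injective h1)
      · simp only [bM, hy, if_false]
        rw [if_neg]
        intro h1
        exact hxy.ne' (σ.injective h1)
    have e1 : ν q v' = ν b v' := by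
      have : ν (b⁻¹ * q) v' = v' := hHK hbH
      conv_rhs => rw [← this]
      rw [hmm, mul_inv_cancel_left]
    rw [e1, ← hB _ hbB (ν (pm σ)⁻¹ v'), hmm, hmm]
    congr 3
    group
  intro hbot
  let u : W := ∑ q : parab (F := F) (j + m) (j + 1) (hook j m), ν (q : GL (Fin (j + m)) F) v'
  have hu : u ∈ fixS ν (parab (j + m) (j + 1) (hook j m)) := by
    rw [mem_fixS]
    intro r hr
    simp only [u, map_sum, hmm]
    exact Equiv.sum_comp (Equiv.mulLeft (⟨r, hr⟩ : parab (F := F) (j + m) (j + 1) (hook j m)))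
      (fun q => ν (q : GL (Fin (j + m)) F) v')
  rw [hbot, Submodule.mem_bot] at hu
  have h1 : lam (ν (pm σ)⁻¹ u) = 0 := by rw [hu]; simp
  simp only [u, map_sum] at h1
  rw [Finset.sum_congr rfl (fun q _ => hP q.1 q.2), Finset.sum_const, nsmul_eq_mul] at h1
  rcases mul_eq_zero.1 h1 with h2 | h2
  · rw [Nat.cast_eq_zero, Finset.card_eq_zero] at h2
    have : (1 : parab (F := F) (j + m) (j + 1) (hook j m)) ∈ (Finset.univ : Finset _) :=
      Finset.mem_univ _
    rw [h2] at this
    simp at this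
  · exact hne h2

end EigenMain

/-- Scholium 10.2.1 and Proposition 10.2.3: the spherical
principal series constituent `ν = ν_D` (the multiplicity-one constituent of
`I_D` not occurring for strictly dominating partitions) belongs to the new
`k`-spectrum and has tensor rank `k`, for `k = n − d_1`. -/
theorem sps_constituent_new_spectrum_and_tensor_rank
    {n : ℕ} (l : ℕ) (hl : 0 < l) (d : Fin l → ℕ)
    (hmono : ∀ i j : Fin l, i ≤ j → d j ≤ d i)
    (hpos : ∀ i, 0 < d i) (hsum : ∑ i, d i = n)
    {Vν : Type} [AddCommGroup Vν] [Module ℂ Vν] [FiniteDimensional ℂ Vν]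
    (ν : Representation ℂ (GL (Fin n) F) Vν) (hν : IsIrred ν)
    -- ν occurs in I_D with multiplicity one: there is a nonzero intertwiner
    -- ν → I_D, unique up to scalar
    (hocc : ∃ φ : Vν →ₗ[ℂ] ↥(cosetSpace (parab n l d)),
      φ ∈ interSub ν (indTriv (parab n l d)) ∧ φ ≠ 0)
    (hmult : ∀ φ ψ : Vν →ₗ[ℂ] ↥(cosetSpace (parab n l d)),
      φ ∈ interSub ν (indTriv (parab n l d)) →
      ψ ∈ interSub ν (indTriv (parab n l d)) → φ ≠ 0 → ∃ c : ℂ, ψ = c • φ)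
    -- ν does not occur in I_{D'} for any partition D' of n strictly
    -- dominating D
    (hdom : ∀ (l' : ℕ) (d' : Fin l' → ℕ),
      (∀ i j : Fin l', i ≤ j → d' j ≤ d' i) → (∀ i, 0 < d' i) →
      (∑ i, d' i = n) →
      (∀ j : ℕ, psum l d j ≤ psum l' d' j) →
      (∃ j : ℕ, psum l d j ≠ psum l' d' j) →
      interSub ν (indTriv (parab n l' d')) = ⊥) :
    -- conclusion, with k = n − d_1:
    HasFixedVec ν (Hsub n (n - d ⟨0, hl⟩)) ∧
      ∀ j < n - d ⟨0, hl⟩, ¬ HasEigenVec ν (Hsub n j) := by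
  have hd : Antitone d := fun i j h => hmono i j h
  have h1 := finrank_fix_one ν (parab n l d) hocc hmult
  refine ⟨fixed_part hl d hsum ν h1, ?_⟩
  intro j hj hE
  obtain ⟨lam, hlam, hinv⟩ := exists_invfun ν (parab n l d) hocc
  have h0 := hpos ⟨0, hl⟩
  obtain ⟨m, rfl⟩ : ∃ m, n = j + m := ⟨n - j, by omega⟩
  exact eig_part (by omega) ν hν lam hlam
    (fun b hb w => hinv b (Bor_le_parab d hb) w) hE
    (hook_vanish hl d hd hsum ν hν h1 hdom j m (by omega) rfl)

end Stmt15
end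

section
/- Let D = (d_1 ≥ d_2 ≥ … ≥ d_ℓ) be a partition of n, P_D the block upper-triangular parabolic subgroup of GL_n(F_q) with diagonal blocks of sizes d_1,…,d_ℓ, L_D ≅ GL_{d_1}(F_q)×…×GL_{d_ℓ}(F_q) its block-diagonal Levi subgroup, and Ū_D the opposite (block lower-triangular) unipotent radical. For 1 ≤ i ≤ ℓ−1 let U(i) ≤ Ū_D be the subgroup of matrices I_n + X with X supported in the (i+1,i) block (rows of diagonal block i+1, columns of diagonal block i), so U(i) ≅ (M_{d_{i+1},d_i}(F_q),+). Call a character ψ of Ū_D of maximal rank if, for every i, the restriction of ψ to U(i), viewed as a character of M_{d_{i+1},d_i}(F_q), has rank d_{i+1}. Then: (a) the maximal rank characters of Ū_D form a single orbit under the conjugation action of L_D; (b) for every maximal rank character ψ, the space of functions f : GL_n(F_q) → ℂ satisfying f(ū g p) = ψ(ū)·f(g) for all ū ∈ Ū_D, g ∈ GL_n(F_q), p ∈ P_D is exactly one-dimensional (i.e., ψ occurs with multiplicity one in the restriction of Ind_{P_D}^{GL_n(F_q)} 1 to Ū_D); (c) if D' is a partition of n strictly dominating D, then the analogous space of functions with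 P_{D'} in place of P_D is zero. -/
/-!
STATEMENT 16: Generalized Whittaker vectors for the opposite unipotent radical
Ū_D: maximal rank characters of Ū_D form a single L_D-orbit; each occurs with
multiplicity one in Ind_{P_D}^{GL_n} 1; and does not occur in Ind_{P_{D'}} 1
for D' strictly dominating D.
-/

open Matrix
open scoped MatrixGroups

set_option linter.unusedSectionVars false
set_option maxHeartbeats 1000000

namespace Stmt16

variable {F : Type} [Field F] [Fintype F] [DecidableEq F]

/-- Partial sums of the parts of a partition: `psum l d j = d_0 + ⋯ + d_{j-1}`. -/
def psum (l : ℕ) (d : Fin l → ℕ) (j : ℕ) : ℕ :=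
  ∑ i ∈ Finset.univ.filter (fun i : Fin l => (i : ℕ) < j), d i

lemma psum_mono (l : ℕ) (d : Fin l → ℕ) {j j' : ℕ} (h : j ≤ j') :
    psum l d j ≤ psum l d j' := by
  apply Finset.sum_le_sum_of_subset
  intro t ht
  simp only [Finset.mem_filter, Finset.mem_univ, true_and] at ht ⊢
  omega

lemma psum_succ (l : ℕ) (d : Fin l → ℕ) (r : ℕ) (hr : r < l) :
    psum l d (r + 1) = psum l d r + d ⟨r, hr⟩ := by
  unfold psum
  have hins : (Finset.univ.filter (fun t : Fin l => (t : ℕ) < r + 1))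
      = insert (⟨r, hr⟩ : Fin l) (Finset.univ.filter (fun t : Fin l => (t : ℕ) < r)) := by
    ext t
    simp only [Finset.mem_filter, Finset.mem_univ, true_and, Finset.mem_insert, Fin.ext_iff]
    omega
  rw [hins, Finset.sum_insert (by simp)]
  exact Nat.add_comm _ _

/-- The index of the block containing coordinate `i`. -/
def blk (l : ℕ) (d : Fin l → ℕ) {n : ℕ} (i : Fin n) : ℕ :=
  ((Finset.univ : Finset (Fin l)).filter
    (fun t : Fin l => psum l d ((t : ℕ) + 1) ≤ (i : ℕ))).card

lemma card_filter_lt (l t0 : ℕ) (h : t0 ≤ l) :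
    ((Finset.univ : Finset (Fin l)).filter (fun t : Fin l => (t : ℕ) < t0)).card = t0 := by
  have he : ((Finset.univ : Finset (Fin l)).filter (fun t : Fin l => (t : ℕ) < t0))
      = (Finset.range t0).attachFin
          (fun m hm => lt_of_lt_of_le (Finset.mem_range.mp hm) h) := by
    ext t
    simp [Finset.mem_attachFin]
  rw [he, Finset.card_attachFin, Finset.card_range]

/-- Coordinates in `[S_t, S_{t+1})` lie in block `t`. -/
lemma blk_interval (l : ℕ) (d : Fin l → ℕ) {n : ℕ} (i : Fin n) (t : ℕ) (ht : t < l)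
    (h1 : psum l d t ≤ (i : ℕ)) (h2 : (i : ℕ) < psum l d (t + 1)) :
    blk l d i = t := by
  unfold blk
  have he : ((Finset.univ : Finset (Fin l)).filter
        (fun s : Fin l => psum l d ((s : ℕ) + 1) ≤ (i : ℕ)))
      = ((Finset.univ : Finset (Fin l)).filter (fun s : Fin l => (s : ℕ) < t)) := by
    ext s
    simp only [Finset.mem_filter, Finset.mem_univ, true_and]
    constructor
    · intro hs
      rcases Nat.lt_or_ge (s : ℕ) t with h | h
      · exact h
      · exfalso
        have h5 : psum l d (t + 1) ≤ psum l d ((s : ℕ) + 1) :=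
          psum_mono l d (Nat.succ_le_succ h)
        omega
    · intro hs
      have h6 : psum l d ((s : ℕ) + 1) ≤ psum l d t :=
        psum_mono l d (Nat.succ_le_of_lt hs)
      omega
  rw [he, card_filter_lt l t (le_of_lt ht)]

/-- The unipotent radical `Ū_D` of the parabolic opposite to `P_D`: block
lower-triangular matrices with identity diagonal blocks. -/
def UbarS (n l : ℕ) (d : Fin l → ℕ) : Subgroup (GL (Fin n) F) where
  carrier := {g | ∀ i j : Fin n, blk l d i ≤ blk l d j →
      (↑g : Matrix (Fin n) (Fin n) F) i j = (1 : Matrix (Fin n) (Fin n) F) i j}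
  one_mem' := by
    intro i j _
    rw [Units.val_one]
  mul_mem' := by
    intro a b ha hb i j hij
    have hstep : ((↑(a * b) : Matrix (Fin n) (Fin n) F)) i j
        = (↑a : Matrix (Fin n) (Fin n) F) i i * (↑b : Matrix (Fin n) (Fin n) F) i j := by
      rw [Units.val_mul, Matrix.mul_apply]
      apply Finset.sum_eq_single i
      · intro t _ hti
        rcases Nat.lt_or_ge (blk l d t) (blk l d i) with ht | ht
        · have htj : t ≠ j := by
            intro he
            subst he
            omega
          rw [hb t j (le_trans (le_of_lt ht) hij), Matrix.one_apply_ne htj, mul_zero]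
        · rw [ha i t ht, Matrix.one_apply_ne (Ne.symm hti), zero_mul]
      · intro hi
        exact absurd (Finset.mem_univ i) hi
    rw [hstep, ha i i le_rfl, Matrix.one_apply_eq, one_mul]
    exact hb i j hij
  inv_mem' := by
    intro g hg
    have key : ∀ m : ℕ, ∀ i j : Fin n, blk l d i = m → blk l d i ≤ blk l d j →
        (↑g⁻¹ : Matrix (Fin n) (Fin n) F) i j = (1 : Matrix (Fin n) (Fin n) F) i j := by
      intro m
      induction m using Nat.strong_induction_on with
      | _ m ih =>
        intro i j him hij
        have h1 : (↑g : Matrix (Fin n) (Fin n) F) * (↑g⁻¹ : Matrix (Fin n) (Fin n) F)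
            = 1 := by
          rw [← Units.val_mul, mul_inv_cancel, Units.val_one]
        have h2 : ((↑g : Matrix (Fin n) (Fin n) F) * (↑g⁻¹ : Matrix (Fin n) (Fin n) F)) i j
            = (1 : Matrix (Fin n) (Fin n) F) i j := by rw [h1]
        have hstep : ((↑g : Matrix (Fin n) (Fin n) F) * (↑g⁻¹ : Matrix (Fin n) (Fin n) F)) i j
            = (↑g : Matrix (Fin n) (Fin n) F) i i * (↑g⁻¹ : Matrix (Fin n) (Fin n) F) i j := by
          rw [Matrix.mul_apply]
          apply Finset.sum_eq_single i
          · intro t _ hti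
            rcases Nat.lt_or_ge (blk l d t) (blk l d i) with ht | ht
            · have htj : t ≠ j := by
                intro he
                subst he
                omega
              rw [ih (blk l d t) (by omega) t j rfl (le_trans (le_of_lt ht) hij),
                Matrix.one_apply_ne htj, mul_zero]
            · rw [hg i t ht, Matrix.one_apply_ne (Ne.symm hti), zero_mul]
          · intro hi
            exact absurd (Finset.mem_univ i) hi
        rw [hstep, hg i i le_rfl, Matrix.one_apply_eq, one_mul] at h2
        exact h2
    intro i j hij
    exact key (blk l d i) i j rfl hij

/-- The subspace `E_m ⊆ F^n` of vectors supported in the first `m`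
coordinates. -/
def Esub (n m : ℕ) : Submodule F (Fin n → F) where
  carrier := {v | ∀ i : Fin n, m ≤ (i : ℕ) → v i = 0}
  add_mem' := by
    intro a b ha hb i hi
    simp [ha i hi, hb i hi]
  zero_mem' := by intro i hi; rfl
  smul_mem' := by
    intro c v hv i hi
    simp [hv i hi]

/-- The stabilizer in `GL_n(F)` of a subspace `E ⊆ F^n`. -/
def stabE {n : ℕ} (E : Submodule F (Fin n → F)) : Subgroup (GL (Fin n) F) where
  carrier := {g | ∀ v ∈ E, (↑g : Matrix (Fin n) (Fin n) F) *ᵥ v ∈ E}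
  one_mem' := by intro v hv; simpa using hv
  mul_mem' := by
    intro g h hg hh v hv
    rw [Units.val_mul, ← Matrix.mulVec_mulVec]
    exact hg _ (hh v hv)
  inv_mem' := by
    intro g hg v hv
    let e : (Fin n → F) ≃ₗ[F] (Fin n → F) :=
      LinearEquiv.ofLinear
        (Matrix.mulVecLin (↑g : Matrix (Fin n) (Fin n) F))
        (Matrix.mulVecLin (↑g⁻¹ : Matrix (Fin n) (Fin n) F))
        (by rw [← Matrix.mulVecLin_mul, ← Units.val_mul, mul_inv_cancel, Units.val_one,
              Matrix.mulVecLin_one])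
        (by rw [← Matrix.mulVecLin_mul, ← Units.val_mul, inv_mul_cancel, Units.val_one,
              Matrix.mulVecLin_one])
    have ecoe : (e : (Fin n → F) →ₗ[F] (Fin n → F))
        = Matrix.mulVecLin (↑g : Matrix (Fin n) (Fin n) F) := rfl
    have hmap : Submodule.map
        (Matrix.mulVecLin (↑g : Matrix (Fin n) (Fin n) F)) E = E := by
      apply Submodule.eq_of_le_of_finrank_le
      · rintro x ⟨u, hu, rfl⟩
        simpa using hg u hu
      · rw [← ecoe, LinearEquiv.finrank_map_eq]
    have hv' : v ∈ Submodule.map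
        (Matrix.mulVecLin (↑g : Matrix (Fin n) (Fin n) F)) E := by
      rw [hmap]; exact hv
    rcases hv' with ⟨u, hu, heq⟩
    rw [Matrix.mulVecLin_apply] at heq
    have hgu : (↑g⁻¹ : Matrix (Fin n) (Fin n) F) *ᵥ v = u := by
      rw [← heq, Matrix.mulVec_mulVec, ← Units.val_mul, inv_mul_cancel, Units.val_one,
        Matrix.one_mulVec]
    rw [hgu]; exact hu

/-- The block upper-triangular parabolic subgroup `P_D` attached to the
partition `D`: the simultaneous stabilizer of the subspaces spanned by the
first `psum l d j` coordinates. -/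
def parab (n l : ℕ) (d : Fin l → ℕ) : Subgroup (GL (Fin n) F) :=
  ⨅ j : ℕ, stabE (Esub n (psum l d j))

/-- The subspace of vectors supported in block `t`. -/
def blkSpace (l : ℕ) (d : Fin l → ℕ) (n t : ℕ) : Submodule F (Fin n → F) where
  carrier := {v | ∀ i : Fin n, blk l d i ≠ t → v i = 0}
  add_mem' := by
    intro a b ha hb i hi
    simp [ha i hi, hb i hi]
  zero_mem' := by intro i hi; rfl
  smul_mem' := by
    intro c v hv i hi
    simp [hv i hi]

/-- The block-diagonal Levi subgroup `L_D ≅ GL_{d_1} × ⋯ × GL_{d_ℓ}`: the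
simultaneous stabilizer of all the block-coordinate subspaces. -/
def LD (n l : ℕ) (d : Fin l → ℕ) : Subgroup (GL (Fin n) F) :=
  ⨅ t : ℕ, stabE (blkSpace l d n t)

/-- The matrix with `X` placed in the block with rows starting at `r₀` and
columns starting at `c₀`. -/
def offEmbed (n r₀ c₀ a b : ℕ) (X : Matrix (Fin a) (Fin b) F) :
    Matrix (Fin n) (Fin n) F :=
  Matrix.of fun i j =>
    if hi : r₀ ≤ (i : ℕ) ∧ (i : ℕ) - r₀ < a then
      if hj : c₀ ≤ (j : ℕ) ∧ (j : ℕ) - c₀ < b then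
        X ⟨(i : ℕ) - r₀, hi.2⟩ ⟨(j : ℕ) - c₀, hj.2⟩
      else 0
    else 0

lemma offEmbed_mul_offEmbed (n r₀ c₀ a b : ℕ) (hd : c₀ + b ≤ r₀)
    (X Y : Matrix (Fin a) (Fin b) F) :
    offEmbed n r₀ c₀ a b X * offEmbed n r₀ c₀ a b Y = 0 := by
  ext i j
  rw [Matrix.mul_apply, Matrix.zero_apply]
  apply Finset.sum_eq_zero
  intro t _
  by_cases htr : r₀ ≤ (t : ℕ) ∧ (t : ℕ) - r₀ < a
  · have hcf : ¬ (c₀ ≤ (t : ℕ) ∧ (t : ℕ) - c₀ < b) := by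
      rintro ⟨h1, h2⟩
      omega
    have hz : offEmbed n r₀ c₀ a b X i t = 0 := by
      unfold offEmbed
      by_cases hi : r₀ ≤ (i : ℕ) ∧ (i : ℕ) - r₀ < a
      · rw [Matrix.of_apply, dif_pos hi, dif_neg hcf]
      · rw [Matrix.of_apply, dif_neg hi]
    rw [hz, zero_mul]
  · have hz : offEmbed n r₀ c₀ a b Y t j = 0 := by
      unfold offEmbed
      rw [Matrix.of_apply, dif_neg htr]
    rw [hz, mul_zero]

/-- The element `I + X` of the one-parameter block subgroup
`U(r) ≅ M_{d_{r+1}, d_r}(F)` of `Ū_D` (the block just below the diagonal in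
rows `r+1`, columns `r`). -/
def uBlk (n l : ℕ) (d : Fin l → ℕ) (r : ℕ) (hr : r + 1 < l)
    (X : Matrix (Fin (d ⟨r + 1, hr⟩)) (Fin (d ⟨r, Nat.lt_of_succ_lt hr⟩)) F) :
    GL (Fin n) F where
  val := 1 + offEmbed n (psum l d (r + 1)) (psum l d r)
      (d ⟨r + 1, hr⟩) (d ⟨r, Nat.lt_of_succ_lt hr⟩) X
  inv := 1 - offEmbed n (psum l d (r + 1)) (psum l d r)
      (d ⟨r + 1, hr⟩) (d ⟨r, Nat.lt_of_succ_lt hr⟩) X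
  val_inv := by
    have h := offEmbed_mul_offEmbed n (psum l d (r + 1)) (psum l d r)
      (d ⟨r + 1, hr⟩) (d ⟨r, Nat.lt_of_succ_lt hr⟩)
      (le_of_eq (psum_succ l d r (Nat.lt_of_succ_lt hr)).symm) X X
    have e : ∀ E : Matrix (Fin n) (Fin n) F, (1 + E) * (1 - E) = 1 - E * E := by
      intro E
      noncomm_ring
    rw [e, h, sub_zero]
  inv_val := by
    have h := offEmbed_mul_offEmbed n (psum l d (r + 1)) (psum l d r)
      (d ⟨r + 1, hr⟩) (d ⟨r, Nat.lt_of_succ_lt hr⟩)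
      (le_of_eq (psum_succ l d r (Nat.lt_of_succ_lt hr)).symm) X X
    have e : ∀ E : Matrix (Fin n) (Fin n) F, (1 - E) * (1 + E) = 1 - E * E := by
      intro E
      noncomm_ring
    rw [e, h, sub_zero]

lemma uBlk_mem (n l : ℕ) (d : Fin l → ℕ) (r : ℕ) (hr : r + 1 < l)
    (X : Matrix (Fin (d ⟨r + 1, hr⟩)) (Fin (d ⟨r, Nat.lt_of_succ_lt hr⟩)) F) :
    uBlk n l d r hr X ∈ (UbarS n l d : Subgroup (GL (Fin n) F)) := by
  intro i j hij
  show (1 + offEmbed n (psum l d (r + 1)) (psum l d r)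
      (d ⟨r + 1, hr⟩) (d ⟨r, Nat.lt_of_succ_lt hr⟩) X) i j
      = (1 : Matrix (Fin n) (Fin n) F) i j
  rw [Matrix.add_apply]
  have hz : offEmbed n (psum l d (r + 1)) (psum l d r)
      (d ⟨r + 1, hr⟩) (d ⟨r, Nat.lt_of_succ_lt hr⟩) X i j = 0 := by
    unfold offEmbed
    rw [Matrix.of_apply]
    by_cases hi : psum l d (r + 1) ≤ (i : ℕ) ∧ (i : ℕ) - psum l d (r + 1) < d ⟨r + 1, hr⟩
    · by_cases hj : psum l d r ≤ (j : ℕ) ∧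
          (j : ℕ) - psum l d r < d ⟨r, Nat.lt_of_succ_lt hr⟩
      · exfalso
        have hbi : blk l d i = r + 1 := by
          refine blk_interval l d i (r + 1) hr hi.1 ?_
          rw [psum_succ l d (r + 1) hr]
          omega
        have hbj : blk l d j = r := by
          refine blk_interval l d j r (Nat.lt_of_succ_lt hr) hj.1 ?_
          rw [psum_succ l d r (Nat.lt_of_succ_lt hr)]
          omega
        omega
      · rw [dif_pos hi, dif_neg hj]
    · rw [dif_neg hi]
  rw [hz, add_zero]

/-- A character `ψ` of `Ū_D` has maximal rank: for every `r`, the restriction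
of `ψ` to the block subgroup `U(r) ≅ M_{d_{r+1}, d_r}(F)`, which has the form
`X ↦ χ₀(trace (T_r X))`, satisfies `rank T_r = d_{r+1}`. -/
def IsMaxRankChar (χ₀ : AddChar F ℂ) (n l : ℕ) (d : Fin l → ℕ)
    (ψ : ↥(UbarS n l d : Subgroup (GL (Fin n) F)) →* ℂ) : Prop :=
  ∀ (r : ℕ) (hr : r + 1 < l),
    ∃ T : Matrix (Fin (d ⟨r, Nat.lt_of_succ_lt hr⟩)) (Fin (d ⟨r + 1, hr⟩)) F,
      (∀ X : Matrix (Fin (d ⟨r + 1, hr⟩)) (Fin (d ⟨r, Nat.lt_of_succ_lt hr⟩)) F,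
        ψ ⟨uBlk n l d r hr X, uBlk_mem n l d r hr X⟩ = χ₀ ((T * X).trace)) ∧
      T.rank = d ⟨r + 1, hr⟩

/-- The `(Ū_D, ψ)`-Whittaker space of `Ind_P^{GL_n} 1`: functions on `GL_n(F)`
with `f(ū g p) = ψ(ū) f(g)`. -/
noncomputable def whitSpace {n : ℕ} (P U : Subgroup (GL (Fin n) F))
    (ψ : ↥U →* ℂ) : Submodule ℂ (GL (Fin n) F → ℂ) where
  carrier := {f | ∀ (u : ↥U) (g : GL (Fin n) F) (p : ↥P),
      f (↑u * g * ↑p) = ψ u * f g}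
  add_mem' := by
    intro a b ha hb u g p
    simp [ha u g p, hb u g p, mul_add]
  zero_mem' := by intro u g p; simp
  smul_mem' := by
    intro c f hf u g p
    simp only [Pi.smul_apply, smul_eq_mul, hf u g p]
    ring

attribute [irreducible] UbarS LD parab whitSpace IsMaxRankChar

section helpers

lemma mem_Ubar {n l : ℕ} {d : Fin l → ℕ} {g : GL (Fin n) F} :
    g ∈ (UbarS n l d : Subgroup (GL (Fin n) F)) ↔ ∀ i j : Fin n, blk l d i ≤ blk l d j →
      (↑g : Matrix (Fin n) (Fin n) F) i j = (1 : Matrix (Fin n) (Fin n) F) i j := by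
  unfold UbarS
  exact Iff.rfl

lemma mem_parab {n l : ℕ} {d : Fin l → ℕ} {g : GL (Fin n) F} :
    g ∈ (parab n l d : Subgroup (GL (Fin n) F)) ↔ ∀ j : ℕ, ∀ v : Fin n → F,
      (∀ i : Fin n, psum l d j ≤ (i : ℕ) → v i = 0) →
      ∀ i : Fin n, psum l d j ≤ (i : ℕ) → ((↑g : Matrix (Fin n) (Fin n) F) *ᵥ v) i = 0 := by
  unfold parab
  rw [Subgroup.mem_iInf]
  exact Iff.rfl

lemma mem_LD {n l : ℕ} {d : Fin l → ℕ} {g : GL (Fin n) F} :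
    g ∈ (LD n l d : Subgroup (GL (Fin n) F)) ↔ ∀ t : ℕ, ∀ v : Fin n → F,
      (∀ i : Fin n, blk l d i ≠ t → v i = 0) →
      ∀ i : Fin n, blk l d i ≠ t → ((↑g : Matrix (Fin n) (Fin n) F) *ᵥ v) i = 0 := by
  unfold LD
  rw [Subgroup.mem_iInf]
  exact Iff.rfl

lemma mem_whit {n : ℕ} {P U : Subgroup (GL (Fin n) F)} {ψ : ↥U →* ℂ}
    {f : GL (Fin n) F → ℂ} :
    f ∈ whitSpace P U ψ ↔ ∀ (u : ↥U) (g : GL (Fin n) F) (p : ↥P),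
      f (↑u * g * ↑p) = ψ u * f g := by
  unfold whitSpace
  exact Iff.rfl

lemma psum_top (l : ℕ) (d : Fin l → ℕ) (j : ℕ) (hj : l ≤ j) : psum l d j = ∑ i, d i := by
  unfold psum
  congr 1
  ext t
  have := t.2
  simp
  omega

lemma psum_zero (l : ℕ) (d : Fin l → ℕ) : psum l d 0 = 0 := by
  simp [psum]

/-- Every coordinate lies in a block. -/
lemma exists_blk {n l : ℕ} {d : Fin l → ℕ} (hsum : ∑ i, d i = n) (i : Fin n) :
    ∃ t, t < l ∧ psum l d t ≤ (i : ℕ) ∧ (i : ℕ) < psum l d (t + 1) := by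
  have hi : (i : ℕ) < psum l d l := by
    rw [psum_top l d l le_rfl, hsum]; exact i.2
  have hex : ∃ m, (i : ℕ) < psum l d m := ⟨l, hi⟩
  classical
  have h1 := Nat.find_spec hex
  have h0 : Nat.find hex ≠ 0 := by
    intro h
    rw [h, psum_zero] at h1
    omega
  obtain ⟨t, ht⟩ := Nat.exists_eq_succ_of_ne_zero h0
  refine ⟨t, ?_, ?_, ?_⟩
  · have := Nat.find_min' hex hi
    omega
  · by_contra hc
    have := Nat.find_min' hex (not_le.mp hc)
    omega
  · rw [ht] at h1
    exact h1

lemma blk_lt {n l : ℕ} {d : Fin l → ℕ} (hsum : ∑ i, d i = n) (i : Fin n) : blk l d i < l := by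
  obtain ⟨t, h1, h2, h3⟩ := exists_blk hsum i
  rw [blk_interval l d i t h1 h2 h3]; exact h1

lemma blk_spec {n l : ℕ} {d : Fin l → ℕ} (hsum : ∑ i, d i = n) (i : Fin n) :
    psum l d (blk l d i) ≤ (i : ℕ) ∧ (i : ℕ) < psum l d (blk l d i + 1) := by
  obtain ⟨t, h1, h2, h3⟩ := exists_blk hsum i
  rw [blk_interval l d i t h1 h2 h3]; exact ⟨h2, h3⟩

lemma blk_lt_iff {n l : ℕ} {d : Fin l → ℕ} (hsum : ∑ i, d i = n) (i : Fin n) (j : ℕ) :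
    blk l d i < j ↔ (i : ℕ) < psum l d j := by
  have h := blk_spec hsum i
  constructor
  · intro hj
    exact lt_of_lt_of_le h.2 (psum_mono l d hj)
  · intro hj
    by_contra hc
    have := psum_mono l d (not_lt.mp hc)
    omega

lemma blk_le_of_le {n l : ℕ} {d : Fin l → ℕ} {i j : Fin n} (h : (i : ℕ) ≤ j) :
    blk l d i ≤ blk l d j := by
  unfold blk
  apply Finset.card_le_card
  intro t
  simp only [Finset.mem_filter, Finset.mem_univ, true_and]
  omega

/-- The invertible matrix `1 + N` for `N` of square zero. -/
def sqz {n : ℕ} (N : Matrix (Fin n) (Fin n) F) (h : N * N = 0) : GL (Fin n) F where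
  val := 1 + N
  inv := 1 - N
  val_inv := by
    have e : (1 + N) * (1 - N) = 1 - N * N := by noncomm_ring
    rw [e, h, sub_zero]
  inv_val := by
    have e : (1 - N) * (1 + N) = 1 - N * N := by noncomm_ring
    rw [e, h, sub_zero]

lemma sqz_val {n : ℕ} (N : Matrix (Fin n) (Fin n) F) (h : N * N = 0) :
    (↑(sqz N h) : Matrix (Fin n) (Fin n) F) = 1 + N := rfl

lemma sqz_inv_val {n : ℕ} (N : Matrix (Fin n) (Fin n) F) (h : N * N = 0) :
    (↑(sqz N h)⁻¹ : Matrix (Fin n) (Fin n) F) = 1 - N := rfl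

lemma single_sq {n : ℕ} {i j : Fin n} (h : i ≠ j) (c : F) :
    Matrix.single i j c * Matrix.single i j c = 0 := by
  rw [Matrix.single_mul_single_of_ne]
  exact h.symm

/-- transvection -/
def tv {n : ℕ} {i j : Fin n} (h : i ≠ j) (c : F) : GL (Fin n) F :=
  sqz (Matrix.single i j c) (single_sq h c)

lemma tv_mem {n l : ℕ} {d : Fin l → ℕ} {i j : Fin n} (hne : i ≠ j)
    (h : blk l d j < blk l d i) (c : F) :
    tv hne c ∈ (UbarS n l d : Subgroup (GL (Fin n) F)) := by
  rw [mem_Ubar]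
  intro a b hab
  rw [tv, sqz_val, Matrix.add_apply]
  have : Matrix.single i j c a b = 0 := by
    rw [Matrix.single_apply, if_neg]
    rintro ⟨rfl, rfl⟩
    omega
  rw [this, add_zero]

lemma ne_of_blk {n l : ℕ} {d : Fin l → ℕ} {i j : Fin n} (h : blk l d j < blk l d i) : i ≠ j := by
  rintro rfl
  omega

/-- Homs on `Ū` agreeing on adjacent transvections agree. -/
lemma hom_ext {n l : ℕ} {d : Fin l → ℕ} (hpos : ∀ i, 0 < d i) (hsum : ∑ i, d i = n)
    (ψ φ : ↥(UbarS n l d : Subgroup (GL (Fin n) F)) →* ℂ)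
    (H : ∀ (i j : Fin n) (h : blk l d j < blk l d i) (c : F), blk l d i = blk l d j + 1 →
      ψ ⟨tv (ne_of_blk h) c, tv_mem (ne_of_blk h) h c⟩
        = φ ⟨tv (ne_of_blk h) c, tv_mem (ne_of_blk h) h c⟩) : ψ = φ := by
  have nz : ∀ (ρ : ↥(UbarS n l d : Subgroup (GL (Fin n) F)) →* ℂ) u, ρ u ≠ 0 := by
    intro ρ u hu
    have : ρ (u * u⁻¹) = 1 := by rw [mul_inv_cancel, map_one]
    rw [map_mul, hu, zero_mul] at this
    exact zero_ne_one this
  -- all transvections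
  have H2 : ∀ (i j : Fin n) (h : blk l d j < blk l d i) (c : F),
      ψ ⟨tv (ne_of_blk h) c, tv_mem (ne_of_blk h) h c⟩
        = φ ⟨tv (ne_of_blk h) c, tv_mem (ne_of_blk h) h c⟩ := by
    intro i j h c
    by_cases hadj : blk l d i = blk l d j + 1
    · exact H i j h c hadj
    have hil := blk_lt hsum i
    have hb : blk l d j + 1 < l := by omega
    have hk : psum l d (blk l d j + 1) < n := by
      have h1 := psum_succ l d (blk l d j + 1) hb
      have h2 := hpos ⟨_, hb⟩
      have h3 : psum l d (blk l d j + 1 + 1) ≤ psum l d l := psum_mono l d (by omega)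
      rw [psum_top l d l le_rfl, hsum] at h3
      omega
    obtain ⟨k, hkv⟩ : ∃ k : Fin n, (k : ℕ) = psum l d (blk l d j + 1) := ⟨⟨_, hk⟩, rfl⟩
    have hbk : blk l d k = blk l d j + 1 := by
      apply blk_interval l d k _ hb (by omega)
      have h1 := psum_succ l d (blk l d j + 1) hb
      have h2 := hpos ⟨_, hb⟩
      omega
    have hjk : blk l d j < blk l d k := by omega
    have hki : blk l d k < blk l d i := by omega
    have key : ∀ ρ : ↥(UbarS n l d : Subgroup (GL (Fin n) F)) →* ℂ,
        ρ ⟨tv (ne_of_blk h) c, tv_mem (ne_of_blk h) h c⟩ = 1 := by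
      intro ρ
      have e : (⟨tv (ne_of_blk hki) c, tv_mem (ne_of_blk hki) hki c⟩ :
            ↥(UbarS n l d : Subgroup (GL (Fin n) F))) *
            ⟨tv (ne_of_blk hjk) 1, tv_mem (ne_of_blk hjk) hjk 1⟩
          = ⟨tv (ne_of_blk h) c, tv_mem (ne_of_blk h) h c⟩ *
            (⟨tv (ne_of_blk hjk) 1, tv_mem (ne_of_blk hjk) hjk 1⟩ *
            ⟨tv (ne_of_blk hki) c, tv_mem (ne_of_blk hki) hki c⟩) := by
        apply Subtype.ext
        apply Units.ext
        simp only [Subgroup.coe_mul, Units.val_mul, tv, sqz_val]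
        have n1 := ne_of_blk h
        have n2 := ne_of_blk hjk
        have n3 := ne_of_blk hki
        simp [mul_add, add_mul, n1.symm, n2.symm]
        abel
      have e2 := congrArg ρ e
      simp only [map_mul] at e2
      have z1 := nz ρ ⟨tv (ne_of_blk hki) c, tv_mem (ne_of_blk hki) hki c⟩
      have z2 := nz ρ ⟨tv (ne_of_blk hjk) 1, tv_mem (ne_of_blk hjk) hjk 1⟩
      have := mul_ne_zero z1 z2
      apply mul_right_cancel₀ this
      rw [one_mul]
      rw [mul_comm (ρ ⟨tv (ne_of_blk hki) c, tv_mem (ne_of_blk hki) hki c⟩)] at e2 ⊢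
      exact e2.symm
    rw [key, key]
  -- induction on number of nonzero off-diagonal entries
  have main : ∀ N : ℕ, ∀ u : ↥(UbarS n l d : Subgroup (GL (Fin n) F)),
      (Finset.univ.filter (fun ab : Fin n × Fin n =>
        ab.1 ≠ ab.2 ∧ (u.1 : Matrix (Fin n) (Fin n) F) ab.1 ab.2 ≠ 0)).card = N →
      ψ u = φ u := by
    intro N
    induction N using Nat.strong_induction_on with
    | _ N ih =>
    intro u hN
    set S := (Finset.univ.filter (fun ab : Fin n × Fin n =>
        ab.1 ≠ ab.2 ∧ (u.1 : Matrix (Fin n) (Fin n) F) ab.1 ab.2 ≠ 0)) with hS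
    have hu := mem_Ubar.mp u.2
    rcases S.eq_empty_or_nonempty with hE | hne
    · have : u = 1 := by
        apply Subtype.ext
        apply Units.ext
        ext a b
        by_cases hab : a = b
        · subst hab
          rw [hu a a le_rfl]; rfl
        · have : (a, b) ∉ S := by rw [hE]; simp
          simp only [hS, Finset.mem_filter, Finset.mem_univ, true_and, not_and, not_not] at this
          rw [this hab]
          simp [hab]
      rw [this, map_one, map_one]
    · obtain ⟨⟨i, j⟩, hij, hmin⟩ := S.exists_min_image (fun ab => (ab.1 : ℕ)) hne
      have hij' := hij
      simp only [hS, Finset.mem_filter, Finset.mem_univ, true_and] at hij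
      have hblk : blk l d j < blk l d i := by
        by_contra hc
        have := hu i j (not_lt.mp hc)
        rw [Matrix.one_apply_ne hij.1] at this
        exact hij.2 this
      have hji : (j : ℕ) < i := by
        by_contra hc
        have := blk_le_of_le (l := l) (d := d) (not_lt.mp hc)
        omega
      have hrow : ∀ b, (u.1 : Matrix (Fin n) (Fin n) F) j b = (1 : Matrix (Fin n) (Fin n) F) j b := by
        intro b
        by_cases hjb : j = b
        · subst hjb; exact hu j j le_rfl
        · rw [Matrix.one_apply_ne hjb]
          by_contra hc
          have : (j, b) ∈ S := by
            simp only [hS, Finset.mem_filter, Finset.mem_univ, true_and]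
            exact ⟨hjb, hc⟩
          have := hmin _ this
          simp only at this
          omega
      set t : ↥(UbarS n l d : Subgroup (GL (Fin n) F)) :=
        ⟨tv (ne_of_blk hblk) (-(u.1 : Matrix (Fin n) (Fin n) F) i j), tv_mem _ hblk _⟩ with ht
      have hval : ∀ a b, ((t * u).1 : Matrix (Fin n) (Fin n) F) a b
          = if a = i ∧ b = j then 0 else (u.1 : Matrix (Fin n) (Fin n) F) a b := by
        intro a b
        simp only [ht, Subgroup.coe_mul, Units.val_mul, tv, sqz_val]
        rw [add_mul, one_mul, Matrix.add_apply]
        by_cases hai : a = i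
        · subst hai
          rw [Matrix.single_mul_apply_same, hrow b]
          by_cases hbj : b = j
          · subst hbj; simp
          · rw [Matrix.one_apply_ne (Ne.symm hbj)]; simp [hbj]
        · rw [Matrix.single_mul_apply_of_ne _ _ _ _ _ hai]; simp [hai]
      have hlt : (Finset.univ.filter (fun ab : Fin n × Fin n =>
          ab.1 ≠ ab.2 ∧ ((t * u).1 : Matrix (Fin n) (Fin n) F) ab.1 ab.2 ≠ 0)).card < N := by
        rw [← hN]
        apply Finset.card_lt_card
        rw [Finset.ssubset_iff_of_subset]
        · refine ⟨(i, j), hij', ?_⟩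
          simp only [Finset.mem_filter, Finset.mem_univ, true_and, hval]
          simp
        · rintro ⟨a, b⟩ hab
          simp only [hS, Finset.mem_filter, Finset.mem_univ, true_and, hval] at hab ⊢
          refine ⟨hab.1, ?_⟩
          intro h0
          apply hab.2
          rw [h0]; simp
      have hfin := ih _ hlt (t * u) rfl
      rw [map_mul, map_mul, ht, H2 i j hblk] at hfin
      exact mul_left_cancel₀ (nz φ _) hfin
  ext u
  exact main _ u rfl

lemma trace_hom {n l : ℕ} {d : Fin l → ℕ} (T : Matrix (Fin n) (Fin n) F)
    (hT : ∀ i j, blk l d j ≠ blk l d i + 1 → T i j = 0)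
    {u v : GL (Fin n) F} (hu : u ∈ (UbarS n l d : Subgroup (GL (Fin n) F)))
    (hv : v ∈ (UbarS n l d : Subgroup (GL (Fin n) F))) :
    (T * ((u * v : GL (Fin n) F) : Matrix (Fin n) (Fin n) F)).trace
      = (T * (u : Matrix (Fin n) (Fin n) F)).trace + (T * (v : Matrix (Fin n) (Fin n) F)).trace := by
  rw [mem_Ubar] at hu hv
  simp only [Matrix.trace, Matrix.diag_apply, ← Finset.sum_add_distrib]
  apply Finset.sum_congr rfl
  intro i _
  rw [Matrix.mul_apply, Matrix.mul_apply, Matrix.mul_apply, ← Finset.sum_add_distrib]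
  apply Finset.sum_congr rfl
  intro j _
  by_cases hij : blk l d j = blk l d i + 1
  · rw [← mul_add]
    congr 1
    rw [Units.val_mul, Matrix.mul_apply]
    have : ∀ k, (u : Matrix (Fin n) (Fin n) F) j k * (v : Matrix (Fin n) (Fin n) F) k i
        = (u : Matrix (Fin n) (Fin n) F) j k * (1 : Matrix (Fin n) (Fin n) F) k i
          + (1 : Matrix (Fin n) (Fin n) F) j k * (v : Matrix (Fin n) (Fin n) F) k i := by
      intro k
      by_cases hk : blk l d j ≤ blk l d k
      · have hki : k ≠ i := by rintro rfl; omega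
        rw [hu j k hk, Matrix.one_apply_ne hki]; ring
      · have hjk : j ≠ k := by rintro rfl; omega
        rw [hv k i (by omega), Matrix.one_apply_ne hjk]; ring
    rw [Finset.sum_congr rfl (fun k _ => this k), Finset.sum_add_distrib,
      ← Matrix.mul_apply, ← Matrix.mul_apply, mul_one, one_mul]
  · rw [hT i j hij]; ring

lemma trace_zero {n l : ℕ} {d : Fin l → ℕ} (T : Matrix (Fin n) (Fin n) F)
    (hT : ∀ i j, blk l d j ≠ blk l d i + 1 → T i j = 0) : T.trace = 0 := by
  apply Finset.sum_eq_zero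
  intro i _
  exact hT i i (by omega)

/-- The character of `Ū` attached to `T`. -/
def charT (χ₀ : AddChar F ℂ) {n l : ℕ} {d : Fin l → ℕ} (T : Matrix (Fin n) (Fin n) F)
    (hT : ∀ i j, blk l d j ≠ blk l d i + 1 → T i j = 0) :
    ↥(UbarS n l d : Subgroup (GL (Fin n) F)) →* ℂ where
  toFun u := χ₀ (T * (u.1 : Matrix (Fin n) (Fin n) F)).trace
  map_one' := by simp [trace_zero T hT]
  map_mul' u v := by
    rw [← AddChar.map_add_eq_mul, ← trace_hom T hT u.2 v.2]; rfl

lemma exists_T (χ₀ : AddChar F ℂ) {n l : ℕ} {d : Fin l → ℕ} (hpos : ∀ i, 0 < d i)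
    (hsum : ∑ i, d i = n) (ψ : ↥(UbarS n l d : Subgroup (GL (Fin n) F)) →* ℂ)
    (hψ : IsMaxRankChar χ₀ n l d ψ) :
    ∃ T : Matrix (Fin n) (Fin n) F,
      (∀ i j, blk l d j ≠ blk l d i + 1 → T i j = 0) ∧
      (∀ u : ↥(UbarS n l d : Subgroup (GL (Fin n) F)),
        ψ u = χ₀ (T * (u.1 : Matrix (Fin n) (Fin n) F)).trace) ∧
      (∀ w : Fin n → F, T *ᵥ w = 0 → ∀ i, blk l d i ≠ 0 → w i = 0) := by
  unfold IsMaxRankChar at hψ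
  choose T hT1 hT2 using hψ
  -- entries of the big matrix
  let B : Matrix (Fin n) (Fin n) F := Matrix.of fun i j =>
    if h : blk l d i + 1 < l then
      offEmbed n (psum l d (blk l d i)) (psum l d (blk l d i + 1)) _ _ (T (blk l d i) h) i j
    else 0
  -- positions
  have pos_lt : ∀ r (hr : r < l) (a : ℕ), a < d ⟨r, hr⟩ → psum l d r + a < n := by
    intro r hr a ha
    have h1 := psum_succ l d r hr
    have h3 : psum l d (r + 1) ≤ psum l d l := psum_mono l d (by omega)
    rw [psum_top l d l le_rfl, hsum] at h3
    omega
  have blk_pos : ∀ (i : Fin n) r (hr : r < l), blk l d i = r ↔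
      (psum l d r ≤ (i : ℕ) ∧ (i : ℕ) - psum l d r < d ⟨r, hr⟩) := by
    intro i r hr
    have h1 := psum_succ l d r hr
    have h0 := hpos ⟨r, hr⟩
    constructor
    · rintro rfl
      have := blk_spec hsum i
      omega
    · rintro ⟨h2, h3⟩
      exact blk_interval l d i r hr h2 (by omega)
  have hB : ∀ r (hr : r + 1 < l) (i j : Fin n) (a : Fin (d ⟨r, Nat.lt_of_succ_lt hr⟩))
      (b : Fin (d ⟨r + 1, hr⟩)), (i : ℕ) = psum l d r + a → (j : ℕ) = psum l d (r + 1) + b →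
      B i j = T r hr a b := by
    intro r hr i j a b hi hj
    have hbi : blk l d i = r := by
      rw [blk_pos i r (by omega)]
      have := a.2
      constructor <;> omega
    subst hbi
    simp only [B, Matrix.of_apply, hr, dif_pos, offEmbed]
    have ha := a.2
    have hb := b.2
    rw [dif_pos ⟨by omega, by omega⟩, dif_pos ⟨by omega, by omega⟩]
    congr 1
    · apply Fin.ext; simp; omega
    · apply Fin.ext; simp; omega
  have hB0 : ∀ i j, blk l d j ≠ blk l d i + 1 → B i j = 0 := by
    intro i j hij
    simp only [B, Matrix.of_apply, offEmbed]
    split_ifs with h1 h2 h3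
    · exact absurd ((blk_pos j _ h1).mpr h3) hij
    all_goals rfl
  refine ⟨B, hB0, ?_, ?_⟩
  · have : ψ = charT χ₀ B hB0 := by
      apply hom_ext hpos hsum
      intro i j h c hadj
      have hr : blk l d j + 1 < l := hadj ▸ blk_lt hsum i
      have hi := (blk_pos i _ hr).mp hadj
      have hj := (blk_pos j _ (Nat.lt_of_succ_lt hr)).mp rfl
      have e : (⟨tv (ne_of_blk h) c, tv_mem (ne_of_blk h) h c⟩ :
            ↥(UbarS n l d : Subgroup (GL (Fin n) F)))
          = ⟨uBlk n l d (blk l d j) hr (Matrix.single ⟨_, hi.2⟩ ⟨_, hj.2⟩ c), uBlk_mem _ _ _ _ _ _⟩ := by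
        apply Subtype.ext
        apply Units.ext
        simp only [tv, sqz_val, uBlk]
        congr 1
        ext a b
        simp only [offEmbed, Matrix.of_apply, Matrix.single_apply, Fin.ext_iff]
        split_ifs <;> first | rfl | (exfalso; omega)
      have e1 := hT1 _ hr (Matrix.single ⟨_, hi.2⟩ ⟨_, hj.2⟩ c)
      rw [← e] at e1
      rw [e1]
      simp only [charT, MonoidHom.coe_mk, OneHom.coe_mk, tv, sqz_val, mul_add, mul_one,
        Matrix.trace_add, trace_zero B hB0, zero_add]
      rw [Matrix.trace_mul_single, Matrix.trace_mul_single,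
        hB _ hr j i ⟨_, hj.2⟩ ⟨_, hi.2⟩ (by simp; omega) (by simp; omega)]
    intro u
    rw [this]; rfl
  · intro w hw i hi
    obtain ⟨r, hr0⟩ := Nat.exists_eq_succ_of_ne_zero hi
    have hr : r + 1 < l := by have := blk_lt hsum i; omega
    have hip := (blk_pos i _ hr).mp hr0
    let e : Fin (d ⟨r + 1, hr⟩) → Fin n := fun b => ⟨psum l d (r + 1) + b, pos_lt _ hr _ b.2⟩
    have hz : T r hr *ᵥ (w ∘ e) = 0 := by
      ext a
      have h1 := congrFun hw ⟨psum l d r + a, pos_lt _ (Nat.lt_of_succ_lt hr) _ a.2⟩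
      rw [Pi.zero_apply] at h1 ⊢
      rw [← h1]
      simp only [Matrix.mulVec, dotProduct]
      apply Fintype.sum_of_injective e
      · intro b b' hbb
        simp only [e, Fin.mk.injEq] at hbb
        apply Fin.ext; omega
      · intro j hj
        rw [hB0, zero_mul]
        have hba : blk l d (⟨psum l d r + a, pos_lt _ (Nat.lt_of_succ_lt hr) _ a.2⟩ : Fin n) = r := by
          rw [blk_pos _ r (Nat.lt_of_succ_lt hr)]
          have := a.2
          constructor <;> simp
        rw [hba]
        intro hbj
        have := (blk_pos j _ hr).mp hbj
        apply hj
        refine ⟨⟨_, this.2⟩, ?_⟩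
        apply Fin.ext
        simp only [e]
        omega
      · intro b
        rw [hB r hr _ (e b) a b rfl rfl]; rfl
    have hinj : Function.Injective (T r hr).mulVecLin := by
      rw [← LinearMap.ker_eq_bot, ← Submodule.finrank_eq_zero]
      have := (T r hr).mulVecLin.finrank_range_add_finrank_ker
      have h2 := hT2 r hr
      rw [Matrix.rank] at h2
      simp at this
      omega
    have hw0 : w ∘ e = 0 := by
      apply hinj
      simpa using hz
    have := congrFun hw0 ⟨_, hip.2⟩
    simp only [Function.comp, e, Pi.zero_apply] at this
    rw [← this]
    congr 1
    apply Fin.ext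
    simp; omega

/-- vectors supported in blocks `≥ k`. -/
def Wsub (l : ℕ) (d : Fin l → ℕ) (n k : ℕ) : Submodule F (Fin n → F) where
  carrier := {v | ∀ i : Fin n, blk l d i < k → v i = 0}
  add_mem' := by
    intro a b ha hb i hi
    simp [ha i hi, hb i hi]
  zero_mem' := by intro i hi; rfl
  smul_mem' := by
    intro c v hv i hi
    simp [hv i hi]

lemma transversal {χ₀ : AddChar F ℂ} (hχ₀ : χ₀ ≠ 1) {n l : ℕ} {d : Fin l → ℕ}
    (ψ : ↥(UbarS n l d : Subgroup (GL (Fin n) F)) →* ℂ)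
    (T : Matrix (Fin n) (Fin n) F)
    (hT0 : ∀ i j, blk l d j ≠ blk l d i + 1 → T i j = 0)
    (hT1 : ∀ u : ↥(UbarS n l d : Subgroup (GL (Fin n) F)),
        ψ u = χ₀ (T * (u.1 : Matrix (Fin n) (Fin n) F)).trace)
    (hT2 : ∀ w : Fin n → F, T *ᵥ w = 0 → ∀ i, blk l d i ≠ 0 → w i = 0)
    (l' : ℕ) (d' : Fin l' → ℕ) (f : GL (Fin n) F → ℂ)
    (hf : f ∈ whitSpace (parab n l' d') (UbarS n l d) ψ) (g : GL (Fin n) F) (hg : f g ≠ 0) :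
    ∀ j : ℕ, ∀ v : Fin n → F, (∀ i : Fin n, psum l' d' j ≤ (i : ℕ) → v i = 0) →
      (∀ i : Fin n, blk l d i < j → ((g : Matrix (Fin n) (Fin n) F) *ᵥ v) i = 0) → v = 0 := by
  have ginv : ∀ v, ((g⁻¹ : GL (Fin n) F) : Matrix (Fin n) (Fin n) F) *ᵥ
      ((g : Matrix (Fin n) (Fin n) F) *ᵥ v) = v := by
    intro v
    rw [Matrix.mulVec_mulVec, ← Units.val_mul, inv_mul_cancel, Units.val_one, Matrix.one_mulVec]
  intro j
  induction j with
  | zero =>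
    intro v hv _
    ext i
    exact hv i (by rw [psum_zero]; omega)
  | succ j ih =>
    intro v hv hw
    by_contra hv0
    obtain ⟨w, hwdef⟩ : ∃ w, w = (g : Matrix (Fin n) (Fin n) F) *ᵥ v := ⟨_, rfl⟩
    rw [← hwdef] at hw
    have hgw : ((g⁻¹ : GL (Fin n) F) : Matrix (Fin n) (Fin n) F) *ᵥ w = v := by
      rw [hwdef, ginv]
    have hw0 : w ≠ 0 := by
      rintro rfl
      rw [Matrix.mulVec_zero] at hgw
      exact hv0 hgw.symm
    have hne : (Finset.univ.filter (fun i => w i ≠ 0)).Nonempty := by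
      obtain ⟨i, hi⟩ := Function.ne_iff.mp hw0
      exact ⟨i, by simpa using hi⟩
    obtain ⟨i0, hi0, hmin⟩ := Finset.exists_min_image _ (fun i => blk l d i) hne
    simp only [Finset.mem_filter, Finset.mem_univ, true_and] at hi0 hmin
    have hbi0 : j + 1 ≤ blk l d i0 := by
      by_contra hc
      exact hi0 (hw i0 (by omega))
    obtain ⟨k, hk⟩ : ∃ k, blk l d i0 = k + 1 := ⟨blk l d i0 - 1, by omega⟩
    have hwW : ∀ i, blk l d i < k + 1 → w i = 0 := by
      intro i hi
      by_contra hc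
      have := hmin i hc
      omega
    -- the vector T w
    have hx1 : ∀ i, blk l d i < k → (T *ᵥ w) i = 0 := by
      intro i hi
      simp only [Matrix.mulVec, dotProduct]
      apply Finset.sum_eq_zero
      intro b _
      by_cases hb : blk l d b = blk l d i + 1
      · rw [hwW b (by omega), mul_zero]
      · rw [hT0 i b hb, zero_mul]
    have hx2 : ∃ i, blk l d i < k + 1 ∧ (T *ᵥ w) i ≠ 0 := by
      by_contra hc
      push Not at hc
      apply hi0
      have := hT2 (fun i => if blk l d i = k + 1 then w i else 0) ?_ i0 (by omega)
      · simpa [hk] using this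
      · ext i
        by_cases hi : blk l d i = k
        · refine Eq.trans ?_ (hc i (by omega))
          simp only [Matrix.mulVec, dotProduct]
          apply Finset.sum_congr rfl
          intro b _
          by_cases hb : blk l d b = k + 1
          · simp [hb]
          · rw [hT0 i b (by omega), zero_mul, zero_mul]
        · simp only [Matrix.mulVec, dotProduct, Pi.zero_apply]
          apply Finset.sum_eq_zero
          intro b _
          by_cases hb : blk l d b = k + 1
          · rw [hT0 i b (by omega), zero_mul]
          · simp [hb]
    let V : Submodule F (Fin n → F) :=
      Submodule.map (Matrix.mulVecLin (g : Matrix (Fin n) (Fin n) F)) (Esub n (psum l' d' j))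
    have hxn : T *ᵥ w ∉ V ⊔ Wsub l d n (k + 1) := by
      intro hmem
      obtain ⟨y, ⟨v', hv', rfl⟩, z, hz, hyz⟩ := Submodule.mem_sup.mp hmem
      rw [Matrix.mulVecLin_apply] at hyz
      have : v' = 0 := by
        apply ih v' hv'
        intro i hi
        have h1 := congrFun hyz i
        rw [Pi.add_apply, hx1 i (by omega), hz i (by omega), add_zero] at h1
        exact h1
      obtain ⟨i, hi, hne⟩ := hx2
      apply hne
      rw [← hyz, this, Matrix.mulVec_zero, zero_add]
      exact hz i hi
    obtain ⟨lam, hlx, hlk⟩ := Submodule.exists_le_ker_of_notMem hxn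
    obtain ⟨c, hc⟩ := AddChar.ne_one_iff.mp hχ₀
    let Lam : (Fin n → F) →ₗ[F] F := (c / lam (T *ᵥ w)) • lam
    have hLx : Lam (T *ᵥ w) = c := by
      simp only [Lam, LinearMap.smul_apply, smul_eq_mul]
      field_simp
    have hLV : ∀ y : Fin n → F, (∀ i : Fin n, psum l' d' j ≤ (i : ℕ) → y i = 0) →
        Lam ((g : Matrix (Fin n) (Fin n) F) *ᵥ y) = 0 := by
      intro y hy
      have : (g : Matrix (Fin n) (Fin n) F) *ᵥ y ∈ LinearMap.ker lam :=
        hlk (Submodule.mem_sup_left ⟨y, hy, rfl⟩)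
      simp only [Lam, LinearMap.smul_apply, LinearMap.mem_ker.mp this, smul_zero]
    have hLW : ∀ y : Fin n → F, (∀ i : Fin n, blk l d i < k + 1 → y i = 0) → Lam y = 0 := by
      intro y hy
      have : y ∈ LinearMap.ker lam := hlk (Submodule.mem_sup_right hy)
      simp only [Lam, LinearMap.smul_apply, LinearMap.mem_ker.mp this, smul_zero]
    let μ : Fin n → F := fun b => Lam (Pi.single b 1)
    have hμ : ∀ y, μ ⬝ᵥ y = Lam y := by
      intro y
      rw [LinearMap.pi_apply_eq_sum_univ Lam y]
      apply Finset.sum_congr rfl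
      intro b _
      simp only [μ, smul_eq_mul]
      rw [mul_comm]
      congr 2
      ext a
      simp [Pi.single_apply, eq_comm]
    have hNN : vecMulVec w μ * vecMulVec w μ = 0 := by
      rw [Matrix.vecMulVec_mul_vecMulVec, hμ, hLW w hwW, zero_smul, Matrix.vecMulVec_zero]
    have huU : sqz (vecMulVec w μ) hNN ∈ (UbarS n l d : Subgroup (GL (Fin n) F)) := by
      rw [mem_Ubar]
      intro a b hab
      rw [sqz_val, Matrix.add_apply, Matrix.vecMulVec_apply]
      by_cases ha : blk l d a < k + 1
      · rw [hwW a ha, zero_mul, add_zero]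
      · have : μ b = 0 := by
          apply hLW
          intro i hi
          rw [Pi.single_apply, if_neg]
          rintro rfl
          omega
        rw [this, mul_zero, add_zero]
    have hpP : g⁻¹ * (sqz (vecMulVec w μ) hNN)⁻¹ * g ∈ (parab n l' d' : Subgroup (GL (Fin n) F)) := by
      rw [mem_parab]
      intro t y hy i hi
      have e : ((g⁻¹ * (sqz (vecMulVec w μ) hNN)⁻¹ * g : GL (Fin n) F) : Matrix (Fin n) (Fin n) F) *ᵥ y
          = y - Lam ((g : Matrix (Fin n) (Fin n) F) *ᵥ y) • v := by
        rw [Units.val_mul, Units.val_mul, sqz_inv_val, ← Matrix.mulVec_mulVec,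
          ← Matrix.mulVec_mulVec, Matrix.sub_mulVec, Matrix.one_mulVec, Matrix.vecMulVec_mulVec,
          Matrix.mulVec_sub, ginv, hμ, op_smul_eq_smul, Matrix.mulVec_smul, hgw]
      rw [e, Pi.sub_apply, Pi.smul_apply, hy i hi]
      by_cases htj : t ≤ j
      · rw [hLV y, zero_smul, sub_zero]
        intro b hb
        exact hy b (le_trans (psum_mono l' d' htj) hb)
      · rw [hv i, smul_zero, sub_zero]
        exact le_trans (psum_mono l' d' (by omega)) hi
    have hfin := mem_whit.mp hf ⟨_, huU⟩ g ⟨_, hpP⟩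
    have e3 : sqz (vecMulVec w μ) hNN * g * (g⁻¹ * (sqz (vecMulVec w μ) hNN)⁻¹ * g) = g := by
      group
    simp only [e3] at hfin
    rw [hT1] at hfin
    simp only [sqz_val] at hfin
    rw [mul_add, mul_one, Matrix.trace_add, trace_zero T hT0, zero_add, Matrix.mul_vecMulVec,
      Matrix.trace_vecMulVec, dotProduct_comm, hμ, hLx] at hfin
    apply hc
    apply mul_right_cancel₀ hg
    rw [← hfin, one_mul]

lemma psum_le_n {n l : ℕ} {d : Fin l → ℕ} (hsum : ∑ i, d i = n) (j : ℕ) : psum l d j ≤ n := by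
  rcases le_total l j with h | h
  · rw [psum_top l d j h, hsum]
  · rw [← hsum, ← psum_top l d l le_rfl]
    exact psum_mono l d h

/-- The corner map: first `q` coordinates of `g` applied to vectors supported in first `p`. -/
def corner {n p q : ℕ} (hp : p ≤ n) (hq : q ≤ n) (g : Matrix (Fin n) (Fin n) F) :
    (Fin p → F) →ₗ[F] (Fin q → F) :=
  Matrix.mulVecLin (g.submatrix (Fin.castLE hq) (Fin.castLE hp))

/-- extension by zero -/
def ext0 {n p : ℕ} (v : Fin p → F) : Fin n → F :=
  fun i => if h : (i : ℕ) < p then v ⟨i, h⟩ else 0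

lemma corner_apply {n p q : ℕ} (hp : p ≤ n) (hq : q ≤ n) (g : Matrix (Fin n) (Fin n) F)
    (v : Fin p → F) (a : Fin q) :
    corner hp hq g v a = (g *ᵥ ext0 v) (Fin.castLE hq a) := by
  simp only [corner, Matrix.mulVecLin_apply, Matrix.mulVec, dotProduct]
  apply Fintype.sum_of_injective (Fin.castLE hp) (Fin.castLE_injective hp)
  · intro i hi
    have : ¬ (i : ℕ) < p := fun h => hi ⟨⟨i, h⟩, rfl⟩
    simp [ext0, this]
  · intro b
    simp [ext0]

lemma corner_inj {n l : ℕ} {d : Fin l → ℕ} (hsum : ∑ i, d i = n) {l' : ℕ} {d' : Fin l' → ℕ}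
    (hsum' : ∑ i, d' i = n) (g : GL (Fin n) F)
    (H : ∀ j : ℕ, ∀ v : Fin n → F, (∀ i : Fin n, psum l' d' j ≤ (i : ℕ) → v i = 0) →
      (∀ i : Fin n, blk l d i < j → ((g : Matrix (Fin n) (Fin n) F) *ᵥ v) i = 0) → v = 0)
    (j : ℕ) : Function.Injective
      (corner (psum_le_n hsum' j) (psum_le_n hsum j) (g : Matrix (Fin n) (Fin n) F)) := by
  rw [← LinearMap.ker_eq_bot, LinearMap.ker_eq_bot']
  intro v hv
  have h0 : (ext0 v : Fin n → F) = 0 := by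
    apply H j
    · intro i hi
      simp [ext0, not_lt.mpr hi]
    · intro i hi
      rw [blk_lt_iff hsum] at hi
      have := congrFun hv ⟨i, hi⟩
      rw [corner_apply] at this
      exact this
  ext a
  have := congrFun h0 (Fin.castLE (psum_le_n hsum' j) a)
  simpa [ext0] using this

lemma big_cell {n l : ℕ} {d : Fin l → ℕ} (hsum : ∑ i, d i = n) (g : GL (Fin n) F)
    (H : ∀ j : ℕ, ∀ v : Fin n → F, (∀ i : Fin n, psum l d j ≤ (i : ℕ) → v i = 0) →
      (∀ i : Fin n, blk l d i < j → ((g : Matrix (Fin n) (Fin n) F) *ᵥ v) i = 0) → v = 0) :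
    ∃ u ∈ (UbarS n l d : Subgroup (GL (Fin n) F)), ∃ p ∈ (parab n l d : Subgroup (GL (Fin n) F)),
      g = u * p := by
  have hcol : ∀ c : Fin n, ∃ v : Fin n → F,
      (∀ i : Fin n, psum l d (blk l d c + 1) ≤ (i : ℕ) → v i = 0) ∧
      ∀ i : Fin n, blk l d i ≤ blk l d c → ((g : Matrix (Fin n) (Fin n) F) *ᵥ v) i
        = (1 : Matrix (Fin n) (Fin n) F) i c := by
    intro c
    have hs := LinearMap.surjective_of_injective (corner_inj hsum hsum g H (blk l d c + 1))
    obtain ⟨v, hv⟩ := hs (fun a => (1 : Matrix (Fin n) (Fin n) F)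
      (Fin.castLE (psum_le_n hsum _) a) c)
    refine ⟨ext0 v, ?_, ?_⟩
    · intro i hi
      simp [ext0, not_lt.mpr hi]
    · intro i hi
      have hi' := (blk_lt_iff hsum i _).mp (Nat.lt_succ_of_le hi)
      have := congrFun hv ⟨i, hi'⟩
      rw [corner_apply] at this
      exact this
  choose v hv1 hv2 using hcol
  let q : Matrix (Fin n) (Fin n) F := Matrix.of fun i c => v c i
  have hgq : ∀ i c, ((g : Matrix (Fin n) (Fin n) F) * q) i c
      = ((g : Matrix (Fin n) (Fin n) F) *ᵥ v c) i := by
    intro i c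
    rfl
  have hdet : ((g : Matrix (Fin n) (Fin n) F) * q).det = 1 := by
    rw [Matrix.det_of_isLowerTriangular]
    · apply Finset.prod_eq_one
      intro i _
      rw [hgq, hv2 i i le_rfl, Matrix.one_apply_eq]
    · intro i j hij
      have hij' : i < j := hij
      rw [hgq, hv2 j i (blk_le_of_le (le_of_lt hij')), Matrix.one_apply_ne (ne_of_lt hij')]
  obtain ⟨u, hu⟩ : IsUnit ((g : Matrix (Fin n) (Fin n) F) * q) := by
    rw [Matrix.isUnit_iff_isUnit_det, hdet]; exact isUnit_one
  have hq : ((g⁻¹ * u : GL (Fin n) F) : Matrix (Fin n) (Fin n) F) = q := by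
    rw [Units.val_mul, hu, ← mul_assoc, ← Units.val_mul, inv_mul_cancel, Units.val_one, one_mul]
  have hP : g⁻¹ * u ∈ (parab n l d : Subgroup (GL (Fin n) F)) := by
    rw [mem_parab]
    intro j y hy i hi
    rw [hq]
    simp only [Matrix.mulVec, dotProduct]
    apply Finset.sum_eq_zero
    intro c _
    by_cases hc : (c : ℕ) < psum l d j
    · have := (blk_lt_iff hsum c j).mpr hc
      have h2 : q i c = 0 := hv1 c i (le_trans (psum_mono l d this) hi)
      rw [h2, zero_mul]
    · rw [hy c (not_lt.mp hc), mul_zero]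
  refine ⟨u, ?_, _, inv_mem hP, by group⟩
  rw [mem_Ubar]
  intro i c hic
  rw [hu, hgq, hv2 c i hic]

lemma inter_triv {n l : ℕ} {d : Fin l → ℕ} (hsum : ∑ i, d i = n) (g : GL (Fin n) F)
    (hU : g ∈ (UbarS n l d : Subgroup (GL (Fin n) F)))
    (hP : g ∈ (parab n l d : Subgroup (GL (Fin n) F))) : g = 1 := by
  rw [mem_Ubar] at hU
  rw [mem_parab] at hP
  apply Units.ext
  ext i j
  rw [Units.val_one]
  by_cases hij : blk l d i ≤ blk l d j
  · exact hU i j hij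
  · have hne : i ≠ j := by rintro rfl; omega
    have h1 := hP (blk l d j + 1) (Pi.single j 1) ?_ i ?_
    · rw [Matrix.mulVec_single_one] at h1
      rw [Matrix.one_apply_ne hne]
      exact h1
    · intro a ha
      rw [Pi.single_apply, if_neg]
      rintro rfl
      have := (blk_spec hsum a).2
      omega
    · by_contra hc
      have := (blk_lt_iff hsum i _).mpr (not_le.mp hc)
      omega

lemma part_b {χ₀ : AddChar F ℂ} (hχ₀ : χ₀ ≠ 1) {n l : ℕ} {d : Fin l → ℕ}
    (hpos : ∀ i, 0 < d i) (hsum : ∑ i, d i = n)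
    (ψ : ↥(UbarS n l d : Subgroup (GL (Fin n) F)) →* ℂ)
    (hψ : IsMaxRankChar χ₀ n l d ψ) :
    Module.finrank ℂ ↥(whitSpace (parab n l d) (UbarS n l d) ψ) = 1 := by
  classical
  obtain ⟨T, hT0, hT1, hT2⟩ := exists_T χ₀ hpos hsum ψ hψ
  let f0 : GL (Fin n) F → ℂ := fun g =>
    if h : ∃ u : ↥(UbarS n l d : Subgroup (GL (Fin n) F)),
      ∃ p : ↥(parab n l d : Subgroup (GL (Fin n) F)), g = u * p then ψ h.choose else 0
  have hf0 : ∀ (u : ↥(UbarS n l d : Subgroup (GL (Fin n) F)))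
      (p : ↥(parab n l d : Subgroup (GL (Fin n) F))), f0 (u * p) = ψ u := by
    intro u p
    have h : ∃ u' : ↥(UbarS n l d : Subgroup (GL (Fin n) F)),
      ∃ p' : ↥(parab n l d : Subgroup (GL (Fin n) F)), (u : GL (Fin n) F) * p = u' * p' :=
      ⟨u, p, rfl⟩
    simp only [f0]
    rw [dif_pos h]
    congr 1
    obtain ⟨p', hp'⟩ := h.choose_spec
    have e : ((h.choose : GL (Fin n) F))⁻¹ * u = p' * (p : GL (Fin n) F)⁻¹ := by
      rw [inv_mul_eq_iff_eq_mul, ← mul_assoc, ← hp']; group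
    have h1 : ((h.choose : GL (Fin n) F))⁻¹ * u = 1 := by
      apply inter_triv hsum
      · exact mul_mem (inv_mem h.choose.2) u.2
      · rw [e]
        exact mul_mem p'.2 (inv_mem p.2)
    apply Subtype.ext
    rw [inv_mul_eq_one] at h1
    exact h1
  have hfm : f0 ∈ whitSpace (parab n l d) (UbarS n l d) ψ := by
    rw [mem_whit]
    intro u g p
    by_cases h : ∃ u' : ↥(UbarS n l d : Subgroup (GL (Fin n) F)),
      ∃ p' : ↥(parab n l d : Subgroup (GL (Fin n) F)), g = u' * p'
    · obtain ⟨u', p', rfl⟩ := h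
      have e : (u : GL (Fin n) F) * (u' * p') * p = ((u * u' : ↥(UbarS n l d)) : GL (Fin n) F)
          * ((p' * p : ↥(parab n l d)) : GL (Fin n) F) := by
        simp only [Subgroup.coe_mul, mul_assoc]
      rw [e, hf0, hf0, map_mul]
    · have h' : ¬ ∃ u' : ↥(UbarS n l d : Subgroup (GL (Fin n) F)),
        ∃ p' : ↥(parab n l d : Subgroup (GL (Fin n) F)), (u : GL (Fin n) F) * g * p = u' * p' := by
        rintro ⟨u', p', e⟩
        apply h
        refine ⟨u⁻¹ * u', p' * p⁻¹, ?_⟩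
        simp only [Subgroup.coe_mul, Subgroup.coe_inv]
        have : g = (u : GL (Fin n) F)⁻¹ * ((u : GL (Fin n) F) * g * p) * (p : GL (Fin n) F)⁻¹ := by
          group
        rw [this, e]
        group
      simp only [f0]
      rw [dif_neg h, dif_neg h', mul_zero]
  apply finrank_eq_one (⟨f0, hfm⟩ : ↥(whitSpace (parab n l d) (UbarS n l d) ψ))
  · intro h
    have h1 := congrFun (congrArg Subtype.val h) (((1 : ↥(UbarS n l d : Subgroup (GL (Fin n) F))) : GL (Fin n) F) *
      ((1 : ↥(parab n l d : Subgroup (GL (Fin n) F))) : GL (Fin n) F))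
    simp only [hf0, map_one] at h1
    exact one_ne_zero h1
  · rintro ⟨f, hf⟩
    refine ⟨f 1, ?_⟩
    apply Subtype.ext
    ext g
    show f 1 * f0 g = f g
    by_cases h : ∃ u' : ↥(UbarS n l d : Subgroup (GL (Fin n) F)),
      ∃ p' : ↥(parab n l d : Subgroup (GL (Fin n) F)), g = u' * p'
    · obtain ⟨u', p', rfl⟩ := h
      have := mem_whit.mp hf u' 1 p'
      rw [mul_one] at this
      rw [hf0, this, mul_comm]
    · have h0 : f0 g = 0 := by
        simp only [f0]
        rw [dif_neg h]
      rw [h0, mul_zero]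
      by_contra hne
      have H := transversal hχ₀ ψ T hT0 hT1 hT2 l d f hf g (Ne.symm hne)
      obtain ⟨u, hu, p, hp, e⟩ := big_cell hsum g H
      exact h ⟨⟨u, hu⟩, ⟨p, hp⟩, e⟩

lemma part_c {χ₀ : AddChar F ℂ} (hχ₀ : χ₀ ≠ 1) {n l : ℕ} {d : Fin l → ℕ}
    (hpos : ∀ i, 0 < d i) (hsum : ∑ i, d i = n)
    (ψ : ↥(UbarS n l d : Subgroup (GL (Fin n) F)) →* ℂ)
    (hψ : IsMaxRankChar χ₀ n l d ψ) (l' : ℕ) (d' : Fin l' → ℕ) (hsum' : ∑ i, d' i = n)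
    (hdom : ∀ j : ℕ, psum l d j ≤ psum l' d' j) (hne : ∃ j : ℕ, psum l d j ≠ psum l' d' j) :
    whitSpace (parab n l' d') (UbarS n l d) ψ = ⊥ := by
  obtain ⟨T, hT0, hT1, hT2⟩ := exists_T χ₀ hpos hsum ψ hψ
  rw [Submodule.eq_bot_iff]
  intro f hf
  ext g
  by_contra hg
  have H := transversal hχ₀ ψ T hT0 hT1 hT2 l' d' f hf g hg
  obtain ⟨j, hj⟩ := hne
  have h1 := LinearMap.finrank_le_finrank_of_injective (corner_inj hsum hsum' g H j)
  simp at h1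
  exact hj (le_antisymm (hdom j) h1)

/-- projection to a block -/
def bproj (l : ℕ) (d : Fin l → ℕ) (n k : ℕ) : (Fin n → F) →ₗ[F] ↥(blkSpace l d n k : Submodule F (Fin n → F)) where
  toFun v := ⟨fun i => if blk l d i = k then v i else 0, fun i hi => if_neg hi⟩
  map_add' v w := by
    apply Subtype.ext
    ext i
    simp only [Submodule.coe_add, Pi.add_apply]
    split_ifs <;> simp
  map_smul' c v := by
    apply Subtype.ext
    ext i
    simp

lemma bproj_of_mem {l : ℕ} {d : Fin l → ℕ} {n k : ℕ} (v : ↥(blkSpace l d n k : Submodule F (Fin n → F))) :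
    bproj l d n k v.1 = v := by
  apply Subtype.ext
  ext i
  simp only [bproj, LinearMap.coe_mk, AddHom.coe_mk]
  split_ifs with h
  · rfl
  · exact (v.2 i h).symm

lemma bproj_of_ne {l : ℕ} {d : Fin l → ℕ} {n k t : ℕ} (hkt : t ≠ k) {v : Fin n → F}
    (hv : v ∈ (blkSpace l d n t : Submodule F (Fin n → F))) :
    bproj l d n k v = 0 := by
  apply Subtype.ext
  ext i
  simp only [bproj, LinearMap.coe_mk, AddHom.coe_mk]
  split_ifs with h
  · exact hv i (by omega)
  · rfl

/-- extension of a linear map on block `k` by the identity -/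
def bext (l : ℕ) (d : Fin l → ℕ) (n k : ℕ)
    (e : ↥(blkSpace l d n k : Submodule F (Fin n → F)) →ₗ[F] ↥(blkSpace l d n k : Submodule F (Fin n → F))) :
    (Fin n → F) →ₗ[F] (Fin n → F) :=
  LinearMap.id + (Submodule.subtype _).comp ((e - LinearMap.id).comp (bproj l d n k))

lemma bext_apply (l : ℕ) (d : Fin l → ℕ) (n k : ℕ)
    (e : ↥(blkSpace l d n k : Submodule F (Fin n → F)) →ₗ[F] ↥(blkSpace l d n k : Submodule F (Fin n → F)))
    (v : Fin n → F) :
    bext l d n k e v = v + ((e (bproj l d n k v) : Fin n → F) - (bproj l d n k v : Fin n → F)) := by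
  simp [bext]

lemma bproj_bext (l : ℕ) (d : Fin l → ℕ) (n k : ℕ)
    (e : ↥(blkSpace l d n k : Submodule F (Fin n → F)) →ₗ[F] ↥(blkSpace l d n k : Submodule F (Fin n → F)))
    (v : Fin n → F) : bproj l d n k (bext l d n k e v) = e (bproj l d n k v) := by
  rw [bext_apply, map_add, map_sub, bproj_of_mem, bproj_of_mem]
  abel

/-- the same for equivalences -/
def bextE (l : ℕ) (d : Fin l → ℕ) (n k : ℕ)
    (e : ↥(blkSpace l d n k : Submodule F (Fin n → F)) ≃ₗ[F] ↥(blkSpace l d n k : Submodule F (Fin n → F))) :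
    (Fin n → F) ≃ₗ[F] (Fin n → F) :=
  { bext l d n k e.toLinearMap with
    invFun := bext l d n k e.symm.toLinearMap
    left_inv := by
      intro v
      show bext l d n k e.symm.toLinearMap (bext l d n k e.toLinearMap v) = v
      rw [bext_apply, bproj_bext, bext_apply]
      simp only [LinearEquiv.coe_coe, LinearEquiv.symm_apply_apply, LinearEquiv.apply_symm_apply]
      abel
    right_inv := by
      intro v
      show bext l d n k e.toLinearMap (bext l d n k e.symm.toLinearMap v) = v
      rw [bext_apply, bproj_bext, bext_apply]
      simp only [LinearEquiv.coe_coe, LinearEquiv.symm_apply_apply, LinearEquiv.apply_symm_apply]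
      abel }

lemma bextE_apply (l : ℕ) (d : Fin l → ℕ) (n k : ℕ)
    (e : ↥(blkSpace l d n k : Submodule F (Fin n → F)) ≃ₗ[F] ↥(blkSpace l d n k : Submodule F (Fin n → F)))
    (v : Fin n → F) : bextE l d n k e v
      = v + ((e (bproj l d n k v) : Fin n → F) - (bproj l d n k v : Fin n → F)) :=
  bext_apply l d n k e.toLinearMap v

lemma bextE_of_ne {l : ℕ} {d : Fin l → ℕ} {n k t : ℕ}
    (e : ↥(blkSpace l d n k : Submodule F (Fin n → F)) ≃ₗ[F] ↥(blkSpace l d n k : Submodule F (Fin n → F)))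
    (hkt : t ≠ k) {v : Fin n → F} (hv : v ∈ (blkSpace l d n t : Submodule F (Fin n → F))) :
    bextE l d n k e v = v := by
  rw [bextE_apply, bproj_of_ne hkt hv]
  simp

lemma bextE_of_mem {l : ℕ} {d : Fin l → ℕ} {n k : ℕ}
    (e : ↥(blkSpace l d n k : Submodule F (Fin n → F)) ≃ₗ[F] ↥(blkSpace l d n k : Submodule F (Fin n → F)))
    (v : ↥(blkSpace l d n k : Submodule F (Fin n → F))) :
    bextE l d n k e v.1 = (e v : Fin n → F) := by
  rw [bextE_apply, bproj_of_mem]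
  simp

lemma T_maps {n l : ℕ} {d : Fin l → ℕ} (T : Matrix (Fin n) (Fin n) F)
    (hT0 : ∀ i j, blk l d j ≠ blk l d i + 1 → T i j = 0) (t : ℕ) (v : Fin n → F)
    (hv : v ∈ (blkSpace l d n (t + 1) : Submodule F (Fin n → F))) :
    T *ᵥ v ∈ (blkSpace l d n t : Submodule F (Fin n → F)) := by
  intro i hi
  simp only [Matrix.mulVec, dotProduct]
  apply Finset.sum_eq_zero
  intro b _
  by_cases hb : blk l d b = t + 1
  · rw [hT0 i b (by omega), zero_mul]
  · rw [hv b hb, mul_zero]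

lemma T_kills {n l : ℕ} {d : Fin l → ℕ} (T : Matrix (Fin n) (Fin n) F)
    (hT0 : ∀ i j, blk l d j ≠ blk l d i + 1 → T i j = 0) (v : Fin n → F)
    (hv : v ∈ (blkSpace l d n 0 : Submodule F (Fin n → F))) :
    T *ᵥ v = 0 := by
  ext i
  simp only [Matrix.mulVec, dotProduct, Pi.zero_apply]
  apply Finset.sum_eq_zero
  intro b _
  by_cases hb : blk l d b = 0
  · rw [hT0 i b (by omega), zero_mul]
  · rw [hv b hb, mul_zero]

lemma intertwine {n l : ℕ} {d : Fin l → ℕ} (hsum : ∑ i, d i = n)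
    (T T' : Matrix (Fin n) (Fin n) F)
    (hT0 : ∀ i j, blk l d j ≠ blk l d i + 1 → T i j = 0)
    (hT2 : ∀ w : Fin n → F, T *ᵥ w = 0 → ∀ i, blk l d i ≠ 0 → w i = 0)
    (hT0' : ∀ i j, blk l d j ≠ blk l d i + 1 → T' i j = 0)
    (hT2' : ∀ w : Fin n → F, T' *ᵥ w = 0 → ∀ i, blk l d i ≠ 0 → w i = 0) :
    ∀ r k : ℕ, k + r = l → ∃ m : (Fin n → F) ≃ₗ[F] (Fin n → F),
      (∀ t, ∀ v ∈ (blkSpace l d n t : Submodule F (Fin n → F)), m v ∈ (blkSpace l d n t : Submodule F (Fin n → F))) ∧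
      (∀ t < k, ∀ v ∈ (blkSpace l d n t : Submodule F (Fin n → F)), m v = v) ∧
      (∀ t > k, ∀ v ∈ (blkSpace l d n t : Submodule F (Fin n → F)), T *ᵥ (m v) = m (T' *ᵥ v)) := by
  intro r
  induction r with
  | zero =>
    intro k hk
    refine ⟨LinearEquiv.refl F _, fun t v hv => hv, fun t _ v _ => rfl, ?_⟩
    intro t ht v hv
    have : v = 0 := by
      ext i
      exact hv i (by have := blk_lt hsum i; omega)
    subst this
    simp
  | succ r ih =>
    intro k hk
    obtain ⟨m, hm1, hm2, hm3⟩ := ih (k + 1) (by omega)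
    have inj : ∀ S : Matrix (Fin n) (Fin n) F,
        (∀ w : Fin n → F, S *ᵥ w = 0 → ∀ i, blk l d i ≠ 0 → w i = 0) →
        ∀ v ∈ (blkSpace l d n (k + 1) : Submodule F (Fin n → F)), S *ᵥ v = 0 → v = 0 := by
      intro S hS v hv h0
      ext i
      by_cases hi : blk l d i = k + 1
      · exact hS v h0 i (by omega)
      · exact hv i hi
    let A : ↥(blkSpace l d n (k + 1) : Submodule F (Fin n → F)) →ₗ[F]
        ↥(blkSpace l d n k : Submodule F (Fin n → F)) :=
      LinearMap.restrict (Matrix.mulVecLin T') (fun v hv => T_maps T' hT0' k v hv)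
    let B : ↥(blkSpace l d n (k + 1) : Submodule F (Fin n → F)) →ₗ[F]
        ↥(blkSpace l d n k : Submodule F (Fin n → F)) :=
      LinearMap.restrict ((Matrix.mulVecLin T).comp m.toLinearMap)
        (fun v hv => T_maps T hT0 k _ (hm1 _ v hv))
    have hA : Function.Injective A := by
      rw [← LinearMap.ker_eq_bot, LinearMap.ker_eq_bot']
      intro v hv
      apply Subtype.ext
      exact inj T' hT2' v.1 v.2 (congrArg Subtype.val hv)
    have hB : Function.Injective B := by
      rw [← LinearMap.ker_eq_bot, LinearMap.ker_eq_bot']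
      intro v hv
      apply Subtype.ext
      have := inj T hT2 (m v.1) (hm1 _ _ v.2) (congrArg Subtype.val hv)
      simpa using this
    obtain ⟨e, he⟩ := Submodule.exists_linearEquiv_restrict_eq
      ((LinearEquiv.ofInjective A hA).symm.trans (LinearEquiv.ofInjective B hB))
    have heAB : ∀ v, e (A v) = B v := by
      intro v
      have := he (LinearEquiv.ofInjective A hA v)
      rw [LinearEquiv.trans_apply, LinearEquiv.symm_apply_apply] at this
      simpa using this.symm
    refine ⟨m.trans (bextE l d n k e), ?_, ?_, ?_⟩
    · intro t v hv
      rw [LinearEquiv.trans_apply]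
      by_cases htk : t = k
      · subst htk
        have := bextE_of_mem e ⟨m v, hm1 _ v hv⟩
        rw [this]
        exact (e _).2
      · rw [bextE_of_ne e htk (hm1 _ v hv)]
        exact hm1 _ v hv
    · intro t ht v hv
      rw [LinearEquiv.trans_apply, hm2 t (by omega) v hv, bextE_of_ne e (by omega) hv]
    · intro t ht v hv
      rw [LinearEquiv.trans_apply, LinearEquiv.trans_apply, bextE_of_ne e (by omega) (hm1 _ v hv)]
      by_cases htk : t = k + 1
      · subst htk
        have hTv := T_maps T' hT0' k v hv
        rw [hm2 k (by omega) _ hTv]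
        have h1 := bextE_of_mem e (A ⟨v, hv⟩)
        rw [heAB] at h1
        exact h1.symm
      · obtain ⟨s, rfl⟩ : ∃ s, t = s + 1 := ⟨t - 1, by omega⟩
        have hTv := T_maps T' hT0' s v hv
        rw [bextE_of_ne (t := s) e (by omega) (hm1 _ _ hTv)]
        exact hm3 _ (by omega) v hv

lemma part_a {χ₀ : AddChar F ℂ} {n l : ℕ} {d : Fin l → ℕ}
    (hpos : ∀ i, 0 < d i) (hsum : ∑ i, d i = n)
    (ψ ψ' : ↥(UbarS n l d : Subgroup (GL (Fin n) F)) →* ℂ)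
    (hψ : IsMaxRankChar χ₀ n l d ψ) (hψ' : IsMaxRankChar χ₀ n l d ψ') :
    ∃ m : GL (Fin n) F, m ∈ LD n l d ∧
        (∀ u ∈ (UbarS n l d : Subgroup (GL (Fin n) F)),
            m * u * m⁻¹ ∈ (UbarS n l d : Subgroup (GL (Fin n) F))) ∧
        ∀ u u' : ↥(UbarS n l d : Subgroup (GL (Fin n) F)),
          (u' : GL (Fin n) F) = m * (u : GL (Fin n) F) * m⁻¹ →
            ψ' u = ψ u' := by
  obtain ⟨T, hT0, hT1, hT2⟩ := exists_T χ₀ hpos hsum ψ hψ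
  obtain ⟨T', hT0', hT1', hT2'⟩ := exists_T χ₀ hpos hsum ψ' hψ'
  obtain ⟨E, hE1, -, hE3⟩ := intertwine hsum T T' hT0 hT2 hT0' hT2' l 0 (by omega)
  let m : GL (Fin n) F :=
    { val := LinearMap.toMatrix' E.toLinearMap
      inv := LinearMap.toMatrix' E.symm.toLinearMap
      val_inv := by rw [← LinearMap.toMatrix'_comp]; simp
      inv_val := by rw [← LinearMap.toMatrix'_comp]; simp }
  have hmv : ∀ v, (m : Matrix (Fin n) (Fin n) F) *ᵥ v = E v := by
    intro v
    show LinearMap.toMatrix' E.toLinearMap *ᵥ v = E v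
    rw [LinearMap.toMatrix'_mulVec]; rfl
  have hm : m ∈ (LD n l d : Subgroup (GL (Fin n) F)) := by
    rw [mem_LD]
    intro t v hv
    rw [hmv]
    exact hE1 t v hv
  have hsing : ∀ j : Fin n, (Pi.single j 1 : Fin n → F) ∈
      (blkSpace l d n (blk l d j) : Submodule F (Fin n → F)) := by
    intro j i hi
    rw [Pi.single_apply, if_neg]
    rintro rfl
    exact hi rfl
  have hcomm : T * (m : Matrix (Fin n) (Fin n) F) = (m : Matrix (Fin n) (Fin n) F) * T' := by
    apply Matrix.ext_of_mulVec_single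
    intro j
    rw [← Matrix.mulVec_mulVec, ← Matrix.mulVec_mulVec, hmv, hmv]
    rcases Nat.eq_zero_or_pos (blk l d j) with h0 | h0
    · have hs := hsing j
      rw [h0] at hs
      rw [T_kills T hT0 _ (hE1 _ _ hs), T_kills T' hT0' _ hs, map_zero]
    · exact hE3 _ h0 _ (hsing j)
  have hdiag : ∀ g : GL (Fin n) F, g ∈ (LD n l d : Subgroup (GL (Fin n) F)) →
      ∀ i j, blk l d i ≠ blk l d j → (g : Matrix (Fin n) (Fin n) F) i j = 0 := by
    intro g hg i j hij
    have := mem_LD.mp hg (blk l d j) (Pi.single j 1) (hsing j) i hij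
    rw [Matrix.mulVec_single_one] at this
    exact this
  refine ⟨m, hm, ?_, ?_⟩
  · intro u hu
    rw [mem_Ubar] at hu ⊢
    intro i j hij
    have h1 := hdiag m hm
    have h2 := hdiag m⁻¹ (inv_mem hm)
    have e : ((m * u * m⁻¹ : GL (Fin n) F) : Matrix (Fin n) (Fin n) F) i j
        = ((m : Matrix (Fin n) (Fin n) F) * (1 : Matrix (Fin n) (Fin n) F) * ((m⁻¹ : GL (Fin n) F) : Matrix (Fin n) (Fin n) F)) i j := by
      rw [Units.val_mul, Units.val_mul, Matrix.mul_apply, Matrix.mul_apply]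
      apply Finset.sum_congr rfl
      intro b _
      by_cases hb : blk l d b = blk l d j
      · congr 1
        rw [Matrix.mul_apply, Matrix.mul_apply]
        apply Finset.sum_congr rfl
        intro a _
        by_cases ha : blk l d i = blk l d a
        · rw [hu a b (by omega)]
        · rw [h1 i a ha, zero_mul, zero_mul]
      · rw [h2 b j hb, mul_zero, mul_zero]
    rw [e, mul_one, ← Units.val_mul, mul_inv_cancel, Units.val_one]
  · intro u u' huu
    rw [hT1, hT1', huu]
    congr 1
    rw [Units.val_mul, Units.val_mul, ← mul_assoc, ← mul_assoc, hcomm,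
      Matrix.trace_mul_comm _ ((m⁻¹ : GL (Fin n) F) : Matrix (Fin n) (Fin n) F),
      ← mul_assoc, ← mul_assoc, ← Units.val_mul, inv_mul_cancel, Units.val_one, one_mul]

end helpers

/-- Proposition 10.5.1: (a) the maximal rank characters of
`Ū_D` form a single orbit under conjugation by the Levi subgroup `L_D`;
(b) each maximal rank character `ψ` occurs with multiplicity one in
`Ind_{P_D}^{GL_n} 1`; (c) for a partition `D'` strictly dominating `D`, the
`ψ`-Whittaker space of `Ind_{P_{D'}}^{GL_n} 1` vanishes. -/
theorem whittaker_multiplicity_one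
    (χ₀ : AddChar F ℂ) (hχ₀ : χ₀ ≠ 1)
    {n : ℕ} (l : ℕ) (hl : 0 < l) (d : Fin l → ℕ)
    (hmono : ∀ i j : Fin l, i ≤ j → d j ≤ d i)
    (hpos : ∀ i, 0 < d i) (hsum : ∑ i, d i = n) :
    -- (a)
    (∀ ψ ψ' : ↥(UbarS n l d : Subgroup (GL (Fin n) F)) →* ℂ,
      IsMaxRankChar χ₀ n l d ψ → IsMaxRankChar χ₀ n l d ψ' →
      ∃ m : GL (Fin n) F, m ∈ LD n l d ∧
        (∀ u ∈ (UbarS n l d : Subgroup (GL (Fin n) F)),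
            m * u * m⁻¹ ∈ (UbarS n l d : Subgroup (GL (Fin n) F))) ∧
        ∀ u u' : ↥(UbarS n l d : Subgroup (GL (Fin n) F)),
          (u' : GL (Fin n) F) = m * (u : GL (Fin n) F) * m⁻¹ →
            ψ' u = ψ u') ∧
    -- (b)
    (∀ ψ : ↥(UbarS n l d : Subgroup (GL (Fin n) F)) →* ℂ,
      IsMaxRankChar χ₀ n l d ψ →
      Module.finrank ℂ ↥(whitSpace (parab n l d) (UbarS n l d) ψ) = 1) ∧
    -- (c)
    (∀ ψ : ↥(UbarS n l d : Subgroup (GL (Fin n) F)) →* ℂ,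
      IsMaxRankChar χ₀ n l d ψ →
      ∀ (l' : ℕ) (d' : Fin l' → ℕ),
        (∀ i j : Fin l', i ≤ j → d' j ≤ d' i) → (∀ i, 0 < d' i) →
        (∑ i, d' i = n) →
        (∀ j : ℕ, psum l d j ≤ psum l' d' j) →
        (∃ j : ℕ, psum l d j ≠ psum l' d' j) →
        whitSpace (parab n l' d') (UbarS n l d) ψ = ⊥) := by
  exact ⟨fun ψ ψ' h h' => part_a hpos hsum ψ ψ' h h',
    fun ψ h => part_b hχ₀ hpos hsum ψ h,
    fun ψ h l' d' _ _ hsum' hdom hne => part_c hχ₀ hpos hsum ψ h l' d' hsum' hdom hne⟩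

end Stmt16
end
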